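/- Let G(Q,Λ) be torsion free. Then there exists a homeomorphism from spec R_n^{Q,Λ} onto Pspec A_1 whose restriction to prim R_n^{Q,Λ} is a homeomorphism onto Pprim A_1. -/

import Mathlib

/-!
The quantized Weyl algebra and the Poisson Weyl algebra are treated as two instances of one
structure, `PW.QW`: an algebra `W` with a bracket satisfying the Leibniz rule such that
`ab - ba = τ {a, b}`, generated by `y_i`, `x_i` with fixed weights of commutation. For the
quantized algebra `τ = 1` and the bracket is the commutator (`PW.weylQW`), for the Poisson algebra
`τ = 0` (`PW.poissonQW`). After rescaling the generators and the elements `z_j`, the weights live in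
one free abelian group (the exponents with respect to the basis `η`), and both algebras have the
same alternating form `PW.Form` of weights. They enter the algebra through a character `ω` and a
function `κ`; in both cases `κ` is injective, by freeness of the `η_k` in one case and by
`ℚ`-independence of the `μ_k` in the other.

Both algebras have a linear basis of normalized monomials `D.e m`, indexed by the same set
`PW.Mon n` (`QW.ev_surj`; `PW.weyl_inj` and `PW.poisson_inj` embed the algebra in a quantum torus,
respectively a Laurent polynomial ring). An ideal therefore has a subspace `K` of coordinates in
`Mon n →₀ ℂ`. The heart of the proof is that `K` comes from a prime ideal exactly when it satisfies
a list of conditions `PW.Good F T K` that mentions only the form `F` (`QW.isPr_iff_good`). The set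
`T` consists of the letters `y_i`, `x_i`, `z_j` lying in the ideal. Modulo these, every remaining
letter is either normal, and then can be cancelled by primeness, or belongs to a pair `x_i`, `y_i`
with `z_i`, `z_{i+1}` both nonzero; such a pair behaves like a Weyl algebra and can be stripped off
monomials without changing membership in the ideal. Injectivity of `κ` separates the monomials of an
element by their weights (`PW.key`), and on monomials of fixed weights the products in the two
algebras agree up to nonzero scalars. So both spectra are in bijection with `PW.Coord F`, and
both Zariski topologies are the one generated by the sets `{K | f ∉ K}` (`PW.coordQ_top`,
`PW.coordP_top`).

Primitivity is matched through the condition `PW.KeyRigid F T K`: two monomials in normal letters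
having the same weights are proportional modulo the ideal. On the Poisson side, two such monomials
have a difference `e m - c • e m'` in the given maximal ideal, which generates a Poisson ideal modulo
the core and so lies in the core; conversely the Nullstellensatz (Jacobson property) gives a maximal
ideal avoiding the normal letters, and under the condition every nonzero Poisson ideal contains a
monomial in these (`QW.poissonPrimitive_iff`). On the quantum side a normal element acts on a
faithful simple module by zero or bijectively, and an operator on a space of countable dimension over
`ℂ` cannot have empty spectrum (`PW.amitsur`); the same argument produces a maximal left ideal
avoiding the product of the normal letters (`QW.primitive_iff`).
-/
/-- A Poisson bracket on a commutative ring: a biadditive Lie bracket satisfying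
the Leibniz rule. -/
structure PoissonBr (R : Type) [CommRing R] where
  br : R → R → R
  add_left : ∀ a b c, br (a + b) c = br a c + br b c
  skew : ∀ a b, br a b = - br b a
  jacobi : ∀ a b c, br a (br b c) = br (br a b) c + br b (br a c)
  leibniz : ∀ a b c, br (a * b) c = a * br b c + br a c * b

/-- `I` is a Poisson ideal for the bracket `br`: an ideal with `{I, R} ⊆ I`. -/
def IsPoissonIdeal {R : Type} [CommRing R] (br : R → R → R) (I : Ideal R) : Prop :=
  ∀ a ∈ I, ∀ b, br a b ∈ I

/-- `P` is a Poisson prime ideal: a proper Poisson ideal such that `IJ ⊆ P` implies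
`I ⊆ P` or `J ⊆ P` for all Poisson ideals `I`, `J`. -/
def IsPoissonPrime {R : Type} [CommRing R] (br : R → R → R) (P : Ideal R) : Prop :=
  IsPoissonIdeal br P ∧ P ≠ ⊤ ∧
    ∀ I J : Ideal R, IsPoissonIdeal br I → IsPoissonIdeal br J →
      (∀ a ∈ I, ∀ b ∈ J, a * b ∈ P) → I ≤ P ∨ J ≤ P

/-- A prime two-sided ideal of a (not necessarily commutative) ring: a proper
two-sided ideal `P` such that `IJ ⊆ P` implies `I ⊆ P` or `J ⊆ P`. -/
def IsPrimeTS {R : Type} [Ring R] (P : TwoSidedIdeal R) : Prop :=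
  P ≠ ⊤ ∧ ∀ I J : TwoSidedIdeal R, (∀ a ∈ I, ∀ b ∈ J, a * b ∈ P) → I ≤ P ∨ J ≤ P

/-- A two-sided ideal is (left) primitive if it is the annihilator of a simple
left module. -/
def IsPrimitiveTS {R : Type} [Ring R] (P : TwoSidedIdeal R) : Prop :=
  ∃ (M : Type) (_ : AddCommGroup M) (_ : Module R M),
    IsSimpleModule R M ∧ ∀ x : R, (x ∈ P ↔ ∀ m : M, x • m = 0)

/-- The spectrum of a ring: prime two-sided ideals. -/
abbrev SpecTS (R : Type) [Ring R] := {P : TwoSidedIdeal R // IsPrimeTS P}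

/-- The Zariski topology on the spectrum: closed sets are `{P | I ≤ P}`. -/
def specTop (R : Type) [Ring R] : TopologicalSpace (SpecTS R) :=
  TopologicalSpace.generateFrom
    {U | ∃ I : TwoSidedIdeal R, U = {P : SpecTS R | ¬ I ≤ P.1}}

/-- The Poisson spectrum of a Poisson algebra: Poisson prime ideals. -/
abbrev PSpecP (R : Type) [CommRing R] (br : R → R → R) := {P : Ideal R // IsPoissonPrime br P}

/-- The Zariski topology on the Poisson spectrum: closed sets are `{P | I ≤ P}`. -/
def pspecTop (R : Type) [CommRing R] (br : R → R → R) : TopologicalSpace (PSpecP R br) :=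
  TopologicalSpace.generateFrom
    {U | ∃ I : Ideal R, U = {P : PSpecP R br | ¬ I ≤ P.1}}

/-- `P` is the Poisson core of `M`: the largest Poisson ideal contained in `M`. -/
def IsPoissonCore {R : Type} [CommRing R] (br : R → R → R) (P M : Ideal R) : Prop :=
  IsPoissonIdeal br P ∧ P ≤ M ∧ ∀ J : Ideal R, IsPoissonIdeal br J → J ≤ M → J ≤ P

/-- `P` is Poisson primitive: the Poisson core of some maximal ideal. -/
def PoissonPrimitive {R : Type} [CommRing R] (br : R → R → R) (P : Ideal R) : Prop :=
  ∃ M : Ideal R, M.IsMaximal ∧ IsPoissonCore br P M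

/-- `P` is rational: the Poisson center of the field of fractions of `R/P`
(with the induced Poisson bracket) is `ℂ`. -/
def PoissonRational (R : Type) [CommRing R] [Algebra ℂ R] (br : R → R → R)
    (P : Ideal R) : Prop :=
  ∃ (L : Type) (_ : Field L) (_ : Algebra (R ⧸ P) L) (_ : IsFractionRing (R ⧸ P) L)
    (B' : PoissonBr L),
    (∀ a b : R,
      B'.br (algebraMap (R ⧸ P) L (Ideal.Quotient.mk P a))
          (algebraMap (R ⧸ P) L (Ideal.Quotient.mk P b))
        = algebraMap (R ⧸ P) L (Ideal.Quotient.mk P (br a b))) ∧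
    {f : L | ∀ g : L, B'.br f g = 0} =
      Set.range ((algebraMap (R ⧸ P) L).comp
        ((Ideal.Quotient.mk P).comp (algebraMap ℂ R)))

/-- `P` is locally closed: the intersection of all Poisson prime ideals properly
containing `P` is strictly larger than `P`. -/
def PoissonLocallyClosed {R : Type} [CommRing R] (br : R → R → R) (P : Ideal R) : Prop :=
  P < sInf {Q : Ideal R | IsPoissonPrime br Q ∧ P < Q}

/-- The defining relations of the multi-parameter quantized Weyl algebra `R_n^{Q,Λ}`,
on generators `Sum.inl i = y_i`, `Sum.inr i = x_i`. -/
inductive RRel (n : ℕ) (q : Fin n → ℂ) (lam : Fin n → Fin n → ℂ) :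
    FreeAlgebra ℂ (Fin n ⊕ Fin n) → FreeAlgebra ℂ (Fin n ⊕ Fin n) → Prop
  | yy (i j : Fin n) (h : i < j) : RRel n q lam
      (FreeAlgebra.ι ℂ (Sum.inl j) * FreeAlgebra.ι ℂ (Sum.inl i))
      (lam j i • (FreeAlgebra.ι ℂ (Sum.inl i) * FreeAlgebra.ι ℂ (Sum.inl j)))
  | yx (i j : Fin n) (h : i < j) : RRel n q lam
      (FreeAlgebra.ι ℂ (Sum.inl j) * FreeAlgebra.ι ℂ (Sum.inr i))
      (lam i j • (FreeAlgebra.ι ℂ (Sum.inr i) * FreeAlgebra.ι ℂ (Sum.inl j)))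
  | xy (i j : Fin n) (h : i < j) : RRel n q lam
      (FreeAlgebra.ι ℂ (Sum.inr j) * FreeAlgebra.ι ℂ (Sum.inl i))
      ((q i * lam i j) • (FreeAlgebra.ι ℂ (Sum.inl i) * FreeAlgebra.ι ℂ (Sum.inr j)))
  | xx (i j : Fin n) (h : i < j) : RRel n q lam
      (FreeAlgebra.ι ℂ (Sum.inr j) * FreeAlgebra.ι ℂ (Sum.inr i))
      (((q i)⁻¹ * (lam i j)⁻¹) • (FreeAlgebra.ι ℂ (Sum.inr i) * FreeAlgebra.ι ℂ (Sum.inr j)))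
  | weyl (i : Fin n) : RRel n q lam
      (FreeAlgebra.ι ℂ (Sum.inr i) * FreeAlgebra.ι ℂ (Sum.inl i)
        - q i • (FreeAlgebra.ι ℂ (Sum.inl i) * FreeAlgebra.ι ℂ (Sum.inr i)))
      (1 + ∑ k ∈ Finset.Iio i,
        (q k - 1) • (FreeAlgebra.ι ℂ (Sum.inl k) * FreeAlgebra.ι ℂ (Sum.inr k)))

/-- The generator `y_i` of the multi-parameter Poisson Weyl algebra
`A₁ = ℂ[y_1, x_1, …, y_n, x_n]`. -/
noncomputable def yP (n : ℕ) (i : Fin n) : MvPolynomial (Fin n ⊕ Fin n) ℂ :=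
  MvPolynomial.X (Sum.inl i)

/-- The generator `x_i` of the multi-parameter Poisson Weyl algebra. -/
noncomputable def xP (n : ℕ) (i : Fin n) : MvPolynomial (Fin n ⊕ Fin n) ℂ :=
  MvPolynomial.X (Sum.inr i)

/-- The element `z_m = 1 + ∑_{k=1}^m y_k x_k` of the Poisson Weyl algebra
(1-indexed: the sum is over generators with (0-indexed) index `< m`). -/
noncomputable def zP (n : ℕ) (m : ℕ) : MvPolynomial (Fin n ⊕ Fin n) ℂ :=
  1 + ∑ k ∈ Finset.univ.filter (fun k : Fin n => (k : ℕ) < m), yP n k * xP n k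


namespace PW
open scoped Classical
noncomputable section

/-! ### Forms, and the common axioms of the two algebras -/

/-- The weight lattice `ℤⁿ × ℤⁿ`: the first factor records powers of the `y_i`, the second powers
of `z_1, …, z_n`. -/
abbrev Gam (n : ℕ) := (Fin n → ℤ) × (Fin n → ℤ)

/-- The weight of `z_j`, where `z_0 = 1` has weight `0`. -/
def zd {n : ℕ} (j : Fin (n + 1)) : Gam n := (0, fun k => if k.succ = j then 1 else 0)

/-- The weight of `y_i`. -/
def yd {n : ℕ} (i : Fin n) : Gam n := (Pi.single i 1, 0)

/-- The exponents of the commutation relations: an alternating form on the weight lattice whose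
values on the weights of the `z_j` and `y_i` are the prescribed ones. -/
structure Form (n : ℕ) (E : Type) [AddCommGroup E] where
  B : Gam n →+ Gam n →+ E
  s : Fin n → E
  s_ne : ∀ i (k : ℤ), k • s i = 0 → k = 0
  alt : ∀ u, B u u = 0
  Bzz : ∀ j k, B (zd j) (zd k) = 0
  Bzy : ∀ j i, B (zd j) (yd i) = if i.castSucc < j then s i else 0

/-- An algebra with a bracket satisfying the relations common (after rescaling the generators) to
the quantized Weyl algebra, where `τ = 1` and `br` is the commutator, and to the Poisson Weyl
algebra, where `τ = 0` and `br` is the Poisson bracket. -/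
structure QW {n : ℕ} {E : Type} [AddCommGroup E] (F : Form n E) (W : Type) [Ring W]
    [Algebra ℂ W] where
  ω : E → ℂ
  κ : E → ℂ
  τ : ℂ
  br : W →ₗ[ℂ] W →ₗ[ℂ] W
  y : Fin n → W
  x : Fin n → W
  z : Fin (n + 1) → W
  ω_zero : ω 0 = 1
  ω_add : ∀ a b, ω (a + b) = ω a * ω b
  ω_κ : ∀ a, ω (-(a + a)) = 1 - τ * κ a
  κ_inj : Function.Injective κ
  κ_add : ∀ a b, κ (a + b) = κ a + ω (-(a + a)) * κ b
  comm : ∀ a b, a * b - b * a = τ • br a b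
  skew : ∀ a b, br a b = - br b a
  leib : ∀ a b c, br a (b * c) = br a b * c + b * br a c
  z0 : z 0 = 1
  yx : ∀ i, y i * x i = ω (-F.s i) • z i.succ + z i.castSucc
  brxy : ∀ i, br (x i) (y i) = (-(κ (-F.s i) * ω (-F.s i))) • z i.succ
  bryy : ∀ i j, i < j → br (y j) (y i) = κ (F.B (yd j) (yd i)) • (y j * y i)
  bryx : ∀ i j, i < j →
    br (y j) (x i) = κ (F.B (yd j) (zd i.castSucc - yd i)) • (y j * x i)
  brxy' : ∀ i j, i < j →
    br (x j) (y i) = κ (F.B (zd j.castSucc - yd j) (yd i)) • (x j * y i)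
  brxx : ∀ i j, i < j →
    br (x j) (x i) = κ (F.B (zd j.castSucc - yd j) (zd i.castSucc - yd i)) • (x j * x i)
  gen : ∀ S : Subalgebra ℂ W, (∀ i, y i ∈ S) → (∀ i, x i ∈ S) → S = ⊤

variable {n : ℕ} {E : Type} [AddCommGroup E] {F : Form n E} {W : Type} [Ring W] [Algebra ℂ W]

namespace Form

lemma swap (F : Form n E) (u v : Gam n) : F.B u v = - F.B v u := by
  have h := F.alt (u + v)
  simp only [map_add, AddMonoidHom.add_apply, F.alt, zero_add, add_zero] at h
  rw [add_comm] at h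
  exact eq_neg_of_add_eq_zero_left h

lemma Byz (F : Form n E) (j i) : F.B (yd i) (zd j) = if i.castSucc < j then - F.s i else 0 := by
  rw [F.swap, F.Bzy]; split_ifs <;> simp

end Form

lemma zd_zero : (zd 0 : Gam n) = 0 := by
  ext k <;> simp [zd]

namespace QW

variable (D : QW F W)

lemma κ_zero : D.κ 0 = 0 := by
  have h := D.κ_add 0 0
  simp [D.ω_zero] at h
  exact h

lemma ω_neg_mul (a : E) : D.ω (-a) * D.ω a = 1 := by
  rw [← D.ω_add]; simp [D.ω_zero]

lemma ω_mul_neg (a : E) : D.ω a * D.ω (-a) = 1 := by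
  rw [← D.ω_add]; simp [D.ω_zero]

lemma ω_ne (a : E) : D.ω a ≠ 0 := left_ne_zero_of_mul_eq_one (D.ω_mul_neg a)

lemma ω_neg (a : E) : D.ω (-a) = (D.ω a)⁻¹ := eq_inv_of_mul_eq_one_left (D.ω_neg_mul a)

lemma κ_neg (a : E) : D.κ (-a) = - (D.ω (a + a) * D.κ a) := by
  have h := D.κ_add (-a) a
  rw [neg_add_cancel, D.κ_zero, show -(-a + -a) = a + a by abel] at h
  exact eq_neg_of_add_eq_zero_left h.symm

lemma κ_ne {a : E} (h : a ≠ 0) : D.κ a ≠ 0 := fun h' =>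
  h (D.κ_inj (h'.trans D.κ_zero.symm))

lemma leib' (a b c : W) : D.br (a * b) c = a * D.br b c + D.br a c * b := by
  rw [D.skew, D.leib, D.skew c a, D.skew c b]
  noncomm_ring

lemma br_one (a : W) : D.br a 1 = 0 := by
  have h := D.leib a 1 1
  simp at h
  exact h

lemma κ_s_ne (i : Fin n) (k : ℤ) (hk : k ≠ 0) : D.κ (k • F.s i) ≠ 0 :=
  D.κ_ne fun h => hk (F.s_ne i k h)

/-- `g` and `h` commute up to the weight `e`, both for the product and for the bracket. -/
def qc (g h : W) (e : E) : Prop := D.br g h = D.κ e • (g * h)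

variable {D}

lemma qc.swap {g h : W} {e : E} (H : D.qc g h e) : h * g = D.ω (-(e + e)) • (g * h) := by
  have h1 := D.comm g h
  rw [H, smul_smul] at h1
  rw [D.ω_κ, sub_smul, one_smul, ← h1]
  abel

lemma qc.swap' {g h : W} {e : E} (H : D.qc g h e) : g * h = D.ω (e + e) • (h * g) := by
  rw [H.swap, smul_smul, D.ω_mul_neg, one_smul]

lemma qc.symm {g h : W} {e : E} (H : D.qc g h e) : D.qc h g (-e) := by
  unfold qc at *
  have h1 := QW.qc.swap' (D := D) H
  rw [D.skew, H, h1, D.κ_neg, smul_smul, neg_smul, mul_comm]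

lemma qc.mul_right {g h h' : W} {e e' : E} (H : D.qc g h e) (H' : D.qc g h' e') :
    D.qc g (h * h') (e + e') := by
  have h1 := H.swap
  unfold qc at *
  rw [D.leib, H, H', D.κ_add, mul_smul_comm, ← mul_assoc h, h1]
  simp only [smul_mul_assoc, smul_smul, add_smul, mul_assoc]
  rw [mul_comm (D.κ e')]

lemma qc.mul_left {g g' h : W} {e e' : E} (H : D.qc g h e) (H' : D.qc g' h e') :
    D.qc (g * g') h (e + e') := by
  have := (H.symm.mul_right H'.symm).symm
  rwa [show -(-e + -e') = e + e' by abel] at this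

lemma qc_one (g : W) : D.qc g 1 0 := by
  simp [qc, D.br_one, D.κ_zero]

lemma one_qc (g : W) : D.qc 1 g 0 := by
  simpa using (qc_one (D := D) g).symm

lemma qc.pow_right {g h : W} {e : E} (H : D.qc g h e) (k : ℕ) : D.qc g (h ^ k) (k • e) := by
  induction k with
  | zero => simpa using qc_one g
  | succ k ih => rw [pow_succ, succ_nsmul]; exact ih.mul_right H

lemma qc.pow_left {g h : W} {e : E} (H : D.qc g h e) (k : ℕ) : D.qc (g ^ k) h (k • e) := by
  simpa using (H.symm.pow_right k).symm

lemma qc.smul_right {g h : W} {e : E} (H : D.qc g h e) (c : ℂ) : D.qc g (c • h) e := by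
  unfold qc at *
  rw [map_smul, H, mul_smul_comm, smul_comm]

lemma qc.add_right {g h h' : W} {e : E} (H : D.qc g h e) (H' : D.qc g h' e) :
    D.qc g (h + h') e := by
  unfold qc at *
  rw [map_add, H, H', mul_add, smul_add]

lemma qc.smul_left {g h : W} {e : E} (H : D.qc g h e) (c : ℂ) : D.qc (c • g) h e := by
  simpa using (H.symm.smul_right c).symm

lemma qc.add_left {g g' h : W} {e : E} (H : D.qc g h e) (H' : D.qc g' h e) :
    D.qc (g + g') h e := by
  simpa using (H.symm.add_right H'.symm).symm

lemma qc_zero (g : W) (e : E) : D.qc g 0 e := by simp [qc]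

lemma zero_qc (g : W) (e : E) : D.qc 0 g e := by simp [qc]

lemma qc_self (g : W) : D.qc g g 0 := by
  have h := D.skew g g
  have h2 : (2 : ℂ) • D.br g g = 0 := by rw [two_smul]; nth_rewrite 1 [h]; simp
  simpa [qc, D.κ_zero] using h2

lemma qc.sum_right {ι : Type} {g : W} {e : E} (s : Finset ι) (f : ι → W)
    (H : ∀ i ∈ s, D.qc g (f i) e) : D.qc g (∑ i ∈ s, f i) e := by
  induction s using Finset.induction_on with
  | empty => simpa using qc_zero g e
  | insert a s ha ih =>
    rw [Finset.sum_insert ha]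
    exact (H a (by simp)).add_right (ih fun i hi => H i (by simp [hi]))

lemma qc.congr {g h : W} {e e' : E} (H : D.qc g h e) (h' : e = e') : D.qc g h e' := h' ▸ H

variable (D)

lemma xy (i : Fin n) : D.x i * D.y i = D.ω (F.s i) • D.z i.succ + D.z i.castSucc := by
  have h := D.comm (D.x i) (D.y i)
  have h2 := D.ω_κ (-F.s i)
  have h3 : D.ω (F.s i) = D.ω (-F.s i) - D.τ * (D.κ (-F.s i) * D.ω (-F.s i)) := by
    have : D.ω (F.s i) = D.ω (-(-F.s i + -F.s i)) * D.ω (-F.s i) := by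
      rw [← D.ω_add]; congr 1; abel
    rw [this, h2]; ring
  rw [sub_eq_iff_eq_add] at h
  rw [h, D.brxy, D.yx, h3]
  module

lemma z_succ (i : Fin n) :
    D.z i.succ = D.ω (F.s i) • (D.y i * D.x i + (-1 : ℂ) • D.z i.castSucc) := by
  rw [D.yx]
  have := D.ω_mul_neg (F.s i)
  simp only [smul_add, smul_smul, this]
  module

lemma qc_yy (i j : Fin n) : D.qc (D.y i) (D.y j) (F.B (yd i) (yd j)) := by
  rcases lt_trichotomy i j with h | rfl | h
  · have := (show D.qc (D.y j) (D.y i) _ from D.bryy i j h).symm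
    rwa [← F.swap] at this
  · rw [F.alt]; exact qc_self _
  · exact D.bryy j i h

lemma qc_xx (i j : Fin n) :
    D.qc (D.x i) (D.x j) (F.B (zd i.castSucc - yd i) (zd j.castSucc - yd j)) := by
  rcases lt_trichotomy i j with h | rfl | h
  · have := (show D.qc (D.x j) (D.x i) _ from D.brxx i j h).symm
    rwa [← F.swap] at this
  · rw [F.alt]; exact qc_self _
  · exact D.brxx j i h

lemma qc_yx (i j : Fin n) (h : i ≠ j) :
    D.qc (D.y i) (D.x j) (F.B (yd i) (zd j.castSucc - yd j)) := by
  rcases lt_or_gt_of_ne h with h | h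
  · have := (show D.qc (D.x j) (D.y i) _ from D.brxy' i j h).symm
    rwa [← F.swap] at this
  · exact D.bryx j i h

lemma qc_xy (i j : Fin n) (h : i ≠ j) :
    D.qc (D.x i) (D.y j) (F.B (zd i.castSucc - yd i) (yd j)) := by
  have := (D.qc_yx j i h.symm).symm
  rwa [← F.swap] at this

lemma qc_zy (j : Fin (n + 1)) (i : Fin n) : D.qc (D.z j) (D.y i) (F.B (zd j) (yd i)) := by
  induction j using Fin.induction with
  | zero => rw [D.z0, zd_zero]; simpa using one_qc _
  | succ j ih =>
    rcases eq_or_ne j i with rfl | hne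
    · have h0 : F.B (zd j.castSucc) (yd j) = 0 := by rw [F.Bzy]; simp
      have h1 : F.B (zd j.succ) (yd j) = F.s j := by
        rw [F.Bzy]; simp
      rw [h0] at ih
      rw [h1]
      have h2 : D.br (D.y j) (D.z j.succ) = D.κ (-F.s j) • (D.y j * D.z j.succ) := by
        have e1 : D.br (D.y j) (D.x j) = (D.κ (-F.s j) * D.ω (-F.s j)) • D.z j.succ := by
          rw [D.skew, D.brxy]; module
        have e2 : D.br (D.y j) (D.y j) = 0 := by
          simpa [qc, D.κ_zero] using qc_self (D := D) (D.y j)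
        have e3 : D.br (D.y j) (D.z j.castSucc) = 0 := by
          simpa [qc, D.κ_zero] using ih.symm
        nth_rewrite 1 [D.z_succ]
        rw [map_smul, map_add, map_smul, D.leib, e1, e2, e3]
        simp only [zero_mul, zero_add, smul_zero, add_zero, mul_smul_comm, smul_smul]
        congr 1
        linear_combination D.κ (-F.s j) * D.ω_mul_neg (F.s j)
      simpa using QW.qc.symm (D := D) h2
    · rw [D.z_succ]
      have e1 : F.B (zd j.succ) (yd i) = F.B (zd j.castSucc) (yd i) := by
        rw [F.Bzy, F.Bzy]
        have : i.castSucc < j.succ ↔ i.castSucc < j.castSucc := by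
          simp only [Fin.lt_def, Fin.val_castSucc, Fin.val_succ]
          have : (j : ℕ) ≠ i := fun h => hne (Fin.ext h)
          omega
        simp only [this]
      refine qc.smul_left (qc.add_left ?_ ?_) _
      · refine ((D.qc_yy j i).mul_left (D.qc_xy j i hne)).congr ?_
        rw [e1]; simp
      · rw [e1]; exact ih.smul_left _

lemma qc_zx (j : Fin (n + 1)) (i : Fin n) :
    D.qc (D.z j) (D.x i) (F.B (zd j) (zd i.castSucc - yd i)) := by
  induction j using Fin.induction with
  | zero => rw [D.z0, zd_zero]; simpa using one_qc _
  | succ j ih =>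
    rw [map_sub, F.Bzz, zero_sub] at ih ⊢
    rcases eq_or_ne j i with rfl | hne
    · have h0 : F.B (zd j.castSucc) (yd j) = 0 := by rw [F.Bzy]; simp
      have h1 : F.B (zd j.succ) (yd j) = F.s j := by
        rw [F.Bzy]; simp
      rw [h0, neg_zero] at ih
      rw [h1]
      have e1 : D.br (D.y j) (D.x j) = (D.κ (-F.s j) * D.ω (-F.s j)) • D.z j.succ := by
        rw [D.skew, D.brxy]; module
      have e2 : D.br (D.x j) (D.x j) = 0 := by
        simpa [qc, D.κ_zero] using qc_self (D := D) (D.x j)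
      have e3 : D.br (D.z j.castSucc) (D.x j) = 0 := by
        simpa [qc, D.κ_zero] using ih
      unfold qc
      nth_rewrite 1 [D.z_succ]
      rw [map_smul, map_add, map_smul]
      simp only [LinearMap.smul_apply, LinearMap.add_apply]
      rw [D.leib', e1, e2, e3]
      simp only [mul_zero, zero_add, smul_zero, add_zero, smul_mul_assoc, smul_smul]
      congr 1
      linear_combination D.κ (-F.s j) * D.ω_mul_neg (F.s j)
    · rw [D.z_succ]
      have e1 : F.B (zd j.succ) (yd i) = F.B (zd j.castSucc) (yd i) := by
        rw [F.Bzy, F.Bzy]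
        have : i.castSucc < j.succ ↔ i.castSucc < j.castSucc := by
          simp only [Fin.lt_def, Fin.val_castSucc, Fin.val_succ]
          have : (j : ℕ) ≠ i := fun h => hne (Fin.ext h)
          omega
        simp only [this]
      refine qc.smul_left (qc.add_left ?_ ?_) _
      · refine ((D.qc_yx j i hne).mul_left (D.qc_xx j i)).congr ?_
        rw [e1]; simp [F.Bzz]
      · rw [e1]; exact ih.smul_left _

lemma qc_zz (j k : Fin (n + 1)) : D.qc (D.z j) (D.z k) 0 := by
  induction k using Fin.induction with
  | zero => rw [D.z0]; exact qc_one _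
  | succ k ih =>
    rw [D.z_succ]
    refine qc.smul_right (qc.add_right ?_ (ih.smul_right _)) _
    refine ((D.qc_zy j k).mul_right (D.qc_zx j k)).congr ?_
    simp [F.Bzz]

end QW
end
end PW

namespace PW
open scoped Classical
noncomputable section

/-! ### Monomials and the normalized standard basis -/

/-- Exponents `(a, b)` of standard monomials: `b j` is the exponent of `z_{j+1}`, and `a i` stands
for `y_i ^ a i` if `a i ≥ 0` and for `x_i ^ (-a i)` otherwise. -/
abbrev Mon (n : ℕ) := (Fin n → ℤ) × (Fin n → ℕ)

variable {n : ℕ} {E : Type} [AddCommGroup E] {F : Form n E} {W : Type} [Ring W] [Algebra ℂ W]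

/-- The exponent of `z_j` as a monomial exponent (with `z_0 = 1`). -/
def zb (j : Fin (n + 1)) : Fin n → ℕ := fun k => if k.succ = j then 1 else 0

/-- The weight of one factor of a standard monomial, when `x_i` has weight `z_{ζ i} - y_i`. -/
def vm (ζ : Fin n → Fin (n + 1)) (m : Mon n) : Fin n ⊕ Fin n → Gam n
  | Sum.inl j => m.2 j • zd j.succ
  | Sum.inr i => m.1 i • yd i + (-(m.1 i)).toNat • zd (ζ i)

/-- The weight of a standard monomial, when `x_i` has weight `z_{ζ i} - y_i`. -/
def vec (ζ : Fin n → Fin (n + 1)) (m : Mon n) : Gam n := ∑ t, vm ζ m t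

lemma vec_fst (ζ : Fin n → Fin (n + 1)) (m : Mon n) : (vec ζ m).1 = m.1 := by
  unfold vec
  rw [Fintype.sum_sum_type, Prod.fst_add, Prod.fst_sum, Prod.fst_sum]
  ext k
  simp [vm, zd, yd, Finset.sum_apply, Pi.single_apply]

lemma vec_snd (ζ : Fin n → Fin (n + 1)) (m : Mon n) (k : Fin n) :
    (vec ζ m).2 k = m.2 k + ∑ i, if k.succ = ζ i then ((-(m.1 i)).toNat : ℤ) else 0 := by
  unfold vec
  rw [Fintype.sum_sum_type, Prod.snd_add, Prod.snd_sum, Prod.snd_sum]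
  simp [vm, zd, yd, Finset.sum_apply]

lemma vec_inj (ζ : Fin n → Fin (n + 1)) : Function.Injective (vec ζ) := by
  intro m m' h
  have h1 : m.1 = m'.1 := by rw [← vec_fst ζ m, h, vec_fst]
  refine Prod.ext h1 ?_
  ext k
  have h2 := vec_snd ζ m k
  rw [h, vec_snd, h1] at h2
  exact_mod_cast (add_right_cancel h2).symm

lemma vec_zero (ζ : Fin n → Fin (n + 1)) : vec ζ (0 : Mon n) = 0 := by
  unfold vec
  rw [Fintype.sum_sum_type]
  simp [vm]

lemma vec_add_zb (ζ : Fin n → Fin (n + 1)) (m : Mon n) (j : Fin (n + 1)) :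
    vec ζ (m.1, m.2 + zb j) = zd j + vec ζ m := by
  refine Prod.ext ?_ ?_
  · simp [vec_fst, zd]
  · ext k
    rw [vec_snd, Prod.snd_add, Pi.add_apply, vec_snd]
    simp only [zd, zb, Pi.add_apply]
    split_ifs <;> push_cast <;> ring

lemma vec_add_y (ζ : Fin n → Fin (n + 1)) (m : Mon n) (i : Fin n) (h : 0 ≤ m.1 i) :
    vec ζ (m.1 + Pi.single i 1, m.2) = yd i + vec ζ m := by
  refine Prod.ext ?_ ?_
  · simp [vec_fst, yd, add_comm]
  · ext k
    rw [vec_snd, Prod.snd_add, Pi.add_apply, vec_snd]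
    simp only [yd, Pi.add_apply, Pi.zero_apply, zero_add]
    congr 1
    refine Finset.sum_congr rfl fun l _ => ?_
    by_cases hl : l = i
    · subst hl
      have e1 : (-(m.1 l)).toNat = 0 := by omega
      have e2 : (-(m.1 l + 1)).toNat = 0 := by omega
      simp [e1]; omega
    · simp [hl]

lemma vec_sub_y (ζ : Fin n → Fin (n + 1)) (m : Mon n) (i : Fin n) (h : m.1 i ≤ 0) :
    vec ζ (m.1 - Pi.single i 1, m.2) = (zd (ζ i) - yd i) + vec ζ m := by
  refine Prod.ext ?_ ?_
  · simp [vec_fst, yd, zd]; abel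
  · ext k
    rw [vec_snd, Prod.snd_add, Pi.add_apply, vec_snd]
    simp only [yd, zd, Prod.snd_sub, sub_zero]
    rw [add_left_comm]
    congr 1
    rw [← Finset.add_sum_erase _ _ (Finset.mem_univ i),
      ← Finset.add_sum_erase Finset.univ _ (Finset.mem_univ i), ← add_assoc]
    congr 1
    · simp only [Pi.sub_apply, Pi.single_eq_same]
      split_ifs <;> omega
    · refine Finset.sum_congr rfl fun l hl => ?_
      have hl := Finset.ne_of_mem_erase hl
      simp [hl]

lemma B_vec (F : Form n E) (ζ : Fin n → Fin (n + 1)) (u : Gam n) (m : Mon n) :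
    F.B u (vec ζ m) = ∑ t, F.B u (vm ζ m t) := by
  unfold vec; rw [map_sum]

/-- The `z`-weights of a monomial do not depend on the weights chosen for the `x_i`. -/
lemma B_zd_vec (F : Form n E) (ζ : Fin n → Fin (n + 1)) (j : Fin (n + 1)) (m : Mon n) :
    F.B (zd j) (vec ζ m) = ∑ i, if i.castSucc < j then m.1 i • F.s i else 0 := by
  rw [B_vec, Fintype.sum_sum_type]
  simp only [vm, map_add, map_nsmul, map_zsmul, F.Bzz, F.Bzy, smul_zero, add_zero,
    Finset.sum_const_zero, zero_add, smul_ite]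

lemma B_zd_succ (F : Form n E) (ζ : Fin n → Fin (n + 1)) (i : Fin n) (m : Mon n) :
    F.B (zd i.succ) (vec ζ m) = m.1 i • F.s i + F.B (zd i.castSucc) (vec ζ m) := by
  rw [B_zd_vec, B_zd_vec, ← Finset.add_sum_erase _ _ (Finset.mem_univ i),
    ← Finset.add_sum_erase Finset.univ (fun l : Fin n => if l.castSucc < i.castSucc then _ else _)
      (Finset.mem_univ i)]
  simp only [Fin.castSucc_lt_succ, if_true, lt_irrefl, if_false, zero_add]
  congr 1
  refine Finset.sum_congr rfl fun l hl => ?_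
  have hl := Finset.ne_of_mem_erase hl
  have : l.castSucc < i.succ ↔ l.castSucc < i.castSucc := by
    simp only [Fin.lt_def, Fin.val_castSucc, Fin.val_succ]
    have : (l : ℕ) ≠ i := fun h => hl (Fin.ext h)
    omega
  simp only [this]

namespace QW
variable (D : QW F W)

/-- The product of a list of factors, normalized by the weights so as to be independent of the
order in which the factors q-commute. -/
def hat {ι : Type} (G : ι → W) (v : ι → Gam n) : List ι → W
  | [] => 1
  | j :: L => D.ω (-F.B (v j) (L.map v).sum) • (G j * hat G v L)

lemma hat_congr {ι : Type} {G G' : ι → W} {v v' : ι → Gam n} (L : List ι)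
    (h : ∀ j ∈ L, G j = G' j ∧ v j = v' j) : D.hat G v L = D.hat G' v' L := by
  induction L with
  | nil => rfl
  | cons j L ih =>
    have h1 : L.map v = L.map v' := List.map_congr_left fun k hk => (h k (by simp [hk])).2
    simp only [hat]
    rw [h1, (h j (by simp)).1, (h j (by simp)).2, ih fun k hk => h k (by simp [hk])]

lemma mul_hat {ι : Type} (G : ι → W) (v : ι → Gam n) (G' : ι → W) (v' : ι → Gam n) (g : W)
    (u : Gam n) (i : ι) (L : List ι) (hL : L.Nodup) (hi : i ∈ L)
    (hq : ∀ j ∈ L, j ≠ i → D.qc g (G j) (F.B u (v j)))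
    (hG : ∀ j ∈ L, j ≠ i → G' j = G j ∧ v' j = v j)
    (hgi : g * G i = D.ω (F.B u (v i)) • G' i) (hv : v' i = u + v i) :
    g * D.hat G v L = D.ω (F.B u (L.map v).sum) • D.hat G' v' L := by
  induction L with
  | nil => simp at hi
  | cons j L ih =>
    rw [List.nodup_cons] at hL
    simp only [hat, List.map_cons, List.sum_cons]
    by_cases hj : j = i
    · subst hj
      have hne : ∀ k ∈ L, k ≠ j := fun k hk h => hL.1 (h ▸ hk)
      have e1 : D.hat G' v' L = D.hat G v L :=
        D.hat_congr L fun k hk => hG k (by simp [hk]) (hne k hk)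
      have e2 : L.map v' = L.map v :=
        List.map_congr_left fun k hk => (hG k (by simp [hk]) (hne k hk)).2
      rw [e1, e2, hv, mul_smul_comm, ← mul_assoc, hgi, smul_mul_assoc, smul_smul, smul_smul,
        ← D.ω_add, ← D.ω_add]
      congr 2
      simp only [map_add, AddMonoidHom.add_apply]
      abel
    · have hiL : i ∈ L := by
        rcases List.mem_cons.1 hi with h | h
        · exact absurd h.symm hj
        · exact h
      have ih := ih hL.2 hiL (fun k hk => hq k (by simp [hk])) (fun k hk => hG k (by simp [hk]))
      have e2 : (L.map v').sum = u + (L.map v).sum := by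
        have : ∀ L : List ι, L.Nodup → i ∈ L → (∀ k ∈ L, k ≠ i → v' k = v k) →
            (L.map v').sum = u + (L.map v).sum := by
          intro L
          induction L with
          | nil => simp
          | cons k L ih =>
            intro h1 h2 h3
            rw [List.nodup_cons] at h1
            by_cases hk : k = i
            · subst hk
              have e2 : L.map v' = L.map v :=
                List.map_congr_left fun l hl => h3 l (by simp [hl]) fun h => h1.1 (h ▸ hl)
              simp only [List.map_cons, List.sum_cons, e2, hv, add_assoc]
            · have h4 : i ∈ L := by
                rcases List.mem_cons.1 h2 with h | h
                · exact absurd h.symm hk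
                · exact h
              simp only [List.map_cons, List.sum_cons,
                ih h1.2 h4 fun l hl => h3 l (by simp [hl]), h3 k (by simp) hk]
              abel
        exact this L hL.2 hiL fun k hk hk' => (hG k (by simp [hk]) hk').2
      obtain ⟨e3, e4⟩ := hG j (by simp) hj
      rw [e2, e3, e4, mul_smul_comm, ← mul_assoc, (hq j (by simp) hj).swap', smul_mul_assoc,
        mul_assoc, ih, mul_smul_comm, smul_smul, smul_smul, smul_smul, ← D.ω_add, ← D.ω_add,
        ← D.ω_add]
      congr 2
      simp only [map_add]
      rw [F.swap (v j) u]
      abel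

lemma qc_hat {ι : Type} (G : ι → W) (v : ι → Gam n) (g : W) (u : Gam n) (L : List ι)
    (v' : ι → Gam n) (hq : ∀ j ∈ L, D.qc g (G j) (F.B u (v' j))) :
    D.qc g (D.hat G v L) (F.B u (L.map v').sum) := by
  induction L with
  | nil => simpa [hat] using qc_one g
  | cons j L ih =>
    simp only [hat, List.map_cons, List.sum_cons, map_add]
    exact ((hq j (by simp)).mul_right (ih fun k hk => hq k (by simp [hk]))).smul_right _

/-- One factor of a standard monomial. -/
def fac (m : Mon n) : Fin n ⊕ Fin n → W
  | Sum.inl j => D.z j.succ ^ m.2 j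
  | Sum.inr i => D.y i ^ (m.1 i).toNat * D.x i ^ (-(m.1 i)).toNat

/-- The normalized standard monomial with exponent `m`. -/
def e (m : Mon n) : W := D.hat (D.fac m) (vm Fin.castSucc m) Finset.univ.toList

lemma e_zero : D.e 0 = 1 := by
  have : ∀ L : List (Fin n ⊕ Fin n), D.hat (D.fac 0) (vm Fin.castSucc 0) L = 1 := by
    intro L
    induction L with
    | nil => rfl
    | cons j L ih =>
      rw [hat, ih]
      rcases j with j | j <;> simp [fac, vm, D.ω_zero]
  exact this _

lemma e_eq_zero_of_fac {m : Mon n} {t} (h : D.fac m t = 0) : D.e m = 0 := by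
  have : ∀ L : List (Fin n ⊕ Fin n), t ∈ L → D.hat (D.fac m) (vm Fin.castSucc m) L = 0 := by
    intro L
    induction L with
    | nil => simp
    | cons j L ih =>
      intro hj
      rw [hat]
      rcases List.mem_cons.1 hj with rfl | hj
      · simp [h]
      · simp [ih hj]
  exact this _ (by simp)

lemma sum_toList (f : Fin n ⊕ Fin n → Gam n) :
    ((Finset.univ.toList).map f).sum = ∑ t, f t := Finset.sum_map_toList _ _

lemma z_mul_e (j : Fin (n + 1)) (m : Mon n) :
    D.z j * D.e m = D.ω (F.B (zd j) (vec Fin.castSucc m)) • D.e (m.1, m.2 + zb j) := by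
  induction j using Fin.cases with
  | zero =>
    have : m.2 + zb 0 = m.2 := by ext k; simp [zb]
    rw [D.z0, zd_zero, this]; simp [D.ω_zero]
  | succ j =>
    unfold e vec
    rw [← sum_toList]
    refine D.mul_hat _ _ _ _ _ (zd j.succ) (Sum.inl j) _ (Finset.nodup_toList _) (by simp)
      ?_ ?_ ?_ ?_
    · rintro (k | k) - -
      · simp only [fac, vm, map_nsmul]
        refine ((D.qc_zz j.succ k.succ).pow_right _).congr ?_
        simp [F.Bzz]
      · simp only [fac, vm]
        refine (((D.qc_zy j.succ k).pow_right _).mul_right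
          ((D.qc_zx j.succ k).pow_right _)).congr ?_
        simp only [map_add, map_sub, map_nsmul, map_zsmul, F.Bzz, smul_zero, zero_sub, add_zero]
        rw [← natCast_zsmul, ← natCast_zsmul, smul_neg, ← sub_eq_add_neg, ← sub_smul]
        congr 1; omega
    · rintro (k | k) - hk
      · have : k ≠ j := fun h => hk (by rw [h])
        simp [fac, vm, zb, this]
      · simp [fac, vm]
    · simp [fac, vm, zb, -nsmul_eq_mul, F.Bzz, D.ω_zero, pow_succ']
    · simp [vm, zb, add_smul, add_comm]

lemma y_mul_e (i : Fin n) (m : Mon n) (h : 0 ≤ m.1 i) :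
    D.y i * D.e m = D.ω (F.B (yd i) (vec Fin.castSucc m)) • D.e (m.1 + Pi.single i 1, m.2) := by
  unfold e vec
  rw [← sum_toList]
  have e1 : (-(m.1 i)).toNat = 0 := by omega
  have e2 : (-(m.1 i + 1)).toNat = 0 := by omega
  have e3 : (m.1 i + 1).toNat = (m.1 i).toNat + 1 := by omega
  refine D.mul_hat _ _ _ _ _ (yd i) (Sum.inr i) _ (Finset.nodup_toList _) (by simp)
    ?_ ?_ ?_ ?_
  · rintro (k | k) - hk
    · simp only [fac, vm, map_nsmul]
      refine (((D.qc_zy k.succ i).symm).pow_right _).congr ?_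
      rw [← F.swap]
    · simp only [fac, vm]
      have hk : i ≠ k := fun h => hk (by rw [h])
      refine (((D.qc_yy i k).pow_right _).mul_right ((D.qc_yx i k hk).pow_right _)).congr ?_
      simp only [map_add, map_sub, map_nsmul, map_zsmul]
      simp only [← natCast_zsmul]
      rw [smul_sub, add_sub_left_comm, ← sub_smul, add_comm]
      congr 2; omega
  · rintro (k | k) - hk
    · simp [fac, vm]
    · have : k ≠ i := fun h => hk (by rw [h])
      simp [fac, vm, this]
  · simp only [fac, vm, Pi.add_apply, Pi.single_eq_same, e1, e2, e3]
    simp [-zsmul_eq_mul, F.alt, D.ω_zero, pow_succ']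
  · simp only [vm, Pi.add_apply, Pi.single_eq_same, e1, e2]
    simp [add_smul, add_comm]

lemma x_mul_e (i : Fin n) (m : Mon n) (h : m.1 i ≤ 0) :
    D.x i * D.e m = D.ω (F.B (zd i.castSucc - yd i) (vec Fin.castSucc m)) •
      D.e (m.1 - Pi.single i 1, m.2) := by
  unfold e vec
  rw [← sum_toList]
  have e1 : (m.1 i).toNat = 0 := by omega
  have e2 : (m.1 i - 1).toNat = 0 := by omega
  have e3 : (-(m.1 i - 1)).toNat = (-(m.1 i)).toNat + 1 := by omega
  have e4 : (((-(m.1 i)).toNat : ℕ) : ℤ) = -(m.1 i) := by omega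
  refine D.mul_hat _ _ _ _ _ (zd i.castSucc - yd i) (Sum.inr i) _ (Finset.nodup_toList _)
    (by simp) ?_ ?_ ?_ ?_
  · rintro (k | k) - hk
    · simp only [fac, vm, map_nsmul]
      refine (((D.qc_zx k.succ i).symm).pow_right _).congr ?_
      rw [← F.swap]
    · simp only [fac, vm]
      have hk : i ≠ k := fun h => hk (by rw [h])
      refine (((D.qc_xy i k hk).pow_right _).mul_right ((D.qc_xx i k).pow_right _)).congr ?_
      rw [map_add, map_zsmul, map_nsmul, map_sub (F.B (zd i.castSucc - yd i))]
      simp only [← natCast_zsmul]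
      rw [smul_sub, add_sub_left_comm, ← sub_smul, add_comm]
      congr 2; omega
  · rintro (k | k) - hk
    · simp [fac, vm]
    · have : k ≠ i := fun h => hk (by rw [h])
      simp [fac, vm, this]
  · have e5 : m.1 i • yd i + (-(m.1 i)).toNat • zd i.castSucc
        = (-(m.1 i)) • (zd i.castSucc - yd i) := by
      rw [← natCast_zsmul, e4, smul_sub, neg_smul, neg_smul]; abel
    simp only [fac, vm, Pi.sub_apply, Pi.single_eq_same, e1, e2, e3, e5]
    rw [map_zsmul, F.alt]
    simp [D.ω_zero, pow_succ']
  · simp only [vm, Pi.sub_apply, Pi.single_eq_same, e3]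
    rw [succ_nsmul, sub_smul, one_smul]; abel

lemma y_mul_e_neg (i : Fin n) (m : Mon n) (h : m.1 i < 0) :
    D.y i * D.e m = D.ω (F.B (yd i) (vec Fin.castSucc m)) •
      (D.ω (m.1 i • F.s i) • D.e (m.1 + Pi.single i 1, m.2 + zb i.succ)
        + D.e (m.1 + Pi.single i 1, m.2 + zb i.castSucc)) := by
  set m' : Mon n := (m.1 + Pi.single i 1, m.2) with hm'
  have hm : (m'.1 - Pi.single i 1, m'.2) = m := by simp [hm']
  have h1 : m'.1 i ≤ 0 := by simp [hm']; omega
  have hx := D.x_mul_e i m' h1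
  have hv := vec_sub_y Fin.castSucc m' i h1
  rw [hm] at hx hv
  set β := F.B (zd i.castSucc - yd i) (vec Fin.castSucc m') with hβ
  have hx' : D.e m = D.ω (-β) • (D.x i * D.e m') := by
    rw [hx, smul_smul, D.ω_neg_mul, one_smul]
  have hz := D.z_mul_e i.succ m'
  have hz' := D.z_mul_e i.castSucc m'
  have h2 : F.B (yd i) (vec Fin.castSucc m) = F.B (yd i) (vec Fin.castSucc m') := by
    rw [hv]; simp only [map_add, map_sub, F.alt, F.Byz]; simp
  have h3 : F.B (zd i.castSucc) (vec Fin.castSucc m') - β = F.B (yd i) (vec Fin.castSucc m') := by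
    rw [hβ, map_sub]; simp
  have h4 : m'.1 i = m.1 i + 1 := by simp [hm']
  rw [hx', mul_smul_comm, ← mul_assoc, D.yx, add_mul, smul_mul_assoc, hz, hz', h2, B_zd_succ, h4]
  simp only [smul_add, smul_smul, ← D.ω_add]
  rw [← h3]
  congr 3
  · rw [add_smul, one_smul]; abel_nf
  · abel_nf

lemma x_mul_e_pos (i : Fin n) (m : Mon n) (h : 0 < m.1 i) :
    D.x i * D.e m = D.ω (F.B (zd i.castSucc - yd i) (vec Fin.castSucc m)) •
      (D.ω (m.1 i • F.s i) • D.e (m.1 - Pi.single i 1, m.2 + zb i.succ)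
        + D.e (m.1 - Pi.single i 1, m.2 + zb i.castSucc)) := by
  set m' : Mon n := (m.1 - Pi.single i 1, m.2) with hm'
  have hm : (m'.1 + Pi.single i 1, m'.2) = m := by simp [hm']
  have h1 : 0 ≤ m'.1 i := by simp [hm']; omega
  have hx := D.y_mul_e i m' h1
  have hv := vec_add_y Fin.castSucc m' i h1
  rw [hm] at hx hv
  set β := F.B (yd i) (vec Fin.castSucc m') with hβ
  have hx' : D.e m = D.ω (-β) • (D.y i * D.e m') := by
    rw [hx, smul_smul, D.ω_neg_mul, one_smul]
  have hz := D.z_mul_e i.succ m'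
  have hz' := D.z_mul_e i.castSucc m'
  have h2 : F.B (zd i.castSucc - yd i) (vec Fin.castSucc m)
      = F.B (zd i.castSucc) (vec Fin.castSucc m') - β := by
    rw [hv, hβ]; simp only [map_add, map_sub, AddMonoidHom.sub_apply, F.alt, F.Bzy]; simp
  have h4 : m'.1 i = m.1 i - 1 := by simp [hm']
  rw [hx', mul_smul_comm, ← mul_assoc, D.xy, add_mul, smul_mul_assoc, hz, hz', h2, B_zd_succ, h4]
  simp only [smul_add, smul_smul, ← D.ω_add]
  congr 3
  · rw [sub_smul, one_smul]; abel_nf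
  · abel_nf

/-- Linear combinations of standard monomials. -/
def ev : (Mon n →₀ ℂ) →ₗ[ℂ] W := Finsupp.linearCombination ℂ D.e

@[simp] lemma ev_single (m : Mon n) (c : ℂ) : D.ev (Finsupp.single m c) = c • D.e m := by
  simp [ev]

/-- The standard monomials span. -/
lemma ev_surj : Function.Surjective D.ev := by
  have key : ∀ w : W, ∀ f : Mon n →₀ ℂ, w * D.ev f ∈ LinearMap.range D.ev := by
    intro w
    let S : Subalgebra ℂ W :=
      { carrier := {w | ∀ v ∈ LinearMap.range D.ev, w * v ∈ LinearMap.range D.ev}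
        mul_mem' := fun {a b} ha hb v hv => by rw [mul_assoc]; exact ha _ (hb _ hv)
        add_mem' := fun {a b} ha hb v hv => by
          rw [add_mul]; exact Submodule.add_mem _ (ha _ hv) (hb _ hv)
        algebraMap_mem' := fun c v hv => by
          rw [← Algebra.smul_def]; exact Submodule.smul_mem _ _ hv }
    have hmem : ∀ m, D.e m ∈ LinearMap.range D.ev := fun m => ⟨Finsupp.single m 1, by simp⟩
    have hred : ∀ w : W, (∀ m, w * D.e m ∈ LinearMap.range D.ev) → w ∈ S := by
      rintro w hw _ ⟨f, rfl⟩
      induction f using Finsupp.induction_linear with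
      | zero => simp
      | add f g hf hg => rw [map_add, mul_add]; exact Submodule.add_mem _ hf hg
      | single m c => rw [ev_single, mul_smul_comm]; exact Submodule.smul_mem _ _ (hw m)
    have hS : S = ⊤ := by
      refine D.gen S (fun i => hred _ fun m => ?_) (fun i => hred _ fun m => ?_)
      · rcases le_or_gt 0 (m.1 i) with h | h
        · rw [D.y_mul_e i m h]; exact Submodule.smul_mem _ _ (hmem _)
        · rw [D.y_mul_e_neg i m h]
          exact Submodule.smul_mem _ _ (Submodule.add_mem _ (Submodule.smul_mem _ _ (hmem _))
            (hmem _))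
      · rcases le_or_gt (m.1 i) 0 with h | h
        · rw [D.x_mul_e i m h]; exact Submodule.smul_mem _ _ (hmem _)
        · rw [D.x_mul_e_pos i m h]
          exact Submodule.smul_mem _ _ (Submodule.add_mem _ (Submodule.smul_mem _ _ (hmem _))
            (hmem _))
    intro f
    have : w ∈ S := hS ▸ Algebra.mem_top
    exact this _ ⟨f, rfl⟩
  intro w
  obtain ⟨f, hf⟩ := key w (Finsupp.single 0 1)
  exact ⟨f, by rw [hf]; simp [D.e_zero]⟩

end QW
end
end PW

namespace PW
open scoped Classical
noncomputable section

/-! ### Letters, dead letters and the twisted monomial product -/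

/-- The letters `z_j`, `y_i`, `x_i`. -/
inductive Ltr (n : ℕ)
  | z (j : Fin (n + 1)) : Ltr n
  | y (i : Fin n) : Ltr n
  | x (i : Fin n) : Ltr n

instance (n : ℕ) : Finite (Ltr n) := by
  let f : Ltr n → Fin (n + 1) ⊕ (Fin n ⊕ Fin n) := fun g => match g with
    | .z j => .inl j
    | .y i => .inr (.inl i)
    | .x i => .inr (.inr i)
  refine Finite.of_injective f ?_
  rintro (a | a | a) (b | b | b) h <;> simp_all [f]

variable {n : ℕ} {E : Type} [AddCommGroup E] {F : Form n E} {W : Type} [Ring W] [Algebra ℂ W]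

/-- The exponent of a letter regarded as a standard monomial. -/
def mon : Ltr n → Mon n
  | .z j => (0, zb j)
  | .y i => (Pi.single i 1, 0)
  | .x i => (-Pi.single i 1, 0)

/-- Given the set `T` of letters that vanish, the index `i` is of Weyl type if `z_i` and `z_{i+1}`
both survive, so that `x_i` and `y_i` do not commute up to a scalar. -/
def Weyl (T : Ltr n → Prop) (i : Fin n) : Prop := ¬ T (.z i.castSucc) ∧ ¬ T (.z i.succ)

/-- The index of the first surviving one of `z_i`, `z_{i+1}`. -/
def zt (T : Ltr n → Prop) (i : Fin n) : Fin (n + 1) :=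
  if T (.z i.castSucc) then i.succ else i.castSucc

/-- The weight of a letter. -/
def gvec (T : Ltr n → Prop) : Ltr n → Gam n
  | .z j => zd j
  | .y i => yd i
  | .x i => zd (zt T i) - yd i

/-- The sets of letters that can vanish modulo a prime ideal. -/
structure Adm (T : Ltr n → Prop) : Prop where
  z0 : ¬ T (.z 0)
  yx : ∀ i, (T (.y i) ∨ T (.x i)) ↔ (T (.z i.castSucc) ∧ T (.z i.succ))

/-- `m` involves no dead letter. -/
structure Alive (T : Ltr n → Prop) (m : Mon n) : Prop where
  z : ∀ j, 0 < m.2 j → ¬ T (.z j.succ)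
  y : ∀ i, 0 < m.1 i → ¬ T (.y i)
  x : ∀ i, m.1 i < 0 → ¬ T (.x i)

/-- `m` involves only letters that are normal modulo the dead ones. -/
structure Core (T : Ltr n → Prop) (m : Mon n) : Prop where
  alive : Alive T m
  weyl : ∀ i, Weyl T i → m.1 i = 0

/-- The letters that are normal and nonzero modulo the dead ones. -/
structure Nrm (T : Ltr n → Prop) (g : Ltr n) : Prop where
  ne : ¬ T g
  y : ∀ i, Weyl T i → g ≠ .y i
  x : ∀ i, Weyl T i → g ≠ .x i

/-- The letters whose weights are compared. -/
def Tester (T : Ltr n → Prop) (g : Ltr n) : Prop := Nrm T g ∨ ∃ i, Weyl T i ∧ g = .y i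

/-- The commutation weight of the letter `g` with the monomial `m`. -/
def wt (F : Form n E) (T : Ltr n → Prop) (g : Ltr n) (m : Mon n) : E :=
  F.B (gvec T g) (vec (zt T) m)

/-- All relevant weights of a monomial. -/
def key (F : Form n E) (T : Ltr n → Prop) (m : Mon n) : Ltr n → E :=
  fun g => if Tester T g then wt F T g m else 0

/-- The exponent of the product of two monomials modulo the dead letters. -/
def mulm (T : Ltr n → Prop) (m m' : Mon n) : Mon n :=
  (m.1 + m'.1, fun k => m.2 k + m'.2 k +
    ∑ i, if k.succ = zt T i then
      (-(m.1 i)).toNat + (-(m'.1 i)).toNat - (-(m.1 i + m'.1 i)).toNat else 0)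

lemma vec_mulm (T : Ltr n → Prop) (m m' : Mon n) :
    vec (zt T) (mulm T m m') = vec (zt T) m + vec (zt T) m' := by
  refine Prod.ext ?_ ?_
  · simp [vec_fst, mulm]
  · ext k
    rw [Prod.snd_add, Pi.add_apply, vec_snd, vec_snd, vec_snd]
    simp only [mulm]
    push_cast
    rw [add_assoc, ← Finset.sum_add_distrib, add_add_add_comm, ← Finset.sum_add_distrib]
    congr 1
    refine Finset.sum_congr rfl fun i _ => ?_
    simp only [Pi.add_apply]
    split_ifs <;> omega

lemma mulm_comm (T : Ltr n → Prop) (m m' : Mon n) : mulm T m m' = mulm T m' m :=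
  vec_inj (zt T) (by rw [vec_mulm, vec_mulm, add_comm])

lemma mulm_assoc (T : Ltr n → Prop) (m m' m'' : Mon n) :
    mulm T (mulm T m m') m'' = mulm T m (mulm T m' m'') :=
  vec_inj (zt T) (by simp only [vec_mulm, add_assoc])

lemma zero_mulm (T : Ltr n → Prop) (m : Mon n) : mulm T 0 m = m :=
  vec_inj (zt T) (by rw [vec_mulm, vec_zero, zero_add])

lemma mulm_inj (T : Ltr n → Prop) (m : Mon n) : Function.Injective (mulm T m) := by
  intro a b h
  have := congrArg (vec (zt T)) h
  rw [vec_mulm, vec_mulm] at this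
  exact vec_inj _ (add_left_cancel this)

lemma vec_mon (T : Ltr n → Prop) (g : Ltr n) : vec (zt T) (mon g) = gvec T g := by
  rcases g with j | i | i
  · have := vec_add_zb (zt T) 0 j
    rw [vec_zero, add_zero] at this
    simpa [mon, gvec] using this
  · have := vec_add_y (zt T) 0 i (le_refl _)
    rw [vec_zero, add_zero] at this
    simpa [mon, gvec] using this
  · have := vec_sub_y (zt T) 0 i (le_refl _)
    rw [vec_zero, add_zero] at this
    simpa [mon, gvec] using this

lemma wt_mulm (T : Ltr n → Prop) (g : Ltr n) (m m' : Mon n) :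
    wt F T g (mulm T m m') = wt F T g m + wt F T g m' := by
  simp [wt, vec_mulm]

lemma key_mulm (T : Ltr n → Prop) (m m' : Mon n) :
    key F T (mulm T m m') = key F T m + key F T m' := by
  ext g; simp only [key, Pi.add_apply]; split_ifs <;> simp [wt_mulm]

section comb
variable {T : Ltr n → Prop}

lemma wt_x (T : Ltr n → Prop) (i : Fin n) (m : Mon n) :
    wt F T (.x i) m = wt F T (.z (zt T i)) m - wt F T (.y i) m := by
  simp [wt, gvec]

lemma wt_zs (T : Ltr n → Prop) (i : Fin n) (m : Mon n) :
    wt F T (.z i.succ) m = m.1 i • F.s i + wt F T (.z i.castSucc) m := B_zd_succ F _ i m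

lemma nrm_z {j : Fin (n + 1)} (h : ¬ T (.z j)) : Nrm T (.z j) :=
  ⟨h, by simp, by simp⟩

lemma Core.zero : Core T 0 := ⟨⟨by simp, by simp, by simp⟩, by simp⟩

lemma not_T_zt (hT : Adm T) {i : Fin n} (hy : ¬ T (.y i)) (hx : ¬ T (.x i)) :
    ¬ T (.z (zt T i)) := by
  have := hT.yx i
  unfold zt
  split_ifs with h <;> tauto

lemma Alive.mulm (hT : Adm T) {m m' : Mon n} (h : Alive T m) (h' : Alive T m') :
    Alive T (mulm T m m') := by
  refine ⟨fun j hj => ?_, fun i hi => ?_, fun i hi => ?_⟩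
  · simp only [PW.mulm] at hj
    by_cases h1 : 0 < m.2 j
    · exact h.z j h1
    by_cases h2 : 0 < m'.2 j
    · exact h'.z j h2
    have h3 : 0 < ∑ i, if j.succ = zt T i then
      (-(m.1 i)).toNat + (-(m'.1 i)).toNat - (-(m.1 i + m'.1 i)).toNat else 0 := by omega
    obtain ⟨i, -, hi⟩ := Finset.exists_ne_zero_of_sum_ne_zero h3.ne'
    split_ifs at hi with h4
    · rw [h4]
      rcases lt_trichotomy (m.1 i) 0 with h5 | h5 | h5
      · exact not_T_zt hT (h'.y i (by omega)) (h.x i h5)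
      · omega
      · exact not_T_zt hT (h.y i h5) (h'.x i (by omega))
    · simp at hi
  · simp only [PW.mulm, Pi.add_apply] at hi
    by_cases h1 : 0 < m.1 i
    · exact h.y i h1
    · exact h'.y i (by omega)
  · simp only [PW.mulm, Pi.add_apply] at hi
    by_cases h1 : m.1 i < 0
    · exact h.x i h1
    · exact h'.x i (by omega)

lemma Core.mulm (hT : Adm T) {m m' : Mon n} (h : Core T m) (h' : Core T m') :
    Core T (mulm T m m') :=
  ⟨h.alive.mulm hT h'.alive, fun i hi => by simp [PW.mulm, h.weyl i hi, h'.weyl i hi]⟩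

lemma alive_mon {g : Ltr n} (h : ¬ T g) : Alive T (mon g) := by
  rcases g with j | i | i
  · refine ⟨fun k hk => ?_, by simp [mon], by simp [mon]⟩
    simp only [mon, zb] at hk
    split_ifs at hk with h1
    · rwa [h1]
    · simp at hk
  · refine ⟨by simp [mon], fun k hk => ?_, fun k hk => ?_⟩
    all_goals
      simp only [mon, Pi.single_apply] at hk
      split_ifs at hk with h1 <;> first | omega | (subst h1; exact h)
  · refine ⟨by simp [mon], fun k hk => ?_, fun k hk => ?_⟩
    all_goals
      simp only [mon, Pi.single_apply, Pi.neg_apply] at hk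
      split_ifs at hk with h1 <;> first | omega | (subst h1; exact h)

lemma not_alive_mon (hT : Adm T) {g : Ltr n} (h : T g) : ¬ Alive T (mon g) := by
  rcases g with j | i | i
  · induction j using Fin.cases with
    | zero => exact absurd h hT.z0
    | succ j => exact fun h' => h'.z j (by simp [mon, zb]) h
  · exact fun h' => h'.y i (by simp [mon]) h
  · exact fun h' => h'.x i (by simp [mon]) h

lemma Nrm.core {g : Ltr n} (h : Nrm T g) : Core T (mon g) := by
  refine ⟨alive_mon h.ne, fun i hi => ?_⟩
  rcases g with j | k | k
  · simp [mon]
  · have : i ≠ k := fun h' => h.y i hi (by rw [h'])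
    simp [mon, this]
  · have : i ≠ k := fun h' => h.x i hi (by rw [h'])
    simp [mon, this]

/-- Every core monomial is a product of normal letters. -/
lemma core_induct {C : Mon n → Prop} (h0 : C 0)
    (hs : ∀ g m, Nrm T g → Core T m → C m → C (mulm T (mon g) m)) :
    ∀ m, Core T m → C m := by
  have key : ∀ N : ℕ, ∀ m, Core T m → ∑ i, (m.1 i).natAbs + ∑ i, m.2 i = N → C m := by
    intro N
    induction N with
    | zero =>
      intro m hm h
      have : m = 0 := by
        simp at h
        refine Prod.ext ?_ ?_
        · ext i; simpa using h.1 i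
        · ext i; simpa using h.2 i
      rw [this]; exact h0
    | succ N ih =>
      intro m hm h
      by_cases hb : ∃ j, 0 < m.2 j
      · obtain ⟨j, hj⟩ := hb
        let m1 : Mon n := (m.1, m.2 - zb j.succ)
        have hle : m1.2 + zb j.succ = m.2 := by
          ext k
          simp only [m1, zb, Pi.add_apply, Pi.sub_apply, Fin.succ_inj]
          split_ifs with hk
          · subst hk; omega
          · omega
        have hm1 : m = mulm T (mon (.z j.succ)) m1 := by
          refine vec_inj (zt T) ?_
          rw [vec_mulm, vec_mon, gvec, ← vec_add_zb, hle]
        have hc : Core T m1 := by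
          refine ⟨⟨fun k hk => hm.alive.z k ?_, hm.alive.y, hm.alive.x⟩, hm.weyl⟩
          simp only [m1, Pi.sub_apply] at hk; omega
        rw [hm1]
        refine hs _ _ (nrm_z (hm.alive.z j hj)) hc (ih m1 hc ?_)
        have : ∑ i, m.2 i = ∑ i, m1.2 i + 1 := by
          rw [← hle]
          simp only [Pi.add_apply, Finset.sum_add_distrib]
          simp [zb]
        simp only [m1] at this ⊢
        omega
      · by_cases ha : ∃ i, 0 < m.1 i
        · obtain ⟨i, hi⟩ := ha
          let m1 : Mon n := (m.1 - Pi.single i 1, m.2)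
          have hm1 : m = mulm T (mon (.y i)) m1 := by
            refine vec_inj (zt T) ?_
            rw [vec_mulm, vec_mon, gvec, ← vec_add_y _ _ _ (by simp [m1]; omega)]
            simp [m1]
          have hc : Core T m1 := by
            refine ⟨⟨hm.alive.z, fun k hk => hm.alive.y k ?_, fun k hk => hm.alive.x k ?_⟩,
              fun k hk => ?_⟩
            all_goals by_cases hki : k = i
            · subst hki; exact hi
            · simpa [m1, hki] using hk
            · subst hki; simp [m1] at hk; omega
            · simpa [m1, hki] using hk
            · subst hki; have := hm.weyl k hk; omega
            · simpa [m1, hki] using hm.weyl k hk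
          rw [hm1]
          refine hs _ _ ⟨hm.alive.y i hi, fun k hk h' => ?_, by simp⟩ hc (ih m1 hc ?_)
          · obtain rfl : i = k := by simpa using h'
            have := hm.weyl i hk
            omega
          · have : ∑ i, (m.1 i).natAbs = ∑ i, (m1.1 i).natAbs + 1 := by
              rw [← Finset.add_sum_erase _ _ (Finset.mem_univ i),
                ← Finset.add_sum_erase Finset.univ (fun l => (m1.1 l).natAbs) (Finset.mem_univ i)]
              have e1 : (m.1 i).natAbs = (m1.1 i).natAbs + 1 := by simp [m1]; omega
              have e2 : ∑ l ∈ Finset.univ.erase i, (m.1 l).natAbs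
                  = ∑ l ∈ Finset.univ.erase i, (m1.1 l).natAbs :=
                Finset.sum_congr rfl fun l hl => by
                  simp [m1, Finset.ne_of_mem_erase hl]
              omega
            simp only [m1] at this ⊢
            omega
        · have ha' : ∃ i, m.1 i < 0 := by
            by_contra hcon
            push Not at ha hcon hb
            have h1 : ∀ i, m.1 i = 0 := fun i => le_antisymm (ha i) (hcon i)
            have h2 : ∀ i, m.2 i = 0 := fun i => Nat.le_zero.1 (hb i)
            simp [h1, h2] at h
          obtain ⟨i, hi⟩ := ha'
          let m1 : Mon n := (m.1 + Pi.single i 1, m.2)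
          have hm1 : m = mulm T (mon (.x i)) m1 := by
            refine vec_inj (zt T) ?_
            rw [vec_mulm, vec_mon, gvec, ← vec_sub_y _ _ _ (by simp [m1]; omega)]
            simp [m1]
          have hc : Core T m1 := by
            refine ⟨⟨hm.alive.z, fun k hk => hm.alive.y k ?_, fun k hk => hm.alive.x k ?_⟩,
              fun k hk => ?_⟩
            all_goals by_cases hki : k = i
            · subst hki; simp [m1] at hk; omega
            · simpa [m1, hki] using hk
            · subst hki; exact hi
            · simpa [m1, hki] using hk
            · subst hki; have := hm.weyl k hk; omega
            · simpa [m1, hki] using hm.weyl k hk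
          rw [hm1]
          refine hs _ _ ⟨hm.alive.x i hi, by simp, fun k hk h' => ?_⟩ hc (ih m1 hc ?_)
          · obtain rfl : i = k := by simpa using h'
            have := hm.weyl i hk
            omega
          · have : ∑ i, (m.1 i).natAbs = ∑ i, (m1.1 i).natAbs + 1 := by
              rw [← Finset.add_sum_erase _ _ (Finset.mem_univ i),
                ← Finset.add_sum_erase Finset.univ (fun l => (m1.1 l).natAbs) (Finset.mem_univ i)]
              have e1 : (m.1 i).natAbs = (m1.1 i).natAbs + 1 := by simp [m1]; omega
              have e2 : ∑ l ∈ Finset.univ.erase i, (m.1 l).natAbs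
                  = ∑ l ∈ Finset.univ.erase i, (m1.1 l).natAbs :=
                Finset.sum_congr rfl fun l hl => by
                  simp [m1, Finset.ne_of_mem_erase hl]
              omega
            simp only [m1] at this ⊢
            omega
  exact fun m hm => key _ m hm rfl

lemma key_tester {m m' : Mon n} (h : key F T m = key F T m') {g : Ltr n} (hg : Tester T g) :
    wt F T g m = wt F T g m' := by
  have := congrFun h g
  simpa [key, hg] using this

/-- For core monomials, the commutation weights depend on the keys only. -/
lemma B_core {m m' m2 : Mon n} (h : key F T m = key F T m') (h2 : Core T m2) :
    F.B (vec (zt T) m2) (vec (zt T) m) = F.B (vec (zt T) m2) (vec (zt T) m') := by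
  refine core_induct (C := fun m2 =>
    F.B (vec (zt T) m2) (vec (zt T) m) = F.B (vec (zt T) m2) (vec (zt T) m')) ?_ ?_ m2 h2
  · simp [vec_zero]
  · intro g m3 hg _ ih
    have := key_tester h (Or.inl hg)
    simp only [wt] at this
    rw [vec_mulm, map_add, AddMonoidHom.add_apply, AddMonoidHom.add_apply, ih, vec_mon, this]

/-- The exponent `i`-component of the key of a monomial determines `a i` at Weyl indices. -/
lemma key_weyl {m m' : Mon n} (h : key F T m = key F T m') {i : Fin n} (hi : Weyl T i) :
    m.1 i = m'.1 i := by
  have h1 := key_tester h (Or.inl (nrm_z hi.1))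
  have h2 := key_tester h (Or.inl (nrm_z hi.2))
  rw [wt_zs, wt_zs, h1, add_left_inj, ← sub_eq_zero, ← sub_smul] at h2
  exact sub_eq_zero.1 (F.s_ne i _ h2)

/-- The key determines the weights of all surviving letters. -/
lemma key_wt {m m' : Mon n} (h : key F T m = key F T m') {g : Ltr n} (hg : ¬ T g) :
    wt F T g m = wt F T g m' := by
  by_cases ht : Tester T g
  · exact key_tester h ht
  · by_cases hn : Nrm T g
    · exact absurd (Or.inl hn) ht
    have : ∃ i, Weyl T i ∧ g = .x i := by
      by_contra hcon
      refine hn ⟨hg, fun i hi h' => ht (Or.inr ⟨i, hi, h'⟩), fun i hi h' => hcon ⟨i, hi, h'⟩⟩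
    obtain ⟨i, hi, rfl⟩ := this
    have hz : zt T i = i.castSucc := if_neg hi.1
    rw [wt_x, wt_x, hz, key_tester h (Or.inl (nrm_z hi.1)),
      key_tester h (Or.inr ⟨i, hi, rfl⟩)]

end comb
end
end PW

namespace PW
open scoped Classical
noncomputable section
variable {n : ℕ} {E : Type} [AddCommGroup E] {F : Form n E} {W : Type} [Ring W] [Algebra ℂ W]

/-! ### Multiplication of standard monomials modulo the dead letters -/

namespace QW
variable (D : QW F W)

/-- The element denoted by a letter. -/
def gW : Ltr n → W
  | .z j => D.z j
  | .y i => D.y i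
  | .x i => D.x i

lemma e_mon (g : Ltr n) : D.e (mon g) = D.gW g := by
  rcases g with j | i | i
  · have := D.z_mul_e j 0
    rw [vec_zero, map_zero, D.ω_zero, one_smul, D.e_zero, mul_one] at this
    rw [gW, this]; simp [mon]
  · have := D.y_mul_e i 0 le_rfl
    rw [vec_zero, map_zero, D.ω_zero, one_smul, D.e_zero, mul_one] at this
    rw [gW, this]; simp [mon]
  · have := D.x_mul_e i 0 le_rfl
    rw [vec_zero, map_zero, D.ω_zero, one_smul, D.e_zero, mul_one] at this
    rw [gW, this]; simp [mon]

variable {T : Ltr n → Prop}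

lemma Bzt (F : Form n E) (T : Ltr n → Prop) {i k : Fin n} (h : i ≠ k) :
    F.B (zd (zt T i)) (yd k) = F.B (zd i.castSucc) (yd k) := by
  unfold zt
  split_ifs
  · rw [F.Bzy, F.Bzy]
    have : k.castSucc < i.succ ↔ k.castSucc < i.castSucc := by
      simp only [Fin.lt_def, Fin.val_castSucc, Fin.val_succ]
      have : (i : ℕ) ≠ k := fun h' => h (Fin.ext h')
      omega
    simp only [this]
  · rfl

lemma Bzt' (F : Form n E) (T : Ltr n → Prop) {i k : Fin n} (h : i ≠ k) :
    F.B (yd k) (zd (zt T i)) = F.B (yd k) (zd i.castSucc) := by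
  rw [F.swap, Bzt F T h, ← F.swap]

variable (hT : Adm T) (hd : ∀ g, T g → D.gW g = 0)

include hT hd in
lemma qc_yx_same {i : Fin n} (hw : ¬ Weyl T i) :
    D.qc (D.y i) (D.x i) (F.B (yd i) (zd (zt T i) - yd i)) := by
  have e1 : D.br (D.y i) (D.x i) = (D.κ (-F.s i) * D.ω (-F.s i)) • D.z i.succ := by
    rw [D.skew, D.brxy]; module
  unfold zt
  rw [map_sub, F.alt, sub_zero]
  unfold Weyl at hw
  by_cases h1 : T (.z i.castSucc)
  · by_cases h2 : T (.z i.succ)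
    · rcases (hT.yx i).2 ⟨h1, h2⟩ with h | h
      · rw [show D.y i = 0 from hd _ h]; exact zero_qc _ _
      · rw [show D.x i = 0 from hd _ h]; exact qc_zero _ _
    · rw [if_pos h1, F.Byz, if_pos (Fin.castSucc_lt_succ)]
      have h0 : D.z i.castSucc = 0 := hd _ h1
      unfold qc
      rw [e1, D.yx, h0, add_zero, smul_smul]
  · have h2 : T (.z i.succ) := by tauto
    have h0 : D.z i.succ = 0 := hd _ h2
    rw [if_neg h1, F.Byz, if_neg (lt_irrefl _)]
    unfold qc
    rw [e1, h0, D.κ_zero]; simp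

include hT hd in
/-- All pairs of letters q-commute except `x_i`, `y_i` at Weyl indices. -/
lemma qc_ltr (g h : Ltr n)
    (hgh : ∀ i, Weyl T i → ¬ (g = .y i ∧ h = .x i) ∧ ¬ (g = .x i ∧ h = .y i)) :
    D.qc (D.gW g) (D.gW h) (F.B (gvec T g) (gvec T h)) := by
  have hyx : ∀ i k, ¬ (i = k ∧ Weyl T i) →
      D.qc (D.y i) (D.x k) (F.B (yd i) (zd (zt T k) - yd k)) := by
    intro i k hik
    by_cases h : i = k
    · subst h; exact D.qc_yx_same hT hd (by tauto)
    · refine (D.qc_yx i k h).congr ?_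
      rw [map_sub, map_sub, Bzt' F T (Ne.symm h)]
  have hzx : ∀ j k, D.qc (D.z j) (D.x k) (F.B (zd j) (zd (zt T k) - yd k)) := by
    intro j k
    refine (D.qc_zx j k).congr ?_
    rw [map_sub, map_sub, F.Bzz, F.Bzz]
  rcases g with j | i | i <;> rcases h with l | k | k <;> simp only [gW, gvec]
  · exact (D.qc_zz j l).congr (F.Bzz _ _).symm
  · exact D.qc_zy j k
  · exact hzx j k
  · exact (D.qc_zy l i).symm.congr (F.swap _ _).symm
  · exact D.qc_yy i k
  · exact hyx i k fun h => (hgh i h.2).1 ⟨rfl, by rw [h.1]⟩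
  · exact (hzx l i).symm.congr (F.swap _ _).symm
  · exact (hyx k i fun h => (hgh i (h.1 ▸ h.2)).2 ⟨rfl, by rw [h.1]⟩).symm.congr
      (F.swap _ _).symm
  · refine (D.qc_xx i k).congr ?_
    by_cases h : i = k
    · subst h; rw [F.alt, F.alt]
    · simp only [map_sub, AddMonoidHom.sub_apply, F.Bzz, Bzt F T h, Bzt' F T (Ne.symm h)]

include hT hd in
lemma qc_e (g : Ltr n) (m : Mon n)
    (hg : ∀ i, Weyl T i → (g = .y i → 0 ≤ m.1 i) ∧ (g = .x i → m.1 i ≤ 0)) :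
    D.qc (D.gW g) (D.e m) (wt F T g m) := by
  unfold wt vec e
  rw [← sum_toList]
  refine D.qc_hat _ _ _ _ _ _ ?_
  rintro (k | k) -
  · simp only [fac, vm, map_nsmul]
    have := D.qc_ltr hT hd g (.z k.succ) (by simp)
    exact this.pow_right _
  · simp only [fac, vm]
    rcases lt_trichotomy (m.1 k) 0 with h | h | h
    · have h1 : (m.1 k).toNat = 0 := by omega
      have h2 : (((-(m.1 k)).toNat : ℕ) : ℤ) = -(m.1 k) := by omega
      have := (D.qc_ltr hT hd g (.x k) (by
        intro i hi
        refine ⟨fun h' => ?_, by simp⟩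
        have := (hg i hi).1 h'.1
        obtain rfl : k = i := by simpa using h'.2
        omega)).pow_right (-(m.1 k)).toNat
      rw [h1, pow_zero, one_mul]
      refine this.congr ?_
      rw [gvec, ← map_nsmul, ← natCast_zsmul, ← natCast_zsmul, h2, smul_sub]
      congr 1
      rw [neg_smul _ (yd k)]; abel
    · simpa [h] using qc_one _
    · have h1 : (-(m.1 k)).toNat = 0 := by omega
      have h2 : (((m.1 k).toNat : ℕ) : ℤ) = m.1 k := by omega
      have := (D.qc_ltr hT hd g (.y k) (by
        intro i hi
        refine ⟨by simp, fun h' => ?_⟩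
        have := (hg i hi).2 h'.1
        obtain rfl : k = i := by simpa using h'.2
        omega)).pow_right (m.1 k).toNat
      rw [h1, pow_zero, mul_one, zero_smul, add_zero]
      refine this.congr ?_
      rw [gvec, ← map_nsmul, ← natCast_zsmul, h2]

include hT hd in
lemma qc_e_nrm {g : Ltr n} (hg : Nrm T g) (m : Mon n) : D.qc (D.gW g) (D.e m) (wt F T g m) :=
  D.qc_e hT hd g m fun i hi => ⟨fun h => absurd h (hg.y i hi), fun h => absurd h (hg.x i hi)⟩

include hT hd in
lemma qc_e_core (g : Ltr n) {m : Mon n} (hm : Core T m) :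
    D.qc (D.gW g) (D.e m) (wt F T g m) :=
  D.qc_e hT hd g m fun i hi => ⟨fun _ => (hm.weyl i hi).ge, fun _ => (hm.weyl i hi).le⟩

include hd in
lemma e_dead {m : Mon n} (hm : ¬ Alive T m) : D.e m = 0 := by
  by_contra hcon
  refine hm ⟨fun j hj h => hcon ?_, fun i hi h => hcon ?_, fun i hi h => hcon ?_⟩
  · refine D.e_eq_zero_of_fac (t := Sum.inl j) ?_
    rw [fac, show D.z j.succ = 0 from hd _ h, zero_pow (by omega)]
  · refine D.e_eq_zero_of_fac (t := Sum.inr i) ?_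
    rw [fac, show D.y i = 0 from hd _ h, zero_pow (by omega), zero_mul]
  · refine D.e_eq_zero_of_fac (t := Sum.inr i) ?_
    rw [fac, show D.x i = 0 from hd _ h, zero_pow (by omega), mul_zero]

/-- Changing the weights of the `x_k` changes the weight of `y_i` with a monomial only through the
exponent of `x_i`. -/
lemma B_yd_vec (F : Form n E) (T : Ltr n → Prop) (i : Fin n) (m : Mon n) :
    F.B (yd i) (vec (zt T) m) = F.B (yd i) (vec Fin.castSucc m)
      + (-(m.1 i)).toNat • F.B (yd i) (zd (zt T i)) := by
  rw [B_vec, B_vec, Fintype.sum_sum_type, Fintype.sum_sum_type, add_assoc]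
  congr 1
  rw [← Finset.add_sum_erase _ _ (Finset.mem_univ i),
    ← Finset.add_sum_erase Finset.univ (fun k => F.B (yd i) (vm Fin.castSucc m (Sum.inr k)))
      (Finset.mem_univ i), add_right_comm]
  congr 1
  · simp only [vm, map_add, map_nsmul, F.Byz i.castSucc, lt_irrefl, if_false, smul_zero, add_zero]
  · refine Finset.sum_congr rfl fun k hk => ?_
    simp only [vm, map_add, map_nsmul, Bzt' F T (Finset.ne_of_mem_erase hk)]

lemma B_zd_indep (F : Form n E) (T : Ltr n → Prop) (j : Fin (n + 1)) (m : Mon n) :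
    F.B (zd j) (vec (zt T) m) = F.B (zd j) (vec Fin.castSucc m) := by
  rw [B_zd_vec, B_zd_vec]

lemma mulm_y_neg (T : Ltr n → Prop) (i : Fin n) (m : Mon n) (h : m.1 i < 0) :
    mulm T (mon (.y i)) m = (m.1 + Pi.single i 1, m.2 + zb (zt T i)) := by
  refine vec_inj (zt T) ?_
  rw [vec_mulm, vec_mon, gvec]
  have h1 := vec_sub_y (zt T) (m.1 + Pi.single i 1, m.2) i (by simp; omega)
  have h2 := vec_add_zb (zt T) (m.1 + Pi.single i 1, m.2) (zt T i)
  simp only [add_sub_cancel_right] at h1 h2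
  rw [h2, h1]; abel

lemma mulm_x_pos (T : Ltr n → Prop) (i : Fin n) (m : Mon n) (h : 0 < m.1 i) :
    mulm T (mon (.x i)) m = (m.1 - Pi.single i 1, m.2 + zb (zt T i)) := by
  refine vec_inj (zt T) ?_
  rw [vec_mulm, vec_mon, gvec]
  have h1 := vec_add_y (zt T) (m.1 - Pi.single i 1, m.2) i (by simp; omega)
  have h2 := vec_add_zb (zt T) (m.1 - Pi.single i 1, m.2) (zt T i)
  simp only [sub_add_cancel] at h1 h2
  rw [h2, h1]; abel

lemma mulm_z (T : Ltr n → Prop) (j : Fin (n + 1)) (m : Mon n) :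
    mulm T (mon (.z j)) m = (m.1, m.2 + zb j) := by
  refine vec_inj (zt T) ?_
  rw [vec_mulm, vec_mon, gvec, vec_add_zb]

lemma mulm_y_pos (T : Ltr n → Prop) (i : Fin n) (m : Mon n) (h : 0 ≤ m.1 i) :
    mulm T (mon (.y i)) m = (m.1 + Pi.single i 1, m.2) := by
  refine vec_inj (zt T) ?_
  rw [vec_mulm, vec_mon, gvec, vec_add_y _ _ _ h]

lemma mulm_x_neg (T : Ltr n → Prop) (i : Fin n) (m : Mon n) (h : m.1 i ≤ 0) :
    mulm T (mon (.x i)) m = (m.1 - Pi.single i 1, m.2) := by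
  refine vec_inj (zt T) ?_
  rw [vec_mulm, vec_mon, gvec, vec_sub_y _ _ _ h]

lemma z_mul (T : Ltr n → Prop) (j : Fin (n + 1)) (m : Mon n) :
    D.z j * D.e m = D.ω (wt F T (.z j) m) • D.e (mulm T (mon (.z j)) m) := by
  rw [mulm_z, wt, gvec, B_zd_indep, D.z_mul_e]

lemma y_mul_pos (T : Ltr n → Prop) (i : Fin n) (m : Mon n) (h : 0 ≤ m.1 i) :
    D.y i * D.e m = D.ω (wt F T (.y i) m) • D.e (mulm T (mon (.y i)) m) := by
  have : (-(m.1 i)).toNat = 0 := by omega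
  rw [mulm_y_pos T i m h, wt, gvec, B_yd_vec, this, zero_smul, add_zero, D.y_mul_e i m h]

lemma x_mul_neg (T : Ltr n → Prop) (i : Fin n) (m : Mon n) (h : m.1 i ≤ 0) :
    D.x i * D.e m = D.ω (wt F T (.x i) m) • D.e (mulm T (mon (.x i)) m) := by
  have h1 : (((-(m.1 i)).toNat : ℕ) : ℤ) = -(m.1 i) := by omega
  rw [mulm_x_neg T i m h, D.x_mul_e i m h, wt_x]
  congr 2
  unfold wt gvec
  rw [B_yd_vec, B_zd_indep, map_sub, AddMonoidHom.sub_apply, ← natCast_zsmul, h1]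
  unfold zt
  split_ifs
  · rw [B_zd_succ, F.Byz, if_pos (Fin.castSucc_lt_succ)]
    simp only [smul_neg, neg_smul, neg_neg]
    abel
  · rw [F.Byz, if_neg (lt_irrefl _)]; simp

include hT hd in
lemma mul_gen {g : Ltr n} (hg : Nrm T g) {m : Mon n} (hm : Alive T m) :
    D.gW g * D.e m = D.ω (wt F T g m) • D.e (mulm T (mon g) m) := by
  rcases g with j | i | i
  · exact D.z_mul T j m
  · rcases le_or_gt 0 (m.1 i) with h | h
    · exact D.y_mul_pos T i m h
    · rw [mulm_y_neg T i m h, gW, D.y_mul_e_neg i m h, wt, gvec, B_yd_vec]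
      have h1 : (((-(m.1 i)).toNat : ℕ) : ℤ) = -(m.1 i) := by omega
      have hz := not_T_zt hT hg.ne (hm.x i h)
      have hw : ¬ Weyl T i := fun hw => hg.y i hw rfl
      rw [← natCast_zsmul, h1]
      unfold zt
      split_ifs with hc
      · have : D.e (m.1 + Pi.single i 1, m.2 + zb i.castSucc) = 0 := by
          have h2 := D.z_mul_e i.castSucc (m.1 + Pi.single i 1, m.2)
          rw [show D.z i.castSucc = 0 from hd _ hc, zero_mul] at h2
          exact (smul_eq_zero.1 h2.symm).resolve_left (D.ω_ne _)
        rw [this, add_zero, smul_smul, ← D.ω_add, F.Byz, if_pos (Fin.castSucc_lt_succ)]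
        simp
      · have hs : T (.z i.succ) := by unfold Weyl at hw; tauto
        have : D.e (m.1 + Pi.single i 1, m.2 + zb i.succ) = 0 := by
          have h2 := D.z_mul_e i.succ (m.1 + Pi.single i 1, m.2)
          rw [show D.z i.succ = 0 from hd _ hs, zero_mul] at h2
          exact (smul_eq_zero.1 h2.symm).resolve_left (D.ω_ne _)
        rw [this, smul_zero, zero_add, F.Byz, if_neg (lt_irrefl _)]
        simp
  · rcases le_or_gt (m.1 i) 0 with h | h
    · exact D.x_mul_neg T i m h
    · rw [mulm_x_pos T i m h, gW, D.x_mul_e_pos i m h, wt_x]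
      unfold wt gvec
      rw [B_yd_vec, B_zd_indep, map_sub, AddMonoidHom.sub_apply]
      have h1 : (-(m.1 i)).toNat = 0 := by omega
      have hz := not_T_zt hT (hm.y i h) hg.ne
      have hw : ¬ Weyl T i := fun hw => hg.x i hw rfl
      rw [h1, zero_smul, add_zero]
      unfold zt
      split_ifs with hc
      · have : D.e (m.1 - Pi.single i 1, m.2 + zb i.castSucc) = 0 := by
          have h2 := D.z_mul_e i.castSucc (m.1 - Pi.single i 1, m.2)
          rw [show D.z i.castSucc = 0 from hd _ hc, zero_mul] at h2
          exact (smul_eq_zero.1 h2.symm).resolve_left (D.ω_ne _)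
        rw [this, add_zero, smul_smul, ← D.ω_add, B_zd_succ]
        congr 2
        abel
      · have hs : T (.z i.succ) := by unfold Weyl at hw; tauto
        have : D.e (m.1 - Pi.single i 1, m.2 + zb i.succ) = 0 := by
          have h2 := D.z_mul_e i.succ (m.1 - Pi.single i 1, m.2)
          rw [show D.z i.succ = 0 from hd _ hs, zero_mul] at h2
          exact (smul_eq_zero.1 h2.symm).resolve_left (D.ω_ne _)
        rw [this, smul_zero, zero_add]

include hT hd in
lemma mul_core {m m' : Mon n} (hm : Core T m) (hm' : Alive T m') :
    D.e m * D.e m' = D.ω (F.B (vec (zt T) m) (vec (zt T) m')) • D.e (mulm T m m') := by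
  refine core_induct (C := fun m => D.e m * D.e m' =
    D.ω (F.B (vec (zt T) m) (vec (zt T) m')) • D.e (mulm T m m')) ?_ ?_ m hm
  · simp [vec_zero, zero_mulm, D.e_zero, D.ω_zero]
  · intro g m1 hg hm1 ih
    have h1 := D.mul_gen hT hd hg hm1.alive
    have h2 : D.e (mulm T (mon g) m1) = D.ω (-wt F T g m1) • (D.gW g * D.e m1) := by
      rw [h1, smul_smul, D.ω_neg_mul, one_smul]
    rw [h2, smul_mul_assoc, mul_assoc, ih, mul_smul_comm,
      D.mul_gen hT hd hg (hm1.alive.mulm hT hm'), smul_smul, smul_smul, ← D.ω_add, ← D.ω_add,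
      mulm_assoc, vec_mulm, wt_mulm, vec_mon]
    congr 2
    simp only [wt, map_add, AddMonoidHom.add_apply]
    abel

end QW
end
end PW

namespace PW
open scoped Classical
noncomputable section
variable {n : ℕ} {E : Type} [AddCommGroup E] {F : Form n E} {W : Type} [Ring W] [Algebra ℂ W]

/-! ### Separating weights -/

/-- Multiplication of a finitely supported function by a function. -/
def mulBy {ι : Type} (t : ι → ℂ) : (ι →₀ ℂ) →ₗ[ℂ] (ι →₀ ℂ) :=
  Finsupp.linearCombination ℂ fun m => Finsupp.single m (t m)

lemma mulBy_apply {ι : Type} (t : ι → ℂ) (f : ι →₀ ℂ) (m : ι) : mulBy t f m = t m * f m := by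
  induction f using Finsupp.induction_linear with
  | zero => simp
  | add f g hf hg => simp [hf, hg, mul_add]
  | single a c =>
    simp only [mulBy, Finsupp.linearCombination_single, Finsupp.smul_single, smul_eq_mul,
      Finsupp.single_apply]
    split_ifs with h
    · rw [h, mul_comm]
    · simp

/-- A subspace stable under multiplication by `t` is stable under restriction to the level sets
of `t`: use a polynomial interpolating the indicator function. -/
lemma extract {ι : Type} (C : Submodule ℂ (ι →₀ ℂ)) (t : ι → ℂ)
    (hC : ∀ f ∈ C, mulBy t f ∈ C) {f : ι →₀ ℂ} (hf : f ∈ C) (c : ℂ) :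
    f.filter (fun m => t m = c) ∈ C := by
  have h1 : ∀ p : Polynomial ℂ, (Polynomial.aeval (mulBy t) p) f ∈ C ∧
      ∀ m, (Polynomial.aeval (mulBy t) p) f m = p.eval (t m) * f m := by
    intro p
    induction p using Polynomial.induction_on' with
    | add p q hp hq =>
      simp only [map_add, LinearMap.add_apply, Finsupp.add_apply, Polynomial.eval_add]
      exact ⟨C.add_mem hp.1 hq.1, fun m => by rw [hp.2, hq.2, add_mul]⟩
    | monomial k a =>
      have : ∀ k : ℕ, (mulBy t ^ k) f ∈ C ∧ ∀ m, (mulBy t ^ k) f m = t m ^ k * f m := by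
        intro k
        induction k with
        | zero => simpa using hf
        | succ k ih =>
          rw [pow_succ', Module.End.mul_apply]
          exact ⟨hC _ ih.1, fun m => by rw [mulBy_apply, ih.2, pow_succ']; ring⟩
      simp only [Polynomial.aeval_monomial, Module.End.mul_apply, Module.algebraMap_end_apply,
        Polynomial.eval_monomial]
      exact ⟨C.smul_mem _ (this k).1, fun m => by
        rw [Finsupp.smul_apply, (this k).2, smul_eq_mul, mul_assoc]⟩
  let p := Lagrange.interpolate (f.support.image t) id fun v => if v = c then (1 : ℂ) else 0
  have h2 : (Polynomial.aeval (mulBy t) p) f = f.filter (fun m => t m = c) := by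
    ext m
    rw [(h1 p).2 m, Finsupp.filter_apply]
    by_cases hm : m ∈ f.support
    · have := Lagrange.eval_interpolate_at_node (s := f.support.image t) (v := id)
        (fun v => if v = c then (1 : ℂ) else 0) (Function.injective_id.injOn)
        (Finset.mem_image_of_mem t hm)
      simp only [id] at this
      rw [this]
      split_ifs <;> simp
    · rw [Finsupp.notMem_support_iff.1 hm]; simp
  exact h2 ▸ (h1 p).1

lemma filter_decomp {ι α : Type} (p : ι → α) (f : ι →₀ ℂ) :
    f = ∑ v ∈ f.support.image p, f.filter (fun m => p m = v) := by
  ext m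
  rw [Finsupp.finsetSum_apply]
  simp only [Finsupp.filter_apply]
  rw [Finset.sum_ite_eq]
  split_ifs with h
  · rfl
  · by_contra hne
    exact h (Finset.mem_image_of_mem p (Finsupp.mem_support_iff.2 hne))

/-- A subspace contains `f` as soon as it contains all restrictions of `f` to level sets. -/
lemma mem_of_filter {ι α : Type} (K : Submodule ℂ (ι →₀ ℂ)) (p : ι → α) {f : ι →₀ ℂ}
    (h : ∀ v, f.filter (fun m => p m = v) ∈ K) : f ∈ K := by
  rw [filter_decomp p f]
  exact K.sum_mem fun v _ => h v

lemma filter_comm {ι : Type} (p q : ι → Prop) (f : ι →₀ ℂ) :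
    (f.filter p).filter q = (f.filter q).filter p := by
  ext m
  simp only [Finsupp.filter_apply]
  split_ifs <;> rfl

namespace QW
variable (D : QW F W)

lemma br_pow (g g' z : W) (c : ℂ) (e0 : E) (hbr : D.br g' g = c • z) (hz : D.qc z g e0) (M : ℕ) :
    D.κ (-e0) • D.br g' (g ^ (M + 1)) = (c * D.κ (-((M + 1) • e0))) • (g ^ M * z) := by
  induction M with
  | zero => simp [hbr, smul_smul, mul_comm]
  | succ M ih =>
    rw [pow_succ, D.leib, smul_add, ← smul_mul_assoc, ih, hbr, smul_mul_assoc, mul_assoc, hz.swap',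
      succ_nsmul _ (M + 1), neg_add_rev, D.κ_add (-e0)]
    simp only [mul_smul_comm, smul_smul, ← mul_assoc, ← pow_succ]
    rw [show -(-e0 + -e0) = e0 + e0 by abel]
    module

/-- If `g'` acts on powers of `g` like a derivation with nonvanishing coefficients, then powers of
`g` can be cancelled. -/
lemma descent {g g' z H : W} {c : ℂ} {e0 ε ε' : E} (hbr : D.br g' g = c • z) (hc : c ≠ 0)
    (hz : D.qc z g e0) (he : ∀ k : ℕ, k ≠ 0 → D.κ (-(k • e0)) ≠ 0)
    (hcan : ∀ f, z * f = 0 → f = 0) (hg' : D.qc g' H ε) (hzH : D.qc z H ε') (k : ℕ)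
    (hk : H * g ^ k = 0) : H = 0 := by
  induction k with
  | zero => simpa using hk
  | succ k ih =>
    refine ih (hcan _ ?_)
    have h1 : D.br g' (H * g ^ (k + 1)) = 0 := by rw [hk, map_zero]
    rw [D.leib, hg', smul_mul_assoc, mul_assoc, hk, mul_zero, smul_zero, zero_add] at h1
    have h2 := congrArg (fun v => H * v) (D.br_pow g g' z c e0 hbr hz k)
    simp only [mul_smul_comm, h1, smul_zero] at h2
    have h3 := (smul_eq_zero.1 h2.symm).resolve_left (mul_ne_zero hc (he _ (by omega)))
    have h4 := (hzH.mul_right (hz.pow_right k)).swap'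
    rw [h4, mul_assoc, h3, smul_zero]

lemma weyl_extract {ι : Type} {g g' z : W} {c : ℂ} {e0 w wz : E} (hbr : D.br g' g = c • z)
    (hc : c ≠ 0) (hz : D.qc z g e0) (he : ∀ k : ℕ, k ≠ 0 → D.κ (-(k • e0)) ≠ 0)
    (hcan : ∀ f, z * f = 0 → f = 0) (e' : ι → W) (t : ι → E) (S : Set ι)
    (h1 : ∀ m ∈ S, D.qc g (e' m) (t m)) (h2 : ∀ m ∈ S, D.qc g' (e' m) (w - t m))
    (h3 : ∀ m ∈ S, D.qc z (e' m) wz) (f : ι →₀ ℂ) (hS : ∀ m ∈ f.support, m ∈ S) (k : ℕ)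
    (hk : g ^ k * Finsupp.linearCombination ℂ e' f = 0) (χ : E) :
    Finsupp.linearCombination ℂ e' (f.filter fun m => t m = χ) = 0 := by
  let C : Submodule ℂ (ι →₀ ℂ) :=
    { carrier := {f | (∀ m ∈ f.support, m ∈ S) ∧
        ∃ N : ℕ, g ^ N * Finsupp.linearCombination ℂ e' f = 0}
      zero_mem' := ⟨by simp, 0, by simp⟩
      add_mem' := by
        rintro a b ⟨ha, N, hN⟩ ⟨hb, M, hM⟩
        refine ⟨fun m hm => ?_, N + M, ?_⟩
        · rcases Finset.mem_union.1 (Finsupp.support_add hm) with h | h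
          · exact ha m h
          · exact hb m h
        · have e1 : g ^ (N + M) * Finsupp.linearCombination ℂ e' a = 0 := by
            rw [add_comm, pow_add, mul_assoc, hN, mul_zero]
          have e2 : g ^ (N + M) * Finsupp.linearCombination ℂ e' b = 0 := by
            rw [pow_add, mul_assoc, hM, mul_zero]
          rw [map_add, mul_add, e1, e2, add_zero]
      smul_mem' := by
        rintro a f ⟨hf, N, hN⟩
        refine ⟨fun m hm => hf m (Finsupp.support_smul hm), N, ?_⟩
        rw [map_smul, mul_smul_comm, hN, smul_zero] }
  have hC : ∀ f ∈ C, mulBy (fun m => D.κ (t m)) f ∈ C := by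
    rintro f ⟨hf, N, hN⟩
    refine ⟨fun m hm => hf m ?_, N + 1, ?_⟩
    · rw [Finsupp.mem_support_iff, mulBy_apply] at hm
      exact Finsupp.mem_support_iff.2 (right_ne_zero_of_mul hm)
    · have e1 : D.br g (Finsupp.linearCombination ℂ e' f)
          = g * Finsupp.linearCombination ℂ e' (mulBy (fun m => D.κ (t m)) f) := by
        have : mulBy (fun m => D.κ (t m)) f = f.sum fun m a => Finsupp.single m (D.κ (t m) * a) := by
          rw [mulBy, Finsupp.linearCombination_apply]
          simp [mul_comm]
        rw [this, Finsupp.linearCombination_apply, Finsupp.sum, Finsupp.sum, map_sum, map_sum,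
          Finset.mul_sum]
        refine Finset.sum_congr rfl fun m hm => ?_
        rw [map_smul, h1 m (hf m hm), Finsupp.linearCombination_single, mul_smul_comm, smul_smul,
          mul_comm]
      have e2 : D.br g (g ^ N * Finsupp.linearCombination ℂ e' f) = 0 := by rw [hN, map_zero]
      have e3 : D.br g (g ^ N) = 0 := by
        have := (qc_self (D := D) g).pow_right N
        simpa [qc, D.κ_zero] using this
      rw [D.leib, e3, zero_mul, zero_add, e1, ← mul_assoc, ← pow_succ] at e2
      exact e2
  have hf : f ∈ C := ⟨hS, k, hk⟩
  obtain ⟨hS', N, hN⟩ := extract C (fun m => D.κ (t m)) hC hf (D.κ χ)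
  have hfil : (f.filter fun m => D.κ (t m) = D.κ χ) = f.filter fun m => t m = χ := by
    congr 1; ext m; exact D.κ_inj.eq_iff
  rw [hfil] at hS' hN
  set f' := f.filter fun m => t m = χ with hf'
  have hsupp : ∀ m ∈ f'.support, t m = χ := fun m hm => by
    rw [hf', Finsupp.support_filter] at hm
    exact (Finset.mem_filter.1 hm).2
  have hlc : ∀ (g : W) (ε : E), (∀ m ∈ f'.support, D.qc g (e' m) ε) →
      D.qc g (Finsupp.linearCombination ℂ e' f') ε := by
    intro g ε h
    rw [Finsupp.linearCombination_apply, Finsupp.sum]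
    exact qc.sum_right _ _ fun m hm => (h m hm).smul_right _
  have q1 : D.qc g (Finsupp.linearCombination ℂ e' f') χ :=
    hlc _ _ fun m hm => hsupp m hm ▸ h1 m (hS' m hm)
  have q2 : D.qc g' (Finsupp.linearCombination ℂ e' f') (w - χ) :=
    hlc _ _ fun m hm => hsupp m hm ▸ h2 m (hS' m hm)
  have q3 : D.qc z (Finsupp.linearCombination ℂ e' f') wz :=
    hlc _ _ fun m hm => h3 m (hS' m hm)
  refine D.descent hbr hc hz he hcan q2 q3 N ?_
  rw [(q1.pow_left N).swap, hN, smul_zero]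

end QW

/-! ### Stripping Weyl variables and the structure of ideals saturated at the normal letters -/

/-- Remove the `y_i`, `x_i` part of a monomial. -/
def st (i : Fin n) (m : Mon n) : Mon n := (Function.update m.1 i 0, m.2)

lemma st_apply (i : Fin n) (m : Mon n) : (st i m).1 i = 0 := by simp [st]

lemma eq_st (i : Fin n) (m : Mon n) : m = ((st i m).1 + Pi.single i (m.1 i), (st i m).2) := by
  refine Prod.ext ?_ rfl
  ext k
  by_cases h : k = i
  · subst h; simp [st]
  · simp [st, h]

lemma vec_add_y_nat (ζ : Fin n → Fin (n + 1)) (m : Mon n) (i : Fin n) (h : 0 ≤ m.1 i) (k : ℕ) :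
    vec ζ (m.1 + Pi.single i (k : ℤ), m.2) = k • yd i + vec ζ m := by
  induction k with
  | zero => simp
  | succ k ih =>
    have := vec_add_y ζ (m.1 + Pi.single i (k : ℤ), m.2) i (by simp; omega)
    rw [ih, add_assoc, ← Pi.single_add] at this
    push_cast
    rw [this, succ_nsmul]; abel

lemma vec_sub_y_nat (ζ : Fin n → Fin (n + 1)) (m : Mon n) (i : Fin n) (h : m.1 i ≤ 0) (k : ℕ) :
    vec ζ (m.1 + Pi.single i (-(k : ℤ)), m.2) = k • (zd (ζ i) - yd i) + vec ζ m := by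
  induction k with
  | zero => simp
  | succ k ih =>
    have := vec_sub_y ζ (m.1 + Pi.single i (-(k : ℤ)), m.2) i (by simp; omega)
    rw [ih, add_sub_assoc, ← Pi.single_sub] at this
    rw [show (-((k + 1 : ℕ) : ℤ)) = -(k : ℤ) - 1 by push_cast; ring]
    rw [this, succ_nsmul]; abel

lemma vec_st_pos (ζ : Fin n → Fin (n + 1)) (m : Mon n) (i : Fin n) (h : 0 ≤ m.1 i) :
    vec ζ m = (m.1 i).toNat • yd i + vec ζ (st i m) := by
  rw [← vec_add_y_nat ζ (st i m) i (st_apply i m).ge, Int.toNat_of_nonneg h, ← eq_st]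

lemma vec_st_neg (ζ : Fin n → Fin (n + 1)) (m : Mon n) (i : Fin n) (h : m.1 i ≤ 0) :
    vec ζ m = (-(m.1 i)).toNat • (zd (ζ i) - yd i) + vec ζ (st i m) := by
  rw [← vec_sub_y_nat ζ (st i m) i (st_apply i m).le, Int.toNat_of_nonneg (by omega), neg_neg,
    ← eq_st]

lemma wt_st {T : Ltr n → Prop} {i : Fin n} (hw : Weyl T i) (m : Mon n) :
    wt F T (.y i) (st i m) = wt F T (.y i) m ∧ wt F T (.x i) (st i m) = wt F T (.x i) m ∧
      wt F T (.z i.castSucc) (st i m) = wt F T (.z i.castSucc) m := by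
  have hz : zt T i = i.castSucc := if_neg hw.1
  have e1 : F.B (yd i) (zd i.castSucc) = 0 := by rw [F.Byz, if_neg (lt_irrefl _)]
  have e2 : F.B (zd i.castSucc) (yd i) = 0 := by rw [F.Bzy, if_neg (lt_irrefl _)]
  rw [wt_x, wt_x, hz]
  have h1 : wt F T (.y i) (st i m) = wt F T (.y i) m := by
    unfold wt gvec
    rcases le_total 0 (m.1 i) with h | h
    · rw [vec_st_pos _ m i h]; simp only [map_add, map_nsmul, F.alt, smul_zero, zero_add]
    · rw [vec_st_neg _ m i h, hz]
      simp only [map_add, map_nsmul, map_sub, F.alt, e1, sub_zero, smul_zero, zero_add]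
  have h2 : wt F T (.z i.castSucc) (st i m) = wt F T (.z i.castSucc) m := by
    unfold wt gvec
    rcases le_total 0 (m.1 i) with h | h
    · rw [vec_st_pos _ m i h]; simp only [map_add, map_nsmul, e2, smul_zero, zero_add]
    · rw [vec_st_neg _ m i h, hz]
      simp only [map_add, map_nsmul, map_sub, F.Bzz, e2, sub_zero, smul_zero, zero_add]
  exact ⟨h1, by rw [h1, h2], h2⟩

namespace QW
variable (D : QW F W)

lemma y_pow_mul (T : Ltr n → Prop) (i : Fin n) (m : Mon n) (h : 0 ≤ m.1 i) (k : ℕ) :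
    D.y i ^ k * D.e m = D.ω (k • wt F T (.y i) m) • D.e (m.1 + Pi.single i (k : ℤ), m.2) := by
  induction k with
  | zero => simp [D.ω_zero]
  | succ k ih =>
    have hk : 0 ≤ (m.1 + Pi.single i (k : ℤ) : Fin n → ℤ) i := by simp; omega
    have h1 := D.y_mul_pos T i (m.1 + Pi.single i (k : ℤ), m.2) hk
    rw [mulm_y_pos T i _ hk] at h1
    have h2 : wt F T (.y i) (m.1 + Pi.single i (k : ℤ), m.2) = wt F T (.y i) m := by
      unfold wt gvec
      rw [vec_add_y_nat _ m i h]; simp only [map_add, map_nsmul, F.alt, smul_zero, zero_add]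
    rw [pow_succ', mul_assoc, ih, mul_smul_comm, h1, h2, smul_smul, ← D.ω_add, ← succ_nsmul,
      add_assoc, ← Pi.single_add]
    push_cast
    rfl

lemma x_pow_mul (T : Ltr n → Prop) (i : Fin n) (m : Mon n) (h : m.1 i ≤ 0) (k : ℕ) :
    D.x i ^ k * D.e m = D.ω (k • wt F T (.x i) m) • D.e (m.1 + Pi.single i (-(k : ℤ)), m.2) := by
  induction k with
  | zero => simp [D.ω_zero]
  | succ k ih =>
    have hk : (m.1 + Pi.single i (-(k : ℤ)) : Fin n → ℤ) i ≤ 0 := by simp; omega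
    have h1 := D.x_mul_neg T i (m.1 + Pi.single i (-(k : ℤ)), m.2) hk
    rw [mulm_x_neg T i _ hk] at h1
    have h2 : wt F T (.x i) (m.1 + Pi.single i (-(k : ℤ)), m.2) = wt F T (.x i) m := by
      unfold wt gvec
      rw [vec_sub_y_nat _ m i h, map_add, map_nsmul, F.alt, smul_zero, zero_add]
    rw [pow_succ', mul_assoc, ih, mul_smul_comm, h1, h2, smul_smul, ← D.ω_add, ← succ_nsmul,
      add_sub_assoc, ← Pi.single_sub,
      show (-((k + 1 : ℕ) : ℤ)) = -(k : ℤ) - 1 by push_cast; ring]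

lemma e_st_pos (T : Ltr n → Prop) (i : Fin n) (m : Mon n) (h : 0 ≤ m.1 i) :
    D.y i ^ (m.1 i).toNat * D.e (st i m)
      = D.ω ((m.1 i).toNat • wt F T (.y i) (st i m)) • D.e m := by
  rw [D.y_pow_mul T i (st i m) (st_apply i m).ge, Int.toNat_of_nonneg h, ← eq_st]

lemma e_st_neg (T : Ltr n → Prop) (i : Fin n) (m : Mon n) (h : m.1 i ≤ 0) :
    D.x i ^ (-(m.1 i)).toNat * D.e (st i m)
      = D.ω ((-(m.1 i)).toNat • wt F T (.x i) (st i m)) • D.e m := by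
  rw [D.x_pow_mul T i (st i m) (st_apply i m).le, Int.toNat_of_nonneg (by omega), neg_neg, ← eq_st]

end QW
end
end PW

namespace PW
open scoped Classical
noncomputable section
variable {n : ℕ} {E : Type} [AddCommGroup E] {F : Form n E} {W : Type} [Ring W] [Algebra ℂ W]

lemma filter_key {T : Ltr n → Prop} (C : Submodule ℂ (Mon n →₀ ℂ))
    (h : ∀ f ∈ C, ∀ g, Tester T g → ∀ c : E, f.filter (fun m => wt F T g m = c) ∈ C)
    {f : Mon n →₀ ℂ} (hf : f ∈ C) (χ : Ltr n → E) : f.filter (fun m => key F T m = χ) ∈ C := by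
  have h' : ∀ f ∈ C, ∀ g, ∀ c : E, f.filter (fun m => key F T m g = c) ∈ C := by
    intro f hf g c
    unfold key
    by_cases hg : Tester T g
    · simpa only [if_pos hg] using h f hf g hg c
    · simp only [if_neg hg]
      by_cases hc : 0 = c
      · rw [(Finsupp.filter_eq_self_iff _ _).2 fun _ _ => hc]; exact hf
      · rw [(Finsupp.filter_eq_zero_iff _ _).2 fun _ h => absurd h hc]; exact C.zero_mem
  have := Fintype.ofFinite (Ltr n)
  have h2 : ∀ S : Finset (Ltr n), f.filter (fun m => ∀ g ∈ S, key F T m g = χ g) ∈ C := by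
    intro S
    induction S using Finset.induction_on with
    | empty => rw [(Finsupp.filter_eq_self_iff _ _).2 fun _ _ => by simp]; exact hf
    | insert g S _ ih =>
      have := h' _ ih g (χ g)
      convert this using 1
      ext m
      simp only [Finsupp.filter_apply, Finset.forall_mem_insert]
      split_ifs <;> first | rfl | tauto
  have := h2 Finset.univ
  convert this using 3 with m
  simp [funext_iff]

/-- All monomials of `f` have key `χ`. -/
def HasKey (F : Form n E) (T : Ltr n → Prop) (χ : Ltr n → E) (f : Mon n →₀ ℂ) : Prop :=
  ∀ m ∈ f.support, key F T m = χ

lemma hasKey_filter (T : Ltr n → Prop) (χ : Ltr n → E) (f : Mon n →₀ ℂ) :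
    HasKey F T χ (f.filter fun m => key F T m = χ) := fun m hm => by
  rw [Finsupp.support_filter] at hm
  exact (Finset.mem_filter.1 hm).2

namespace QW

/-- The letters of `T` vanish, and the remaining normal letters can be cancelled. -/
structure Sat (D : QW F W) (T : Ltr n → Prop) : Prop where
  adm : Adm T
  dead : ∀ g, T g → D.gW g = 0
  cancel : ∀ g, Nrm T g → ∀ f, D.gW g * f = 0 → f = 0

variable (D : QW F W) {T : Ltr n → Prop}

lemma ev_eq (f : Mon n →₀ ℂ) : D.ev f = f.sum fun m c => c • D.e m :=
  Finsupp.linearCombination_apply _ _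

lemma ker_filter_nrm (hS : D.Sat T) {g : Ltr n} (hg : Nrm T g) {f : Mon n →₀ ℂ}
    (hf : D.ev f = 0) (c : E) : D.ev (f.filter fun m => wt F T g m = c) = 0 := by
  have := extract (LinearMap.ker D.ev) (fun m => D.κ (wt F T g m)) (fun f hf => ?_) hf (D.κ c)
  · simp only [D.κ_inj.eq_iff] at this
    exact this
  · have h1 : D.br (D.gW g) (D.ev f) = D.gW g * D.ev (mulBy (fun m => D.κ (wt F T g m)) f) := by
      clear hf
      induction f using Finsupp.induction_linear with
      | zero => simp
      | add f g hf hg => simp only [map_add, hf, hg, mul_add]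
      | single m a =>
        have h : D.br (D.gW g) (D.e m) = _ := D.qc_e_nrm hS.adm hS.dead hg m
        simp only [mulBy, ev_single, Finsupp.linearCombination_single, Finsupp.smul_single,
          map_smul, h, smul_eq_mul, mul_smul_comm, smul_smul]
    have hf' : D.ev f = 0 := hf
    rw [hf', map_zero] at h1
    exact hS.cancel g hg _ h1.symm

/-- The power of `y_i` or `x_i` with exponent `k`. -/
def U (i : Fin n) (k : ℤ) : W := D.y i ^ k.toNat * D.x i ^ (-k).toNat

/-- The commutation weight of `U i k` with a monomial. -/
def uw (F : Form n E) (T : Ltr n → Prop) (i : Fin n) (k : ℤ) (m : Mon n) : E :=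
  k.toNat • wt F T (.y i) m + (-k).toNat • wt F T (.x i) m

lemma U_mul {i : Fin n} (hw : Weyl T i) (m : Mon n) :
    D.U i (m.1 i) * D.e (st i m) = D.ω (uw F T i (m.1 i) m) • D.e m := by
  have hst := wt_st (F := F) hw m
  unfold U uw
  rcases le_total 0 (m.1 i) with h | h
  · have := D.e_st_pos T i m h
    rw [hst.1] at this
    simpa [Int.toNat_of_nonpos (show -(m.1 i) ≤ 0 by omega)] using this
  · have := D.e_st_neg T i m h
    rw [hst.2.1] at this
    simpa [Int.toNat_of_nonpos h] using this

lemma ev_U {i : Fin n} (hw : Weyl T i) (k : ℤ) {f : Mon n →₀ ℂ} (hf : ∀ m ∈ f.support, m.1 i = k) :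
    D.ev f = D.U i k * Finsupp.linearCombination ℂ
      (fun m => D.ω (-uw F T i k m) • D.e (st i m)) f := by
  rw [D.ev_eq, Finsupp.linearCombination_apply, Finsupp.sum, Finsupp.sum, Finset.mul_sum]
  refine Finset.sum_congr rfl fun m hm => ?_
  have := D.U_mul hw m
  rw [hf m hm] at this
  rw [mul_smul_comm, mul_smul_comm, this, smul_smul (D.ω _), D.ω_neg_mul, one_smul]

lemma wt_st_succ {i : Fin n} (hw : Weyl T i) (m : Mon n) :
    wt F T (.z i.succ) (st i m) = wt F T (.z i.castSucc) m := by
  rw [wt_zs, st_apply, zero_smul, zero_add, (wt_st hw m).2.2]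

lemma wt_x_weyl {i : Fin n} (hw : Weyl T i) (m : Mon n) :
    wt F T (.x i) m = wt F T (.z i.castSucc) m - wt F T (.y i) m := by
  rw [wt_x, show zt T i = i.castSucc from if_neg hw.1]

/-- The powers of `y_i` and `x_i` can be cancelled weight by weight, at a Weyl index `i`. -/
lemma strip_aux (hS : D.Sat T) {i : Fin n} (hw : Weyl T i) (k : ℤ) (wz : E)
    {f : Mon n →₀ ℂ} (hf : ∀ m ∈ f.support, m.1 i = k ∧ wt F T (.z i.castSucc) m = wz)
    (h0 : D.ev f = 0) (χ : E) :
    Finsupp.linearCombination ℂ (fun m => D.ω (-uw F T i k m) • D.e (st i m))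
      (f.filter fun m => wt F T (.y i) m = χ) = 0 := by
  rw [D.ev_U hw k fun m hm => (hf m hm).1] at h0
  have q1 : ∀ m, D.qc (D.y i) (D.e (st i m)) (wt F T (.y i) m) := fun m => by
    have := D.qc_e hS.adm hS.dead (.y i) (st i m) fun j _ => ⟨fun h => ?_, fun h => (by cases h)⟩
    · exact this.congr (wt_st hw m).1
    · cases h; exact (st_apply i m).ge
  have q2 : ∀ m, D.qc (D.x i) (D.e (st i m)) (wt F T (.x i) m) := fun m => by
    have := D.qc_e hS.adm hS.dead (.x i) (st i m) fun j _ => ⟨fun h => (by cases h), fun h => ?_⟩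
    · exact this.congr (wt_st hw m).2.1
    · cases h; exact (st_apply i m).le
  have q3 : ∀ m, D.qc (D.z i.succ) (D.e (st i m)) (wt F T (.z i.castSucc) m) := fun m =>
    (D.qc_e_nrm hS.adm hS.dead (nrm_z hw.2) (st i m)).congr (wt_st_succ hw m)
  have hzz := hS.cancel _ (nrm_z hw.2)
  have ec : D.κ (-F.s i) * D.ω (-F.s i) ≠ 0 := by
    refine mul_ne_zero ?_ (D.ω_ne _)
    have := D.κ_s_ne i (-1) (by norm_num)
    simpa using this
  have e0 : F.B (zd i.succ) (yd i) = F.s i := by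
    rw [F.Bzy, if_pos (Fin.castSucc_lt_succ)]
  have e1 : F.B (zd i.succ) (zd i.castSucc - yd i) = -F.s i := by
    rw [map_sub, F.Bzz, e0, zero_sub]
  rcases le_total 0 k with h | h
  · refine D.weyl_extract (w := wz) (wz := wz) (D.brxy i) (neg_ne_zero.2 ec) (D.qc_zy i.succ i)
      (fun k hk => ?_) hzz _ (wt F T (.y i)) {m | wt F T (.z i.castSucc) m = wz}
      (fun m _ => (q1 m).smul_right _) (fun m hm => ((q2 m).smul_right _).congr ?_)
      (fun m hm => ((q3 m).smul_right _).congr hm) f (fun m hm => (hf m hm).2) k.toNat ?_ χ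
    · rw [e0]
      have := D.κ_s_ne i (-k) (by omega)
      simpa [-zsmul_eq_mul, -nsmul_eq_mul] using this
    · rw [wt_x_weyl hw]
      exact congrArg (· - _) hm
    · simpa [U, Int.toNat_of_nonpos (show -k ≤ 0 by omega)] using h0
  · have := D.weyl_extract (w := wz) (wz := wz) (g := D.x i) (g' := D.y i) (z := D.z i.succ)
      (c := D.κ (-F.s i) * D.ω (-F.s i)) ?_ ec (D.qc_zx i.succ i)
      (fun k hk => ?_) hzz (fun m => D.ω (-uw F T i k m) • D.e (st i m))
      (fun m => wz - wt F T (.y i) m) {m | wt F T (.z i.castSucc) m = wz}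
      (fun m hm => ((q2 m).smul_right _).congr ?_) (fun m _ => ((q1 m).smul_right _).congr ?_)
      (fun m hm => ((q3 m).smul_right _).congr hm) f (fun m hm => (hf m hm).2) (-k).toNat ?_ (wz - χ)
    · simpa only [sub_right_inj] using this
    · rw [D.skew, D.brxy, ← neg_smul, neg_neg]
    · rw [e1]
      have := D.κ_s_ne i k (by omega)
      simpa [-zsmul_eq_mul, -nsmul_eq_mul] using this
    · rw [wt_x_weyl hw]
      exact congrArg (· - _) hm
    · abel
    · simpa [U, Int.toNat_of_nonpos h] using h0

lemma ker_filter_weyl (hS : D.Sat T) {i : Fin n} (hw : Weyl T i) {f : Mon n →₀ ℂ}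
    (hf : D.ev f = 0) (c : E) : D.ev (f.filter fun m => wt F T (.y i) m = c) = 0 := by
  suffices H : (f.filter fun m => wt F T (.y i) m = c) ∈ LinearMap.ker D.ev from H
  refine mem_of_filter _ (wt F T (.z i.castSucc)) fun wz => ?_
  refine mem_of_filter _ (wt F T (.z i.succ)) fun wz' => ?_
  have h1 := D.ker_filter_nrm hS (nrm_z hw.2) (D.ker_filter_nrm hS (nrm_z hw.1) hf wz) wz'
  rw [filter_comm _ _ f, filter_comm (fun m => wt F T (.y i) m = c)]
  set f' := (f.filter fun m => wt F T (.z i.castSucc) m = wz).filter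
    fun m => wt F T (.z i.succ) m = wz' with hf'
  have hsupp : ∀ m ∈ f'.support, wt F T (.z i.castSucc) m = wz ∧ wt F T (.z i.succ) m = wz' := by
    intro m hm
    simp only [hf', Finsupp.support_filter, Finset.mem_filter] at hm
    exact ⟨hm.1.2, hm.2⟩
  change D.ev (f'.filter _) = 0
  by_cases h0 : f' = 0
  · rw [h0, Finsupp.filter_zero, map_zero]
  obtain ⟨m0, hm0⟩ := Finsupp.support_nonempty_iff.2 h0
  have hk : ∀ m ∈ f'.support, m.1 i = m0.1 i := fun m hm => by
    have a := hsupp m hm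
    have b := hsupp m0 hm0
    rw [wt_zs] at a b
    have h : (m.1 i - m0.1 i) • F.s i = 0 := by
      rw [sub_smul, sub_eq_zero]
      have := a.2.trans b.2.symm
      rwa [a.1, b.1, add_left_inj] at this
    have := F.s_ne i _ h
    omega
  have h2 := D.strip_aux hS hw (m0.1 i) wz (fun m hm => ⟨hk m hm, (hsupp m hm).1⟩) h1 c
  rw [D.ev_U (F := F) hw (m0.1 i), h2, mul_zero]
  intro m hm
  rw [Finsupp.support_filter] at hm
  exact hk m (Finset.mem_filter.1 hm).1

lemma ker_filter_key (hS : D.Sat T) {f : Mon n →₀ ℂ} (hf : D.ev f = 0) (χ : Ltr n → E) :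
    D.ev (f.filter fun m => key F T m = χ) = 0 := by
  refine filter_key (LinearMap.ker D.ev) (fun f hf g hg c => ?_) hf χ
  rcases hg with hg | ⟨i, hi, rfl⟩
  · exact D.ker_filter_nrm hS hg hf c
  · exact D.ker_filter_weyl hS hi hf c

/-- At a Weyl index, an element of constant key differs from its stripped form by a factor
`U i k`. -/
lemma ev_strip {i : Fin n} (hw : Weyl T i) {f : Mon n →₀ ℂ} {m0 : Mon n}
    (hf : HasKey F T (key F T m0) f) :
    D.ev f = D.ω (-uw F T i (m0.1 i) m0) •
      (D.U i (m0.1 i) * D.ev (f.mapDomain (st i))) ∧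
    Finsupp.linearCombination ℂ (fun m => D.ω (-uw F T i (m0.1 i) m) • D.e (st i m)) f
      = D.ω (-uw F T i (m0.1 i) m0) • D.ev (f.mapDomain (st i)) := by
  have h2 : Finsupp.linearCombination ℂ (fun m => D.ω (-uw F T i (m0.1 i) m) • D.e (st i m)) f
      = D.ω (-uw F T i (m0.1 i) m0) • D.ev (f.mapDomain (st i)) := by
    rw [ev, Finsupp.linearCombination_mapDomain, Finsupp.linearCombination_apply,
      Finsupp.linearCombination_apply, Finsupp.sum, Finsupp.sum, Finset.smul_sum]
    refine Finset.sum_congr rfl fun m hm => ?_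
    have hy := key_tester (hf m hm) (Or.inr ⟨i, hw, rfl⟩)
    have hz := key_tester (hf m hm) (Or.inl (nrm_z hw.1))
    rw [smul_comm, Function.comp_apply, uw, uw, wt_x_weyl hw, wt_x_weyl hw, hy, hz]
  refine ⟨?_, h2⟩
  rw [D.ev_U hw (m0.1 i) fun m hm => key_weyl (hf m hm) hw, h2, mul_smul_comm]

lemma strip_iff (hS : D.Sat T) {i : Fin n} (hw : Weyl T i) {f : Mon n →₀ ℂ} {χ}
    (hf : HasKey F T χ f) : D.ev f = 0 ↔ D.ev (f.mapDomain (st i)) = 0 := by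
  by_cases h0 : f = 0
  · simp [h0]
  obtain ⟨m0, hm0⟩ := Finsupp.support_nonempty_iff.2 h0
  obtain rfl := hf m0 hm0
  have h1 := D.ev_strip hw hf
  constructor
  · intro h
    have h2 := D.strip_aux hS hw (m0.1 i) (wt F T (.z i.castSucc) m0)
      (fun m hm => ⟨key_weyl (hf m hm) hw, key_tester (hf m hm) (Or.inl (nrm_z hw.1))⟩) h
      (wt F T (.y i) m0)
    rw [Finsupp.filter_eq_self_iff _ _ |>.2 fun m hm => ?_, h1.2] at h2
    · exact (smul_eq_zero.1 h2).resolve_left (D.ω_ne _)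
    · exact key_tester (hf m (Finsupp.mem_support_iff.2 hm)) (Or.inr ⟨i, hw, rfl⟩)
  · intro h
    rw [h1.1, h, mul_zero, smul_zero]

end QW
end
end PW

namespace PW
open scoped Classical
noncomputable section
variable {n : ℕ} {E : Type} [AddCommGroup E] {F : Form n E} {W : Type} [Ring W] [Algebra ℂ W]

namespace QW

/-! ### Ideals stable under the bracket, and quotients -/

/-- A two-sided ideal stable under the bracket; closure under right multiplication follows. -/
structure IsId (D : QW F W) (I : Submodule ℂ W) : Prop where
  left : ∀ w, ∀ f ∈ I, w * f ∈ I
  br : ∀ w, ∀ f ∈ I, D.br w f ∈ I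

/-- Prime ideals among the ideals stable under the bracket. -/
structure IsPr (D : QW F W) (P : Submodule ℂ W) : Prop where
  id : D.IsId P
  one : (1 : W) ∉ P
  prime : ∀ I J : Submodule ℂ W, D.IsId I → D.IsId J →
    (∀ a ∈ I, ∀ b ∈ J, a * b ∈ P) → I ≤ P ∨ J ≤ P

variable {D : QW F W}

lemma IsId.right {I : Submodule ℂ W} (hI : D.IsId I) (w : W) {f : W} (hf : f ∈ I) : f * w ∈ I := by
  have h := D.comm f w
  rw [sub_eq_iff_eq_add] at h
  rw [h, D.skew]
  exact I.add_mem (I.smul_mem _ (I.neg_mem (hI.br w f hf))) (hI.left w f hf)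

lemma isId_of_gen (Q : Submodule ℂ W)
    (hy : ∀ i, ∀ q ∈ Q, D.y i * q ∈ Q ∧ D.br (D.y i) q ∈ Q)
    (hx : ∀ i, ∀ q ∈ Q, D.x i * q ∈ Q ∧ D.br (D.x i) q ∈ Q) : D.IsId Q := by
  let S : Subalgebra ℂ W :=
    { carrier := {w | ∀ q ∈ Q, w * q ∈ Q ∧ D.br w q ∈ Q}
      mul_mem' := fun {u v} hu hv q hq => by
        have h1 := hv q hq
        have h2 := hu q hq
        refine ⟨by rw [mul_assoc]; exact (hu _ h1.1).1, ?_⟩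
        rw [D.leib']
        refine Q.add_mem (hu _ h1.2).1 ?_
        have h := D.comm (D.br u q) v
        rw [sub_eq_iff_eq_add] at h
        rw [h, D.skew]
        exact Q.add_mem (Q.smul_mem _ (Q.neg_mem (hv _ h2.2).2)) (hv _ h2.2).1
      add_mem' := fun {u v} hu hv q hq => by
        rw [add_mul, map_add, LinearMap.add_apply]
        exact ⟨Q.add_mem (hu q hq).1 (hv q hq).1, Q.add_mem (hu q hq).2 (hv q hq).2⟩
      algebraMap_mem' := fun c q hq => by
        rw [Algebra.algebraMap_eq_smul_one, smul_mul_assoc, one_mul, map_smul,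
          LinearMap.smul_apply, D.skew, D.br_one, neg_zero, smul_zero]
        exact ⟨Q.smul_mem _ hq, Q.zero_mem⟩ }
  have hS : S = ⊤ := D.gen S hy hx
  have h : ∀ w : W, w ∈ S := fun w => hS ▸ Algebra.mem_top
  exact ⟨fun w f hf => (h w f hf).1, fun w f hf => (h w f hf).2⟩

/-- A quotient of `W` by `I`, with the induced structure. -/
structure Quo (D : QW F W) (I : Submodule ℂ W) where
  V : Type
  [ring : Ring V]
  [alg : Algebra ℂ V]
  D' : QW F V
  π : W →ₐ[ℂ] V
  surj : Function.Surjective π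
  ker : ∀ f, π f = 0 ↔ f ∈ I
  ω : D'.ω = D.ω
  br : ∀ a b, π (D.br a b) = D'.br (π a) (π b)
  y : ∀ i, π (D.y i) = D'.y i
  x : ∀ i, π (D.x i) = D'.x i
  z : ∀ j, π (D.z j) = D'.z j

attribute [instance] Quo.ring Quo.alg

/-- The two-sided ideal underlying an ideal stable under the bracket. -/
def IsId.ts {I : Submodule ℂ W} (hI : D.IsId I) : TwoSidedIdeal W :=
  TwoSidedIdeal.mk' (I : Set W) I.zero_mem (fun h h' => I.add_mem h h') (fun h => I.neg_mem h)
    (fun {a b} h => hI.left a b h) (fun {_ b} h => hI.right b h)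

lemma IsId.mem_ts {I : Submodule ℂ W} (hI : D.IsId I) {a : W} : a ∈ hI.ts ↔ a ∈ I := by
  simp [ts]

/-- The quotient structure exists. -/
def IsId.quo {I : Submodule ℂ W} (hI : D.IsId I) : Quo D I := by
  let V := hI.ts.ringCon.Quotient
  let π : W →ₐ[ℂ] V := { hI.ts.ringCon.mk' with commutes' := fun c => rfl }
  have hsurj : Function.Surjective π := hI.ts.ringCon.mk'_surjective
  have hker : ∀ f, π f = 0 ↔ f ∈ I := fun f => by
    rw [← hI.mem_ts, TwoSidedIdeal.mem_iff]
    exact RingCon.eq _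
  let σ := Function.surjInv hsurj
  have hσ : ∀ v, π (σ v) = v := Function.surjInv_eq hsurj
  have hbr : ∀ a a' b b', π a = π a' → π b = π b' → π (D.br a b) = π (D.br a' b') := by
    intro a a' b b' ha hb
    have ha' : a - a' ∈ I := by rw [← hker, map_sub, ha, sub_self]
    have hb' : b - b' ∈ I := by rw [← hker, map_sub, hb, sub_self]
    rw [← sub_eq_zero, ← map_sub, hker]
    have : D.br a b - D.br a' b' = D.br a (b - b') - D.br b' (a - a') := by
      rw [map_sub, map_sub, D.skew b' a, D.skew b' a']; abel
    rw [this]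
    exact I.sub_mem (hI.br _ _ hb') (hI.br _ _ ha')
  let br' : V →ₗ[ℂ] V →ₗ[ℂ] V := LinearMap.mk₂ ℂ (fun a b => π (D.br (σ a) (σ b)))
    (fun a a' b => by
      rw [hbr _ (σ a + σ a') _ (σ b) (by simp [hσ]) rfl, map_add, LinearMap.add_apply, map_add])
    (fun c a b => by
      rw [hbr _ (c • σ a) _ (σ b) (by simp [hσ]) rfl, map_smul, LinearMap.smul_apply, map_smul])
    (fun a b b' => by
      rw [hbr _ (σ a) _ (σ b + σ b') rfl (by simp [hσ]), map_add, map_add])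
    (fun c a b => by
      rw [hbr _ (σ a) _ (c • σ b) rfl (by simp [hσ]), map_smul, map_smul])
  have hbr' : ∀ a b, π (D.br a b) = br' (π a) (π b) := fun a b =>
    hbr _ _ _ _ (hσ _).symm (hσ _).symm
  refine
    { V := V
      D' :=
        { ω := D.ω, κ := D.κ, τ := D.τ, br := br'
          y := fun i => π (D.y i), x := fun i => π (D.x i), z := fun j => π (D.z j)
          ω_zero := D.ω_zero, ω_add := D.ω_add, ω_κ := D.ω_κ, κ_inj := D.κ_inj, κ_add := D.κ_add
          comm := ?_, skew := ?_, leib := ?_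
          z0 := by rw [D.z0, map_one]
          yx := fun i => by rw [← map_mul, D.yx, map_add, map_smul]
          brxy := fun i => by rw [← hbr', D.brxy, map_smul]
          bryy := fun i j h => by rw [← hbr', D.bryy i j h, map_smul, map_mul]
          bryx := fun i j h => by rw [← hbr', D.bryx i j h, map_smul, map_mul]
          brxy' := fun i j h => by rw [← hbr', D.brxy' i j h, map_smul, map_mul]
          brxx := fun i j h => by rw [← hbr', D.brxx i j h, map_smul, map_mul]
          gen := ?_ }
      π := π, surj := hsurj, ker := hker, ω := rfl, br := hbr'
      y := fun _ => rfl, x := fun _ => rfl, z := fun _ => rfl }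
  · intro a b
    obtain ⟨a, rfl⟩ := hsurj a
    obtain ⟨b, rfl⟩ := hsurj b
    rw [← map_mul, ← map_mul, ← map_sub, D.comm, map_smul, hbr']
  · intro a b
    obtain ⟨a, rfl⟩ := hsurj a
    obtain ⟨b, rfl⟩ := hsurj b
    rw [← hbr', ← hbr', D.skew, map_neg]
  · intro a b c
    obtain ⟨a, rfl⟩ := hsurj a
    obtain ⟨b, rfl⟩ := hsurj b
    obtain ⟨c, rfl⟩ := hsurj c
    simp only [← hbr', ← map_mul, ← map_add, D.leib]
  · intro S hy hx
    have h := D.gen (S.comap π) hy hx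
    rw [eq_top_iff]
    rintro v -
    obtain ⟨w, rfl⟩ := hsurj v
    have : w ∈ S.comap π := h ▸ Algebra.mem_top
    exact this

namespace Quo
variable {I : Submodule ℂ W} (q : Quo D I)

lemma gW (g : Ltr n) : q.π (D.gW g) = q.D'.gW g := by
  cases g with
  | z j => exact q.z j
  | y i => exact q.y i
  | x i => exact q.x i

lemma e (m : Mon n) : q.π (D.e m) = q.D'.e m := by
  have hfac : ∀ t, q.π (D.fac m t) = q.D'.fac m t := by
    rintro (j | i) <;> simp [QW.fac, q.y, q.x, q.z]
  have : ∀ L : List (Fin n ⊕ Fin n), q.π (D.hat (D.fac m) (vm Fin.castSucc m) L)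
      = q.D'.hat (q.D'.fac m) (vm Fin.castSucc m) L := by
    intro L
    induction L with
    | nil => simp [QW.hat]
    | cons t L ih => rw [QW.hat, QW.hat, map_smul, map_mul, ih, hfac, q.ω]
  exact this _

lemma ev (f : Mon n →₀ ℂ) : q.π (D.ev f) = q.D'.ev f := by
  induction f using Finsupp.induction_linear with
  | zero => simp
  | add f g hf hg => simp only [map_add, hf, hg]
  | single m a => rw [ev_single, ev_single, map_smul, q.e]

lemma ev_eq_zero (f : Mon n →₀ ℂ) : q.D'.ev f = 0 ↔ D.ev f ∈ I := by
  rw [← q.ev, q.ker]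

lemma isId_comap {J : Submodule ℂ q.V} (hJ : q.D'.IsId J) : D.IsId (J.comap q.π.toLinearMap) :=
  ⟨fun w f hf => by
    have : q.π f ∈ J := hf
    change q.π (w * f) ∈ J
    rw [map_mul]; exact hJ.left _ _ this,
   fun w f hf => by
    have : q.π f ∈ J := hf
    change q.π (D.br w f) ∈ J
    rw [q.br]; exact hJ.br _ _ this⟩

lemma isId_map {J : Submodule ℂ W} (hJ : D.IsId J) : q.D'.IsId (J.map q.π.toLinearMap) := by
  constructor
  · rintro w _ ⟨f, hf, rfl⟩
    obtain ⟨w, rfl⟩ := q.surj w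
    exact ⟨w * f, hJ.left w f hf, by simp⟩
  · rintro w _ ⟨f, hf, rfl⟩
    obtain ⟨w, rfl⟩ := q.surj w
    exact ⟨D.br w f, hJ.br w f hf, by simp [q.br]⟩

lemma isPr_iff (hI : D.IsId I) : D.IsPr I ↔ q.D'.IsPr ⊥ := by
  constructor
  · intro h
    refine ⟨⟨by simp, by simp⟩, fun h1 => h.one ?_, fun J K hJ hK hJK => ?_⟩
    · rw [← q.ker, map_one]; simpa using h1
    · refine (h.prime _ _ (q.isId_comap hJ) (q.isId_comap hK) fun a ha b hb => ?_).imp ?_ ?_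
      · rw [← q.ker, map_mul]
        exact hJK _ ha _ hb
      all_goals
        intro hle v hv
        obtain ⟨w, rfl⟩ := q.surj v
        exact (q.ker w).2 (hle hv)
  · intro h
    refine ⟨hI, fun h1 => h.one ?_, fun J K hJ hK hJK => ?_⟩
    · rw [← q.ker, map_one] at h1; simpa using h1
    · refine (h.prime _ _ (q.isId_map hJ) (q.isId_map hK) ?_).imp ?_ ?_
      · rintro _ ⟨a, ha, rfl⟩ _ ⟨b, hb, rfl⟩
        have := hJK a ha b hb
        rw [← q.ker, map_mul] at this
        exact this
      all_goals
        intro hle v hv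
        exact (q.ker v).1 (hle ⟨v, hv, rfl⟩)

end Quo

/-! ### Coordinates of prime ideals -/

/-- A normal element is not a zero divisor modulo a prime ideal. -/
lemma normal_cancel (hp : D.IsPr ⊥) {a b : W} (hy : ∀ i, ∃ ε, D.qc (D.y i) a ε)
    (hx : ∀ i, ∃ ε, D.qc (D.x i) a ε) (hab : a * b = 0) : a = 0 ∨ b = 0 := by
  let I : Submodule ℂ W := LinearMap.range (LinearMap.mulRight ℂ a)
  have hmem : ∀ w, w * a ∈ I := fun w => ⟨w, rfl⟩
  have hleft : ∀ w, ∀ f ∈ I, w * f ∈ I := by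
    rintro w _ ⟨v, rfl⟩
    exact ⟨w * v, by simp [mul_assoc]⟩
  let S : Subalgebra ℂ W :=
    { carrier := {w | D.br w a ∈ I}
      mul_mem' := fun {u v} hu hv => by
        change D.br (u * v) a ∈ I
        rw [D.leib']
        refine I.add_mem (hleft _ _ hv) ?_
        obtain ⟨w, hw⟩ := hu
        rw [← hw]
        have h := D.comm a v
        rw [sub_eq_iff_eq_add] at h
        simp only [LinearMap.mulRight_apply]
        rw [mul_assoc, h, D.skew]
        exact hleft _ _ (I.add_mem (I.smul_mem _ (I.neg_mem hv)) (hmem v))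
      add_mem' := fun {u v} hu hv => by
        change D.br (u + v) a ∈ I
        rw [map_add]
        exact I.add_mem hu hv
      algebraMap_mem' := fun c => by
        change D.br _ a ∈ I
        rw [Algebra.algebraMap_eq_smul_one, map_smul,
          LinearMap.smul_apply, D.skew, D.br_one, neg_zero, smul_zero]
        exact I.zero_mem }
  have hS : S = ⊤ := by
    refine D.gen S (fun i => ?_) (fun i => ?_)
    · obtain ⟨ε, h⟩ := hy i
      change D.br _ a ∈ I
      rw [h]; exact I.smul_mem _ (hmem _)
    · obtain ⟨ε, h⟩ := hx i
      change D.br _ a ∈ I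
      rw [h]; exact I.smul_mem _ (hmem _)
  have hbr : ∀ w, D.br w a ∈ I := fun w => by
    have : w ∈ S := hS ▸ Algebra.mem_top
    exact this
  have haw : ∀ w, a * w ∈ I := fun w => by
    have h := D.comm a w
    rw [sub_eq_iff_eq_add] at h
    rw [h, D.skew]
    exact I.add_mem (I.smul_mem _ (I.neg_mem (hbr w))) (hmem w)
  have hI : D.IsId I := ⟨hleft, by
    rintro w _ ⟨v, rfl⟩
    simp only [LinearMap.mulRight_apply]
    rw [D.leib]
    exact I.add_mem (hmem _) (hleft _ _ (hbr w))⟩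
  let J : Submodule ℂ W := LinearMap.ker (LinearMap.mulLeft ℂ a)
  have hIJ : ∀ f ∈ I, ∀ g ∈ J, f * g = 0 := by
    rintro _ ⟨v, rfl⟩ g hg
    have : a * g = 0 := hg
    simp [mul_assoc, this]
  have hJ : D.IsId J := by
    refine ⟨fun w f hf => ?_, fun w f hf => ?_⟩
    · change a * (w * f) = 0
      rw [← mul_assoc]; exact hIJ _ (haw w) _ hf
    · change a * D.br w f = 0
      have h0 : a * f = 0 := hf
      have h := D.leib w a f
      rw [h0, map_zero, hIJ _ (hbr w) _ hf, zero_add] at h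
      exact h.symm
  rcases hp.prime I J hI hJ (fun f hf g hg => by simpa using hIJ f hf g hg) with h | h
  · left
    have := h (hmem 1)
    simpa using this
  · right
    have := h (show b ∈ J from hab)
    simpa using this

lemma br_const_ne (D : QW F W) (i : Fin n) : D.κ (-F.s i) * D.ω (-F.s i) ≠ 0 := by
  refine mul_ne_zero ?_ (D.ω_ne _)
  have := D.κ_s_ne i (-1) (by norm_num)
  simpa using this

/-- In a quotient by a prime ideal, the vanishing letters are admissible and the other normal
letters are not zero divisors. -/
lemma sat_of_prime (hp : D.IsPr ⊥) : D.Sat fun g => D.gW g = 0 := by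
  have h1 : (1 : W) ≠ 0 := fun h => hp.one (by simpa using h)
  have hadm : Adm fun g => D.gW g = 0 := by
    refine ⟨fun h => h1 (D.z0 ▸ h), fun i => ⟨fun h => ?_, fun h => ?_⟩⟩
    · have hz : D.z i.succ = 0 := by
        have h2 := D.brxy i
        have h3 : D.br (D.x i) (D.y i) = 0 := by
          rcases h with h | h
          · rw [show D.y i = 0 from h, map_zero]
          · rw [show D.x i = 0 from h, map_zero, LinearMap.zero_apply]
        rw [h3] at h2
        exact (smul_eq_zero.1 h2.symm).resolve_left (neg_ne_zero.2 (D.br_const_ne i))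
      refine ⟨?_, hz⟩
      have h2 := D.yx i
      have h3 : D.y i * D.x i = 0 := by
        rcases h with h | h
        · rw [show D.y i = 0 from h, zero_mul]
        · rw [show D.x i = 0 from h, mul_zero]
      rw [h3, hz, smul_zero, zero_add] at h2
      exact h2.symm
    · obtain ⟨ha, hb⟩ : D.z i.castSucc = 0 ∧ D.z i.succ = 0 := h
      refine normal_cancel hp (a := D.y i) (b := D.x i) (fun j => ⟨_, D.qc_yy j i⟩) (fun j => ?_) ?_
      · by_cases hj : j = i
        · subst hj
          refine ⟨0, ?_⟩
          rw [qc, D.brxy, D.xy, ha, hb]; simp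
        · exact ⟨_, D.qc_xy j i hj⟩
      · rw [D.yx, ha, hb]; simp
  refine ⟨hadm, fun g h => h, fun g hg f hf => ?_⟩
  have hqc : ∀ h, D.qc (D.gW h) (D.gW g) (F.B (gvec (fun g => D.gW g = 0) h)
      (gvec (fun g => D.gW g = 0) g)) := fun h =>
    D.qc_ltr hadm (fun _ h => h) h g fun i hi => ⟨fun h' => hg.x i hi h'.2, fun h' => hg.y i hi h'.2⟩
  exact (normal_cancel hp (fun i => ⟨_, hqc (.y i)⟩) (fun i => ⟨_, hqc (.x i)⟩) hf).resolve_left hg.ne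

end QW
end
end PW

namespace PW
open scoped Classical
noncomputable section
variable {n : ℕ} {E : Type} [AddCommGroup E] {F : Form n E} {W : Type} [Ring W] [Algebra ℂ W]

/-- The product of two combinations of monomials, with all commutation factors dropped. -/
def cv (T : Ltr n → Prop) (f g : Mon n →₀ ℂ) : Mon n →₀ ℂ :=
  f.sum fun a c => g.sum fun b d => Finsupp.single (mulm T a b) (c * d)

/-- The conditions, independent of the algebra, characterizing the subspaces `K` of coordinates of
prime ideals; `T` is the set of letters in the ideal. -/
structure Good (F : Form n E) (T : Ltr n → Prop) (K : Submodule ℂ (Mon n →₀ ℂ)) : Prop where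
  adm : Adm T
  dead : ∀ m, ¬ Alive T m → Finsupp.single m 1 ∈ K
  core : ∀ m, Core T m → Finsupp.single m 1 ∉ K
  filt : ∀ f ∈ K, ∀ χ, f.filter (fun m => key F T m = χ) ∈ K
  strip : ∀ i, Weyl T i → ∀ χ f, HasKey F T χ f → (f ∈ K ↔ f.mapDomain (st i) ∈ K)
  nrm : ∀ g, Nrm T g → ∀ χ f, HasKey F T χ f → (∀ m ∈ f.support, Alive T m) →
    (f ∈ K ↔ f.mapDomain (mulm T (mon g)) ∈ K)
  prm : ∀ χ χ' f g, HasKey F T χ f → (∀ m ∈ f.support, Core T m) → HasKey F T χ' g →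
    (∀ m ∈ g.support, Core T m) → cv T f g ∈ K → f ∈ K ∨ g ∈ K

namespace QW
variable (D : QW F W) {T : Ltr n → Prop}

lemma ev_mapDomain (φ : Mon n → Mon n) (f : Mon n →₀ ℂ) :
    D.ev (f.mapDomain φ) = f.sum fun m c => c • D.e (φ m) := by
  rw [ev, Finsupp.linearCombination_mapDomain, Finsupp.linearCombination_apply]; rfl

/-- Left multiplication of combinations of monomials by a constant-weight relabelling. -/
lemma mul_ev (w : W) (φ : Mon n → Mon n) (c : ℂ) (f : Mon n →₀ ℂ)
    (h : ∀ m ∈ f.support, w * D.e m = c • D.e (φ m)) :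
    w * D.ev f = c • D.ev (f.mapDomain φ) := by
  rw [D.ev_mapDomain, D.ev_eq, Finsupp.sum, Finsupp.sum, Finset.mul_sum, Finset.smul_sum]
  refine Finset.sum_congr rfl fun m hm => ?_
  rw [mul_smul_comm, h m hm, smul_comm]

lemma mul_ev_nrm (hT : Adm T) (hd : ∀ g, T g → D.gW g = 0) {g : Ltr n} (hg : Nrm T g)
    {m0 : Mon n} {f : Mon n →₀ ℂ} (hf : HasKey F T (key F T m0) f)
    (ha : ∀ m ∈ f.support, Alive T m) :
    D.gW g * D.ev f = D.ω (wt F T g m0) • D.ev (f.mapDomain (mulm T (mon g))) :=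
  D.mul_ev _ _ _ _ fun m hm => by
    rw [D.mul_gen hT hd hg (ha m hm), key_wt (hf m hm) hg.ne]

lemma qc_ev_nrm (hT : Adm T) (hd : ∀ g, T g → D.gW g = 0) {g : Ltr n} (hg : Nrm T g)
    {m0 : Mon n} {f : Mon n →₀ ℂ} (hf : HasKey F T (key F T m0) f) :
    D.qc (D.gW g) (D.ev f) (wt F T g m0) := by
  rw [D.ev_eq]
  exact qc.sum_right _ _ fun m hm =>
    ((D.qc_e_nrm hT hd hg m).congr (key_wt (hf m hm) hg.ne)).smul_right _

lemma ev_cv (hT : Adm T) (hd : ∀ g, T g → D.gW g = 0) {m1 m2 : Mon n} {f g : Mon n →₀ ℂ}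
    (hf : HasKey F T (key F T m1) f) (hfc : ∀ m ∈ f.support, Core T m) (h1 : Core T m1)
    (hg : HasKey F T (key F T m2) g) (hgc : ∀ m ∈ g.support, Core T m) :
    D.ev f * D.ev g = D.ω (F.B (vec (zt T) m1) (vec (zt T) m2)) • D.ev (cv T f g) := by
  simp only [cv, Finsupp.sum, map_sum, ev_single]
  rw [D.ev_eq, D.ev_eq, Finsupp.sum, Finsupp.sum, Finset.sum_mul, Finset.smul_sum]
  refine Finset.sum_congr rfl fun a ha => ?_
  rw [Finset.mul_sum, Finset.smul_sum]
  refine Finset.sum_congr rfl fun b hb => ?_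
  rw [smul_mul_smul_comm, D.mul_core hT hd (hfc a ha) (hgc b hb).alive, smul_comm]
  congr 2
  rw [F.swap, B_core (hf a ha) (hgc b hb), ← F.swap, B_core (hg b hb) h1]

lemma Sat.e_ne {D : QW F W} (hS : D.Sat T) (h1 : (1 : W) ≠ 0) : ∀ m, Core T m → D.e m ≠ 0 := by
  refine core_induct (by rwa [D.e_zero]) fun g m hg hm h h0 => h ?_
  refine hS.cancel g hg _ ?_
  rw [D.mul_gen hS.adm hS.dead hg hm.alive, h0, smul_zero]

lemma good_of_prime (hp : D.IsPr ⊥) :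
    Good F (fun g => D.gW g = 0) (LinearMap.ker D.ev) := by
  have hS := sat_of_prime hp
  have h1 : (1 : W) ≠ 0 := fun h => hp.one (by simpa using h)
  have hk : ∀ m, Finsupp.single m 1 ∈ LinearMap.ker D.ev ↔ D.e m = 0 := fun m => by
    rw [LinearMap.mem_ker, ev_single, one_smul]
  set T : Ltr n → Prop := fun g => D.gW g = 0
  refine ⟨hS.adm, fun m hm => (hk m).2 (D.e_dead hS.dead hm), fun m hm h => ?_,
    fun f hf χ => D.ker_filter_key hS hf χ, fun i hi χ f hf => D.strip_iff hS hi hf,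
    fun g hg χ f hf ha => ?_, fun χ χ' f g hf hfc hg hgc h => ?_⟩
  · exact hS.e_ne h1 m hm ((hk m).1 h)
  · by_cases h0 : f = 0
    · simp [h0]
    obtain ⟨m0, hm0⟩ := Finsupp.support_nonempty_iff.2 h0
    obtain rfl := hf m0 hm0
    have := D.mul_ev_nrm hS.adm hS.dead hg hf ha
    rw [LinearMap.mem_ker, LinearMap.mem_ker]
    constructor
    · intro h
      rw [h, mul_zero] at this
      exact (smul_eq_zero.1 this.symm).resolve_left (D.ω_ne _)
    · intro h
      rw [h, smul_zero] at this
      exact hS.cancel g hg _ this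
  · by_cases h0 : f = 0
    · left; rw [h0]; exact Submodule.zero_mem _
    by_cases h0' : g = 0
    · right; rw [h0']; exact Submodule.zero_mem _
    obtain ⟨m1, hm1⟩ := Finsupp.support_nonempty_iff.2 h0
    obtain ⟨m2, hm2⟩ := Finsupp.support_nonempty_iff.2 h0'
    obtain rfl := hf m1 hm1
    obtain rfl := hg m2 hm2
    have := D.ev_cv hS.adm hS.dead hf hfc (hfc m1 hm1) hg hgc
    rw [LinearMap.mem_ker] at h
    rw [h, smul_zero] at this
    have hqc : ∀ g, D.qc (D.gW g) (D.ev f) (wt F T g m1) ∨ D.gW g = 0 := fun g => by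
      by_cases hT : T g
      · exact Or.inr hT
      left
      rw [D.ev_eq]
      exact qc.sum_right _ _ fun m hm =>
        ((D.qc_e_core hS.adm hS.dead g (hfc m hm)).congr (key_wt (hf m hm) hT)).smul_right _
    have hqc' : ∀ g, ∃ ε, D.qc (D.gW g) (D.ev f) ε := fun g => by
      rcases hqc g with h | h
      · exact ⟨_, h⟩
      · exact ⟨0, by rw [h]; exact zero_qc _ _⟩
    exact normal_cancel hp (fun i => hqc' (.y i)) (fun i => hqc' (.x i)) this

/-! ### From coordinates back to ideals -/

/-- The effect of a generator on `g ^ k * h`, where `g` and `g'` generate a Weyl-type algebra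
together with the normal elements `z` and `z'`. -/
lemma weylQ {g g' z z' h : W} {c c1 c2 d1 d2 : ℂ} {e0 e0' α β : E} (hbr : D.br g' g = c • z)
    (hz : D.qc z g e0) (hz' : D.qc z' g e0') (he : D.κ (-e0) ≠ 0)
    (h1 : g' * g = c1 • z + c2 • z') (h2 : g * g' = d1 • z + d2 • z')
    (hα : D.qc g h α) (hβ : D.qc g' h β) (Q : Submodule ℂ W) (k : ℕ)
    (hQ1 : g ^ (k + 1) * h ∈ Q) (hQ0 : k = 0 → g' * h ∈ Q)
    (hQ2 : ∀ l, k = l + 1 → g ^ l * (z * h) ∈ Q ∧ g ^ l * (z' * h) ∈ Q) :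
    (g * (g ^ k * h) ∈ Q ∧ D.br g (g ^ k * h) ∈ Q) ∧
      (g' * (g ^ k * h) ∈ Q ∧ D.br g' (g ^ k * h) ∈ Q) := by
  have e3 : D.br g (g ^ k) = 0 := by
    have := (qc_self (D := D) g).pow_right k
    simpa [qc, D.κ_zero] using this
  refine ⟨⟨?_, ?_⟩, ?_⟩
  · rwa [← mul_assoc, ← pow_succ']
  · rw [D.leib, e3, zero_mul, zero_add, hα, mul_smul_comm, ← mul_assoc, ← pow_succ]
    exact Q.smul_mem _ hQ1
  · cases k with
    | zero =>
      have := hQ0 rfl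
      rw [pow_zero, one_mul]
      exact ⟨this, by rw [hβ]; exact Q.smul_mem _ this⟩
    | succ l =>
      obtain ⟨q1, q2⟩ := hQ2 l rfl
      constructor
      · rw [pow_succ', ← mul_assoc, ← mul_assoc, h1, add_mul, smul_mul_assoc, smul_mul_assoc,
          (hz.pow_right l).swap', (hz'.pow_right l).swap']
        simp only [add_mul, smul_mul_assoc, mul_assoc]
        exact Q.add_mem (Q.smul_mem _ (Q.smul_mem _ q1)) (Q.smul_mem _ (Q.smul_mem _ q2))
      · rw [D.leib, hβ]
        refine Q.add_mem ?_ ?_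
        · have := D.br_pow g g' z c e0 hbr hz l
          have h3 : D.br g' (g ^ (l + 1)) = (D.κ (-e0))⁻¹ •
              ((c * D.κ (-((l + 1) • e0))) • (g ^ l * z)) := by
            rw [← this, smul_smul, inv_mul_cancel₀ he, one_smul]
          rw [h3]
          simp only [smul_mul_assoc, mul_assoc]
          exact Q.smul_mem _ (Q.smul_mem _ q1)
        · rw [mul_smul_comm, pow_succ, mul_assoc, ← mul_assoc g, h2, add_mul, mul_add]
          simp only [smul_mul_assoc, mul_smul_comm]
          exact Q.smul_mem _ (Q.add_mem (Q.smul_mem _ q1) (Q.smul_mem _ q2))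

/-- Stability of a subspace at `U i k * h` under `y_i` and `x_i`. -/
lemma weylU (i : Fin n) {h : W} {α β : E} (hα : D.qc (D.y i) h α) (hβ : D.qc (D.x i) h β)
    (Q : Submodule ℂ W) (k : ℤ) (hy : 0 ≤ k → D.U i (k + 1) * h ∈ Q)
    (hx : k ≤ 0 → D.U i (k - 1) * h ∈ Q)
    (hy' : 0 < k → D.U i (k - 1) * (D.z i.succ * h) ∈ Q ∧ D.U i (k - 1) * (D.z i.castSucc * h) ∈ Q)
    (hx' : k < 0 →
      D.U i (k + 1) * (D.z i.succ * h) ∈ Q ∧ D.U i (k + 1) * (D.z i.castSucc * h) ∈ Q) :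
    (D.y i * (D.U i k * h) ∈ Q ∧ D.br (D.y i) (D.U i k * h) ∈ Q) ∧
      (D.x i * (D.U i k * h) ∈ Q ∧ D.br (D.x i) (D.U i k * h) ∈ Q) := by
  have Upos : ∀ l : ℕ, D.U i l = D.y i ^ l := fun l => by simp [U]
  have Uneg : ∀ l : ℕ, D.U i (-(l : ℤ)) = D.x i ^ l := fun l => by simp [U]
  have e0 : F.B (zd i.succ) (yd i) = F.s i := by
    rw [F.Bzy, if_pos (Fin.castSucc_lt_succ)]
  have e1 : F.B (zd i.succ) (zd i.castSucc - yd i) = -F.s i := by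
    rw [map_sub, F.Bzz, e0, zero_sub]
  have hbr' : D.br (D.y i) (D.x i) = (D.κ (-F.s i) * D.ω (-F.s i)) • D.z i.succ := by
    rw [D.skew, D.brxy, ← neg_smul, neg_neg]
  have hyx : D.y i * D.x i = D.ω (-F.s i) • D.z i.succ + (1 : ℂ) • D.z i.castSucc := by
    rw [D.yx, one_smul]
  have hxy : D.x i * D.y i = D.ω (F.s i) • D.z i.succ + (1 : ℂ) • D.z i.castSucc := by
    rw [D.xy, one_smul]
  rcases le_total 0 k with hk | hk
  · obtain ⟨k, rfl⟩ := Int.eq_ofNat_of_zero_le hk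
    rw [Upos]
    refine D.weylQ (D.brxy i) (D.qc_zy i.succ i) (D.qc_zy i.castSucc i) ?_ hxy hyx hα hβ Q k ?_ ?_ ?_
    · rw [e0]
      have := D.κ_s_ne i (-1) (by norm_num)
      simpa using this
    · rw [← Upos]; exact_mod_cast hy hk
    · rintro rfl
      have := hx le_rfl
      have h2 := Uneg 1
      simp only [Nat.cast_one, pow_one] at h2
      simpa [h2] using this
    · rintro l rfl
      rw [← Upos]
      have := hy' (by push_cast; omega)
      simpa using this
  · obtain ⟨k, rfl⟩ : ∃ l : ℕ, k = -(l : ℤ) := ⟨(-k).toNat, by omega⟩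
    rw [Uneg]
    refine (D.weylQ hbr' (D.qc_zx i.succ i) (D.qc_zx i.castSucc i) ?_ hyx hxy hβ hα Q k
      ?_ ?_ ?_).symm
    · rw [e1, neg_neg]
      have := D.κ_s_ne i 1 (by norm_num)
      simpa using this
    · rw [← Uneg]
      have := hx hk
      rwa [show -(k : ℤ) - 1 = -((k + 1 : ℕ) : ℤ) by push_cast; ring] at this
    · rintro rfl
      have := hy (by simp)
      have h2 := Upos 1
      simp only [Nat.cast_one, pow_one] at h2
      simpa [h2] using this
    · rintro l rfl
      rw [← Uneg]
      have := hx' (by push_cast; omega)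
      rwa [show -((l + 1 : ℕ) : ℤ) + 1 = -(l : ℤ) by push_cast; ring] at this

end QW
end
end PW

namespace PW
open scoped Classical
noncomputable section
variable {n : ℕ} {E : Type} [AddCommGroup E] {F : Form n E} {W : Type} [Ring W] [Algebra ℂ W]

/-- Insert the power `k` of `y_i` (or `x_i`) into a monomial. -/
def sh (i : Fin n) (k : ℤ) (m : Mon n) : Mon n := (m.1 + Pi.single i k, m.2)

lemma st_sh (i : Fin n) (k : ℤ) {m : Mon n} (h : m.1 i = 0) : st i (sh i k m) = m := by
  refine Prod.ext ?_ rfl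
  ext j
  by_cases hj : j = i
  · subst hj; simp [st, h]
  · simp [st, sh, hj]

lemma sh_st (i : Fin n) (m : Mon n) : sh i (m.1 i) (st i m) = m := (eq_st i m).symm

lemma vec_sh (ζ : Fin n → Fin (n + 1)) (i : Fin n) (k : ℤ) {m : Mon n} (h : m.1 i = 0) :
    vec ζ (sh i k m) = (k.toNat • yd i + (-k).toNat • (zd (ζ i) - yd i)) + vec ζ m := by
  unfold sh
  rcases le_total 0 k with hk | hk
  · have := vec_add_y_nat ζ m i h.ge k.toNat
    rw [Int.toNat_of_nonneg hk] at this
    rw [this, Int.toNat_of_nonpos (show -k ≤ 0 by omega), zero_smul, add_zero]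
  · have := vec_sub_y_nat ζ m i h.le (-k).toNat
    rw [Int.toNat_of_nonneg (by omega), neg_neg] at this
    rw [this, Int.toNat_of_nonpos hk, zero_smul, zero_add]

lemma key_of_vec {T : Ltr n → Prop} {m m' p p' : Mon n} {c : Gam n} (h : key F T m = key F T m')
    (h1 : vec (zt T) p = c + vec (zt T) m) (h2 : vec (zt T) p' = c + vec (zt T) m') :
    key F T p = key F T p' := by
  ext g
  have := congrFun h g
  unfold key wt at *
  split_ifs at this ⊢
  · rw [h1, h2, map_add, map_add, this]
  · rfl

lemma support_mapDomain {φ : Mon n → Mon n} {f : Mon n →₀ ℂ} {p : Mon n}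
    (hp : p ∈ (f.mapDomain φ).support) : ∃ m ∈ f.support, φ m = p := by
  have := Finsupp.mapDomain_support hp
  simpa using this

lemma HasKey.map {T : Ltr n → Prop} {χ : Ltr n → E} {f : Mon n →₀ ℂ} (hf : HasKey F T χ f)
    {φ : Mon n → Mon n} (h : ∀ m ∈ f.support, ∀ m' ∈ f.support, key F T m = key F T m' →
      key F T (φ m) = key F T (φ m')) : ∃ χ', HasKey F T χ' (f.mapDomain φ) := by
  by_cases h0 : f = 0
  · exact ⟨0, by simp [h0, HasKey]⟩
  obtain ⟨m0, hm0⟩ := Finsupp.support_nonempty_iff.2 h0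
  refine ⟨key F T (φ m0), fun p hp => ?_⟩
  obtain ⟨m, hm, rfl⟩ := support_mapDomain hp
  exact h m hm m0 hm0 ((hf m hm).trans (hf m0 hm0).symm)

lemma key_st {T : Ltr n → Prop} {i : Fin n} (hi : Weyl T i) {m m' : Mon n}
    (h : key F T m = key F T m') : key F T (st i m) = key F T (st i m') := by
  have h1 := vec_sh (zt T) i (m.1 i) (st_apply i m)
  have h2 := vec_sh (zt T) i (m'.1 i) (st_apply i m')
  rw [sh_st] at h1 h2
  rw [key_weyl h hi] at h1
  refine key_of_vec (c := -((m'.1 i).toNat • yd i + (-(m'.1 i)).toNat • (zd (zt T i) - yd i)))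
    h ?_ ?_
  · rw [h1]; abel
  · rw [h2]; abel

lemma HasKey.st {T : Ltr n → Prop} {χ : Ltr n → E} {f : Mon n →₀ ℂ} (hf : HasKey F T χ f)
    {i : Fin n} (hi : Weyl T i) : ∃ χ', HasKey F T χ' (f.mapDomain (st i)) :=
  hf.map fun _ _ _ _ h => key_st hi h

lemma HasKey.sh {T : Ltr n → Prop} {χ : Ltr n → E} {f : Mon n →₀ ℂ} (hf : HasKey F T χ f)
    {i : Fin n} (k : ℤ) (h0 : ∀ m ∈ f.support, m.1 i = 0) :
    ∃ χ', HasKey F T χ' (f.mapDomain (sh i k)) :=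
  hf.map fun m hm m' hm' h =>
    key_of_vec h (vec_sh _ i k (h0 m hm)) (vec_sh _ i k (h0 m' hm'))

lemma HasKey.mulm {T : Ltr n → Prop} {χ : Ltr n → E} {f : Mon n →₀ ℂ} (hf : HasKey F T χ f)
    (p : Mon n) : ∃ χ', HasKey F T χ' (f.mapDomain (mulm T p)) :=
  hf.map fun _ _ _ _ h => by rw [key_mulm, key_mulm, h]

lemma alive_st {T : Ltr n → Prop} {m : Mon n} (h : Alive T m) (i : Fin n) : Alive T (st i m) := by
  refine ⟨h.z, fun j hj => ?_, fun j hj => ?_⟩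
  · by_cases hji : j = i
    · subst hji; simp [st] at hj
    · exact h.y j (by simpa [st, hji] using hj)
  · by_cases hji : j = i
    · subst hji; simp [st] at hj
    · exact h.x j (by simpa [st, hji] using hj)

lemma alive_of {T : Ltr n → Prop} {i : Fin n} {m : Mon n} {k : ℤ} {d : Fin n → ℕ}
    (h : Alive T ((st i m).1 + Pi.single i k, m.2 + d)) (hy : 0 < m.1 i → ¬ T (.y i))
    (hx : m.1 i < 0 → ¬ T (.x i)) : Alive T m := by
  refine ⟨fun j hj => h.z j (by simp; omega), fun j hj => ?_, fun j hj => ?_⟩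
  · by_cases hji : j = i
    · subst hji; exact hy hj
    · exact h.y j (by simpa [st, hji] using hj)
  · by_cases hji : j = i
    · subst hji; exact hx hj
    · exact h.x j (by simpa [st, hji] using hj)

namespace QW
variable (D : QW F W) {T : Ltr n → Prop}

lemma U_e (T : Ltr n → Prop) (i : Fin n) (k : ℤ) {m : Mon n} (h : m.1 i = 0) :
    D.U i k * D.e m = D.ω (uw F T i k m) • D.e (sh i k m) := by
  unfold U uw sh
  rcases le_total 0 k with hk | hk
  · have := D.y_pow_mul T i m h.ge k.toNat
    rw [Int.toNat_of_nonneg hk] at this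
    simpa [Int.toNat_of_nonpos (show -k ≤ 0 by omega)] using this
  · have := D.x_pow_mul T i m h.le (-k).toNat
    rw [Int.toNat_of_nonneg (by omega), neg_neg] at this
    simpa [Int.toNat_of_nonpos hk] using this

/-- The span of the dead monomials is an ideal. -/
lemma isId_dead (hT : Adm T) : D.IsId (Submodule.span ℂ (D.e '' {m | ¬ Alive T m})) := by
  set Q := Submodule.span ℂ (D.e '' {m | ¬ Alive T m}) with hQ
  have hmem : ∀ {m}, ¬ Alive T m → D.e m ∈ Q := fun h => Submodule.subset_span ⟨_, h, rfl⟩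
  let T0 : Ltr n → Prop := fun _ => False
  have hT0 : Adm T0 := ⟨id, fun i => by simp [T0]⟩
  have hd0 : ∀ g, T0 g → D.gW g = 0 := fun g h => h.elim
  have key : ∀ m, ¬ Alive T m → ∀ i,
      (D.y i * D.e m ∈ Q ∧ D.br (D.y i) (D.e m) ∈ Q) ∧
      (D.x i * D.e m ∈ Q ∧ D.br (D.x i) (D.e m) ∈ Q) := by
    intro m hm i
    have hU := D.U_e T0 i (m.1 i) (st_apply i m)
    rw [sh_st] at hU
    have hU' : D.e m = D.ω (-uw F T0 i (m.1 i) (st i m)) • (D.U i (m.1 i) * D.e (st i m)) := by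
      rw [hU, smul_smul, D.ω_neg_mul, one_smul]
    have q1 := D.qc_e hT0 hd0 (.y i) (st i m) fun j _ =>
      ⟨fun h => (by cases h; exact (st_apply i m).ge), fun h => (by cases h)⟩
    have q2 := D.qc_e hT0 hd0 (.x i) (st i m) fun j _ =>
      ⟨fun h => (by cases h), fun h => (by cases h; exact (st_apply i m).le)⟩
    have hsh : ∀ k, (0 < m.1 i → 0 < k) → (m.1 i < 0 → k < 0) → D.U i k * D.e (st i m) ∈ Q := by
      intro k h1 h2
      rw [D.U_e T0 i k (st_apply i m)]
      refine Q.smul_mem _ (hmem fun ha => hm ?_)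
      refine alive_of (i := i) (k := k) (d := 0) (by simpa [sh, st] using ha) (fun h => ?_)
        (fun h => ?_)
      · exact ha.y i (by simpa [sh, st] using h1 h)
      · exact ha.x i (by simpa [sh, st] using h2 h)
    have hshz : ∀ k j, (j = i.succ ∨ j = i.castSucc) →
        D.U i k * (D.z j * D.e (st i m)) ∈ Q := by
      intro k j hj
      rw [D.z_mul T0, mulm_z, mul_smul_comm,
        D.U_e T0 i k (m := ((st i m).1, (st i m).2 + zb j)) (st_apply i m)]
      refine Q.smul_mem _ (Q.smul_mem _ (hmem fun ha => hm ?_))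
      have hTz : ¬ T (.z j) := by
        induction j using Fin.cases with
        | zero => exact hT.z0
        | succ j => exact ha.z j (by simp [sh, zb])
      have hyx := hT.yx i
      refine alive_of (i := i) (k := k) (d := zb j) (by simpa [sh, st] using ha) (fun h h' => ?_)
        (fun h h' => ?_)
      · have := hyx.1 (Or.inl h')
        rcases hj with rfl | rfl
        · exact hTz this.2
        · exact hTz this.1
      · have := hyx.1 (Or.inr h')
        rcases hj with rfl | rfl
        · exact hTz this.2
        · exact hTz this.1
    have := D.weylU i q1 q2 Q (m.1 i) (fun _ => hsh _ (by omega) (by omega))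
      (fun _ => hsh _ (by omega) (by omega))
      (fun _ => ⟨hshz _ _ (Or.inl rfl), hshz _ _ (Or.inr rfl)⟩)
      (fun _ => ⟨hshz _ _ (Or.inl rfl), hshz _ _ (Or.inr rfl)⟩)
    rw [hU']
    simp only [mul_smul_comm, map_smul]
    exact ⟨⟨Q.smul_mem _ this.1.1, Q.smul_mem _ this.1.2⟩,
      ⟨Q.smul_mem _ this.2.1, Q.smul_mem _ this.2.2⟩⟩
  have ext : ∀ φ : W →ₗ[ℂ] W, (∀ m, ¬ Alive T m → φ (D.e m) ∈ Q) → ∀ q ∈ Q, φ q ∈ Q := by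
    intro φ h q hq
    have : Q ≤ Q.comap φ := Submodule.span_le.2 (by rintro _ ⟨m, hm, rfl⟩; exact h m hm)
    exact this hq
  exact isId_of_gen Q
    (fun i q hq => ⟨ext (LinearMap.mulLeft ℂ (D.y i)) (fun m hm => (key m hm i).1.1) q hq,
      ext (D.br (D.y i)) (fun m hm => (key m hm i).1.2) q hq⟩)
    (fun i q hq => ⟨ext (LinearMap.mulLeft ℂ (D.x i)) (fun m hm => (key m hm i).2.1) q hq,
      ext (D.br (D.x i)) (fun m hm => (key m hm i).2.2) q hq⟩)

end QW

variable {T : Ltr n → Prop} {K : Submodule ℂ (Mon n →₀ ℂ)}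

lemma mem_of_dead {S : Submodule ℂ (Mon n →₀ ℂ)} {p : Mon n → Prop}
    (hd : ∀ m, p m → Finsupp.single m 1 ∈ S) {f : Mon n →₀ ℂ} (hf : ∀ m ∈ f.support, p m) :
    f ∈ S := by
  rw [← Finsupp.sum_single f]
  refine S.sum_mem fun m hm => ?_
  rw [show Finsupp.single m (f m) = f m • Finsupp.single m 1 by simp]
  exact S.smul_mem _ (hd m (hf m hm))

/-- Membership in a subspace can be checked on dead monomials and on combinations of alive
monomials of constant key. -/
lemma Good.induct (hK : Good F T K) (S : Submodule ℂ (Mon n →₀ ℂ))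
    (hd : ∀ m, ¬ Alive T m → Finsupp.single m 1 ∈ S)
    (hS : ∀ f ∈ K, ∀ m0, HasKey F T (key F T m0) f → (∀ m ∈ f.support, Alive T m) → f ∈ S) :
    K ≤ S := by
  intro f hf
  refine mem_of_filter S (key F T) fun χ => ?_
  have h1 := hK.filt f hf χ
  have h2 := hasKey_filter (F := F) T χ f
  set g := f.filter fun m => key F T m = χ
  obtain ⟨p, hp⟩ : ∃ p : Mon n → Prop, ∀ m, p m ↔ ¬ Alive T m := ⟨_, fun m => Iff.rfl⟩
  have hg : g = g.filter (Alive T) + g.filter p := by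
    ext m
    simp only [Finsupp.add_apply, Finsupp.filter_apply]
    split_ifs <;> simp_all
  have hsup : ∀ (p : Mon n → Prop), ∀ m ∈ (g.filter p).support, p m ∧ m ∈ g.support := by
    intro p m hm
    rw [Finsupp.support_filter, Finset.mem_filter] at hm
    exact ⟨hm.2, hm.1⟩
  have h3 := mem_of_dead hd fun m hm => (hp m).1 (hsup p m hm).1
  have h4 := mem_of_dead hK.dead fun m hm => (hp m).1 (hsup p m hm).1
  have h5 : g.filter (Alive T) ∈ K := by
    rw [eq_sub_of_add_eq hg.symm]
    exact K.sub_mem h1 h4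
  suffices h : g.filter (Alive T) ∈ S by
    have := S.add_mem h h3
    rwa [← hg] at this
  by_cases h0 : g.filter (Alive T) = 0
  · rw [h0]; exact S.zero_mem
  obtain ⟨m0, hm0⟩ := Finsupp.support_nonempty_iff.2 h0
  refine hS _ h5 m0 (fun m hm => ?_) fun m hm => (hsup _ m hm).1
  rw [h2 m (hsup _ m hm).2, h2 m0 (hsup _ m0 hm0).2]

lemma st_st_zero {i : Fin n} {f : Mon n →₀ ℂ} : ∀ m ∈ (f.mapDomain (st i)).support, m.1 i = 0 := by
  intro p hp
  obtain ⟨m, _, rfl⟩ := support_mapDomain hp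
  exact st_apply i m

namespace QW
variable (D : QW F W)

/-- Elements with coordinates in a good subspace form an ideal, once the dead letters vanish. -/
lemma isId_good (hd : ∀ g, T g → D.gW g = 0) (hK : Good F T K) : D.IsId (K.map D.ev) := by
  set Q := K.map D.ev
  have hT := hK.adm
  have shK : ∀ i, Weyl T i → ∀ f ∈ K, ∀ χ, HasKey F T χ f → (∀ m ∈ f.support, m.1 i = 0) → ∀ k,
      D.U i k * D.ev f ∈ Q := by
    intro i hi f hf χ hχ h0 k
    by_cases hf0 : f = 0
    · simp [hf0]
    obtain ⟨m0, hm0⟩ := Finsupp.support_nonempty_iff.2 hf0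
    rw [D.mul_ev (D.U i k) (sh i k) (D.ω (uw F T i k m0)) f fun m hm => ?_]
    · refine Q.smul_mem _ ⟨_, ?_, rfl⟩
      obtain ⟨χ', h1⟩ := hχ.sh k h0
      refine (hK.strip i hi χ' _ h1).2 ?_
      rw [← Finsupp.mapDomain_comp]
      convert hf using 1
      conv_rhs => rw [← Finsupp.mapDomain_id (v := f)]
      exact Finsupp.mapDomain_congr fun m hm => st_sh i k (h0 m hm)
    · rw [D.U_e T i k (h0 m hm)]
      have hk := (hχ m hm).trans (hχ m0 hm0).symm
      have hy := key_tester hk (Or.inr ⟨i, hi, rfl⟩)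
      have hz := key_tester hk (Or.inl (nrm_z hi.1))
      rw [uw, uw, wt_x_weyl hi, wt_x_weyl hi, hy, hz]
  have weyl : ∀ i, Weyl T i → ∀ f ∈ K, ∀ m0, HasKey F T (key F T m0) f →
      (∀ m ∈ f.support, Alive T m) →
      (D.y i * D.ev f ∈ Q ∧ D.br (D.y i) (D.ev f) ∈ Q) ∧
      (D.x i * D.ev f ∈ Q ∧ D.br (D.x i) (D.ev f) ∈ Q) := by
    intro i hi f hf m0 hm0 ha
    obtain ⟨χ, hχ⟩ := hm0.st hi
    have hf1 := (hK.strip i hi _ f hm0).1 hf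
    have hz0 : ∀ m ∈ (f.mapDomain (st i)).support, m.1 i = 0 := st_st_zero
    have ha1 : ∀ m ∈ (f.mapDomain (st i)).support, Alive T m := by
      intro p hp
      obtain ⟨m, hm, rfl⟩ := support_mapDomain hp
      exact alive_st (ha m hm) i
    rw [(D.ev_strip hi hm0).1]
    set f1 := f.mapDomain (st i)
    by_cases hf0 : f1 = 0
    · simp [hf0]
    obtain ⟨m1, hm1⟩ := Finsupp.support_nonempty_iff.2 hf0
    obtain rfl := hχ m1 hm1
    have hzU : ∀ j, ¬ T (.z j) → ∀ k, D.U i k * (D.z j * D.ev f1) ∈ Q := by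
      intro j hj k
      have := D.mul_ev_nrm hT hd (nrm_z hj) hχ ha1
      rw [show D.z j = D.gW (.z j) from rfl, this, mul_smul_comm]
      obtain ⟨χ', h'⟩ := hχ.mulm (mon (.z j))
      refine Q.smul_mem _ (shK i hi _ ((hK.nrm _ (nrm_z hj) _ _ hχ ha1).1 hf1) χ' h'
        (fun p hp => ?_) k)
      obtain ⟨m, hm, rfl⟩ := support_mapDomain hp
      rw [mulm_z]; exact hz0 m hm
    have q1 : D.qc (D.y i) (D.ev f1) (wt F T (.y i) m1) := by
      rw [D.ev_eq]
      refine qc.sum_right _ _ fun m hm => ((D.qc_e hT hd (.y i) m fun j _ =>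
        ⟨fun h => (by cases h; exact (hz0 m hm).ge), fun h => (by cases h)⟩).congr ?_).smul_right _
      exact key_tester (hχ m hm) (Or.inr ⟨i, hi, rfl⟩)
    have q2 : D.qc (D.x i) (D.ev f1) (wt F T (.x i) m1) := by
      rw [D.ev_eq]
      refine qc.sum_right _ _ fun m hm => ((D.qc_e hT hd (.x i) m fun j _ =>
        ⟨fun h => (by cases h), fun h => (by cases h; exact (hz0 m hm).le)⟩).congr ?_).smul_right _
      have hy := key_tester (hχ m hm) (Or.inr ⟨i, hi, rfl⟩)
      have hz := key_tester (hχ m hm) (Or.inl (nrm_z hi.1))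
      rw [wt_x_weyl hi, wt_x_weyl hi, hy, hz]
    have := D.weylU i q1 q2 Q (m0.1 i) (fun _ => shK i hi _ hf1 _ hχ hz0 _)
      (fun _ => shK i hi _ hf1 _ hχ hz0 _) (fun _ => ⟨hzU _ hi.2 _, hzU _ hi.1 _⟩)
      (fun _ => ⟨hzU _ hi.2 _, hzU _ hi.1 _⟩)
    simp only [mul_smul_comm, map_smul]
    exact ⟨⟨Q.smul_mem _ this.1.1, Q.smul_mem _ this.1.2⟩,
      ⟨Q.smul_mem _ this.2.1, Q.smul_mem _ this.2.2⟩⟩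
  have nrm : ∀ g, Nrm T g → ∀ f ∈ K, ∀ m0, HasKey F T (key F T m0) f →
      (∀ m ∈ f.support, Alive T m) → D.gW g * D.ev f ∈ Q ∧ D.br (D.gW g) (D.ev f) ∈ Q := by
    intro g hg f hf m0 hm0 ha
    have h1 : D.gW g * D.ev f ∈ Q := by
      rw [D.mul_ev_nrm hT hd hg hm0 ha]
      exact Q.smul_mem _ ⟨_, (hK.nrm g hg _ f hm0 ha).1 hf, rfl⟩
    refine ⟨h1, ?_⟩
    rw [D.qc_ev_nrm hT hd hg hm0]
    exact Q.smul_mem _ h1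
  have fin : ∀ g : Ltr n, (∀ f ∈ K, ∀ m0, HasKey F T (key F T m0) f →
      (∀ m ∈ f.support, Alive T m) → D.gW g * D.ev f ∈ Q ∧ D.br (D.gW g) (D.ev f) ∈ Q) →
      ∀ q ∈ Q, D.gW g * q ∈ Q ∧ D.br (D.gW g) q ∈ Q := by
    rintro g h _ ⟨f, hf, rfl⟩
    refine hK.induct ((Q.comap (LinearMap.mulLeft ℂ (D.gW g)) ⊓ Q.comap (D.br (D.gW g))).comap D.ev)
      (fun m hm => ?_) (fun f hf m0 hm0 ha => ?_) hf
    · simp [D.e_dead hd hm]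
    · exact h f hf m0 hm0 ha
  have tri : ∀ g : Ltr n, T g → ∀ q ∈ Q, D.gW g * q ∈ Q ∧ D.br (D.gW g) q ∈ Q := by
    intro g hg q _
    simp [hd g hg]
  refine isId_of_gen Q (fun i => ?_) (fun i => ?_)
  · change ∀ q ∈ Q, D.gW (.y i) * q ∈ Q ∧ D.br (D.gW (.y i)) q ∈ Q
    by_cases h1 : T (.y i)
    · exact tri _ h1
    refine fin _ fun f hf m0 hm0 ha => ?_
    by_cases hi : Weyl T i
    · exact (weyl i hi f hf m0 hm0 ha).1
    · exact nrm _ ⟨h1, fun j hj h => by cases h; exact hi hj, by simp⟩ f hf m0 hm0 ha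
  · change ∀ q ∈ Q, D.gW (.x i) * q ∈ Q ∧ D.br (D.gW (.x i)) q ∈ Q
    by_cases h1 : T (.x i)
    · exact tri _ h1
    refine fin _ fun f hf m0 hm0 ha => ?_
    by_cases hi : Weyl T i
    · exact (weyl i hi f hf m0 hm0 ha).2
    · exact nrm _ ⟨h1, by simp, fun j hj h => by cases h; exact hi hj⟩ f hf m0 hm0 ha

end QW
end
end PW

namespace PW
open scoped Classical
noncomputable section
variable {n : ℕ} {E : Type} [AddCommGroup E] {F : Form n E} {W : Type} [Ring W] [Algebra ℂ W]
variable {T : Ltr n → Prop} {K : Submodule ℂ (Mon n →₀ ℂ)}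

lemma filter_mapDomain {ι : Type} (φ : ι → ι) (p q : ι → Prop) (h : ∀ m, p (φ m) ↔ q m)
    (f : ι →₀ ℂ) : (f.mapDomain φ).filter p = (f.filter q).mapDomain φ := by
  induction f using Finsupp.induction_linear with
  | zero => rw [Finsupp.mapDomain_zero, Finsupp.filter_zero, Finsupp.filter_zero,
      Finsupp.mapDomain_zero]
  | add f g hf hg =>
    rw [Finsupp.mapDomain_add, Finsupp.filter_add, Finsupp.filter_add, Finsupp.mapDomain_add,
      hf, hg]
  | single m a =>
    rw [Finsupp.mapDomain_single]
    by_cases hq : q m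
    · rw [Finsupp.filter_single_of_pos _ hq, Finsupp.filter_single_of_pos _ ((h m).2 hq),
        Finsupp.mapDomain_single]
    · rw [Finsupp.filter_single_of_neg _ hq, Finsupp.filter_single_of_neg _ (mt (h m).1 hq),
        Finsupp.mapDomain_zero]

lemma mem_support_filter {ι : Type} {p : ι → Prop} {f : ι →₀ ℂ} {m : ι}
    (h : m ∈ (f.filter p).support) : p m ∧ m ∈ f.support := by
  rw [Finsupp.support_filter, Finset.mem_filter] at h
  exact ⟨h.2, h.1⟩

namespace QW
variable (D : QW F W)

lemma ev_alive (hd : ∀ g, T g → D.gW g = 0) (f : Mon n →₀ ℂ) :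
    D.ev (f.filter (Alive T)) = D.ev f := by
  induction f using Finsupp.induction_linear with
  | zero => rw [Finsupp.filter_zero]
  | add f g hf hg => rw [Finsupp.filter_add, map_add, map_add, hf, hg]
  | single m a =>
    by_cases hq : Alive T m
    · rw [Finsupp.filter_single_of_pos _ hq]
    · rw [Finsupp.filter_single_of_neg _ hq, ev_single, D.e_dead hd hq, map_zero, smul_zero]

/-- If the coordinates of zero form a good subspace then the surviving normal letters are not zero
divisors. -/
lemma sat_of_good (hK : Good F T K) (hker : LinearMap.ker D.ev = K) : D.Sat T := by
  have hd : ∀ g, T g → D.gW g = 0 := fun g hg => by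
    have := hK.dead _ (not_alive_mon hK.adm hg)
    rw [← hker, LinearMap.mem_ker, ev_single, one_smul, e_mon] at this
    exact this
  refine ⟨hK.adm, hd, fun g hg w hw => ?_⟩
  obtain ⟨f, rfl⟩ := D.ev_surj w
  rw [← D.ev_alive hd] at hw ⊢
  have ha : ∀ m ∈ (f.filter (Alive T)).support, Alive T m := fun m hm => (mem_support_filter hm).1
  set f1 := f.filter (Alive T)
  let t : Mon n → ℂ := fun m => D.ω (wt F T g m)
  have h1 : D.gW g * D.ev f1 = D.ev ((mulBy t f1).mapDomain (mulm T (mon g))) := by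
    rw [D.ev_mapDomain, D.ev_eq, Finsupp.sum, Finset.mul_sum,
      Finsupp.sum_of_support_subset (s := f1.support)]
    · refine Finset.sum_congr rfl fun m hm => ?_
      rw [mul_smul_comm, D.mul_gen hK.adm hd hg (ha m hm), mulBy_apply, smul_smul, mul_comm]
    · intro m hm
      rw [Finsupp.mem_support_iff, mulBy_apply] at hm
      rw [Finsupp.mem_support_iff]
      exact right_ne_zero_of_mul hm
    · intro m _
      rw [zero_smul]
  rw [hw] at h1
  have h2 : (mulBy t f1).mapDomain (mulm T (mon g)) ∈ K := by
    rw [← hker]; exact h1.symm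
  rw [← LinearMap.mem_ker, hker]
  refine mem_of_filter K (key F T) fun χ => ?_
  have h3 := hK.filt _ h2 (key F T (mon g) + χ)
  rw [filter_mapDomain (mulm T (mon g)) (fun m => key F T m = key F T (mon g) + χ)
    (fun m => key F T m = χ) (fun m => by rw [key_mulm, add_right_inj])] at h3
  by_cases h0 : f1.filter (fun m => key F T m = χ) = 0
  · rw [h0]; exact K.zero_mem
  obtain ⟨m0, hm0⟩ := Finsupp.support_nonempty_iff.2 h0
  have hm0' := (mem_support_filter hm0).1
  have h4 : (mulBy t f1).filter (fun m => key F T m = χ)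
      = t m0 • f1.filter (fun m => key F T m = χ) := by
    ext m
    by_cases hm : key F T m = χ
    · simp only [Finsupp.smul_apply, Finsupp.filter_apply, hm, if_true, mulBy_apply, t,
        key_wt (hm.trans hm0'.symm) hg.ne, smul_eq_mul]
    · simp only [Finsupp.smul_apply, Finsupp.filter_apply, hm, if_false, smul_zero]
  rw [h4, Finsupp.mapDomain_smul] at h3
  refine (hK.nrm g hg χ _ (hasKey_filter T χ f1)
    fun m hm => ha m (mem_support_filter hm).2).2 ?_
  have := K.smul_mem (t m0)⁻¹ h3
  rwa [smul_smul, inv_mul_cancel₀ (D.ω_ne _), one_smul] at this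

lemma Sat.core_cancel {D : QW F W} (hS : D.Sat T) : ∀ m, Core T m → ∀ w, D.e m * w = 0 → w = 0 := by
  refine core_induct (fun w h => by rwa [D.e_zero, one_mul] at h) fun g m hg hm ih w h => ih w ?_
  refine hS.cancel g hg _ ?_
  rw [← mul_assoc, D.mul_gen hS.adm hS.dead hg hm.alive, smul_mul_assoc, h, smul_zero]

/-- The elements carried into an ideal by some core monomial. -/
lemma isId_sat (hT : Adm T) (hd : ∀ g, T g → D.gW g = 0) {I : Submodule ℂ W} (hI : D.IsId I) :
    ∃ I' : Submodule ℂ W, D.IsId I' ∧ ∀ w, w ∈ I' ↔ ∃ m, Core T m ∧ D.e m * w ∈ I := by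
  have up : ∀ m m', Core T m → Core T m' → ∀ w, D.e m' * w ∈ I → D.e (mulm T m m') * w ∈ I := by
    intro m m' hm hm' w hw
    have h := hI.left (D.e m) _ hw
    rw [← mul_assoc, D.mul_core hT hd hm hm'.alive, smul_mul_assoc] at h
    have := I.smul_mem (D.ω (-F.B (vec (zt T) m) (vec (zt T) m'))) h
    rwa [smul_smul, D.ω_neg_mul, one_smul] at this
  let I' : Submodule ℂ W :=
    { carrier := {w | ∃ m, Core T m ∧ D.e m * w ∈ I}
      add_mem' := by
        rintro a b ⟨m, hm, ha⟩ ⟨m', hm', hb⟩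
        refine ⟨mulm T m m', hm.mulm hT hm', ?_⟩
        rw [mul_add]
        refine I.add_mem ?_ (up m m' hm hm' b hb)
        rw [mulm_comm]
        exact up m' m hm' hm a ha
      zero_mem' := ⟨0, Core.zero, by simp⟩
      smul_mem' := by
        rintro c a ⟨m, hm, ha⟩
        exact ⟨m, hm, by rw [mul_smul_comm]; exact I.smul_mem _ ha⟩ }
  refine ⟨I', ?_, fun w => Iff.rfl⟩
  have key : ∀ g : Ltr n, ∀ q ∈ I', D.gW g * q ∈ I' ∧ D.br (D.gW g) q ∈ I' := by
    rintro g q ⟨m, hm, hq⟩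
    have hqc := D.qc_e_core hT hd g hm
    have h1 : D.e m * (D.gW g * q) ∈ I := by
      rw [← mul_assoc, hqc.symm.swap', smul_mul_assoc, mul_assoc]
      exact I.smul_mem _ (hI.left _ _ hq)
    refine ⟨⟨m, hm, h1⟩, m, hm, ?_⟩
    have h2 := D.leib (D.gW g) (D.e m) q
    have h3 : D.e m * D.br (D.gW g) q = D.br (D.gW g) (D.e m * q) - D.br (D.gW g) (D.e m) * q := by
      rw [h2]; abel
    rw [h3, hqc, smul_mul_assoc, mul_assoc]
    exact I.sub_mem (hI.br _ _ hq) (I.smul_mem _ (hI.left _ _ hq))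
  exact isId_of_gen I' (fun i => key (.y i)) (fun i => key (.x i))

/-- Every nonzero ideal contains a nonzero combination of core monomials of constant key. -/
lemma core_elem (hK : Good F T K) (hker : LinearMap.ker D.ev = K) {I : Submodule ℂ W}
    (hI : D.IsId I) (h0 : I ≠ ⊥) : ∃ χ f, HasKey F T χ f ∧ (∀ m ∈ f.support, Core T m) ∧
      f ∉ K ∧ D.ev f ∈ I := by
  have hS := D.sat_of_good hK hker
  obtain ⟨I', hI', hmem⟩ := D.isId_sat hS.adm hS.dead hI
  let q := hI'.quo
  have hSq : q.D'.Sat T := by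
    refine ⟨hS.adm, fun g hg => by rw [← q.gW, hS.dead g hg, map_zero], fun g hg w hw => ?_⟩
    obtain ⟨w, rfl⟩ := q.surj w
    rw [← q.gW, ← map_mul, q.ker, hmem] at hw
    obtain ⟨m, hm, h⟩ := hw
    rw [q.ker, hmem]
    refine ⟨mulm T m (mon g), hm.mulm hS.adm hg.core, ?_⟩
    rw [← mul_assoc, ← e_mon, D.mul_core hS.adm hS.dead hm hg.core.alive, smul_mul_assoc] at h
    have := I.smul_mem (D.ω (-F.B (vec (zt T) m) (vec (zt T) (mon g)))) h
    rwa [smul_smul, D.ω_neg_mul, one_smul] at this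
  have hII : I ≤ I' := fun w hw => (hmem w).2 ⟨0, Core.zero, by rwa [D.e_zero, one_mul]⟩
  obtain ⟨w, hw, hw0⟩ := Submodule.exists_mem_ne_zero_of_ne_bot h0
  obtain ⟨f, rfl⟩ := D.ev_surj w
  have hq : q.D'.ev f = 0 := (q.ev_eq_zero f).2 (hII hw)
  have hfK : f ∉ K := by rw [← hker]; exact hw0
  have : ∃ χ, f.filter (fun m => key F T m = χ) ∉ K := by
    by_contra hcon
    push Not at hcon
    exact hfK (mem_of_filter K (key F T) hcon)
  obtain ⟨χ, hχ⟩ := this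
  have hq1 := q.D'.ker_filter_key hSq hq χ
  have hk1 := hasKey_filter (F := F) T χ f
  set f1 := f.filter fun m => key F T m = χ
  have strip : ∀ s : Finset (Fin n), ∃ χ f, HasKey F T χ f ∧ (∀ m ∈ f.support, Alive T m) ∧ f ∉ K ∧
      q.D'.ev f = 0 ∧ ∀ i ∈ s, Weyl T i → ∀ m ∈ f.support, m.1 i = 0 := by
    intro s
    induction s using Finset.induction_on with
    | empty =>
      refine ⟨χ, f1.filter (Alive T), fun m hm => hk1 m (mem_support_filter hm).2,
        fun m hm => (mem_support_filter hm).1, ?_, ?_, by simp⟩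
      · rwa [← hker, LinearMap.mem_ker, D.ev_alive hS.dead, ← LinearMap.mem_ker, hker]
      · rwa [q.D'.ev_alive hSq.dead]
    | insert i s _ ih =>
      obtain ⟨χ, f, hf, ha, hfK, hq, h0⟩ := ih
      by_cases hi : Weyl T i
      · obtain ⟨χ', hχ'⟩ := hf.st hi
        refine ⟨χ', f.mapDomain (st i), hχ', fun p hp => ?_, ?_, ?_, fun j hj hjw p hp => ?_⟩
        · obtain ⟨m, hm, rfl⟩ := support_mapDomain hp
          exact alive_st (ha m hm) i
        · rwa [← hK.strip i hi χ f hf]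
        · rwa [← q.D'.strip_iff hSq hi hf]
        · obtain ⟨m, hm, rfl⟩ := support_mapDomain hp
          by_cases hji : j = i
          · subst hji; exact st_apply j m
          · have := h0 j ((Finset.mem_insert.1 hj).resolve_left hji) hjw m hm
            simpa [st, hji] using this
      · refine ⟨χ, f, hf, ha, hfK, hq, fun j hj hjw => ?_⟩
        rcases Finset.mem_insert.1 hj with rfl | hj
        · exact absurd hjw hi
        · exact h0 j hj hjw
  obtain ⟨χ2, f2, hk2, ha2, hf2, hq2, h02⟩ := strip Finset.univ
  have hc2 : ∀ m ∈ f2.support, Core T m := fun m hm =>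
    ⟨ha2 m hm, fun i hi => h02 i (Finset.mem_univ i) hi m hm⟩
  rw [q.ev_eq_zero, hmem] at hq2
  obtain ⟨p, hp, hpI⟩ := hq2
  have hf20 : f2 ≠ 0 := fun h => hf2 (h ▸ K.zero_mem)
  obtain ⟨m0, hm0⟩ := Finsupp.support_nonempty_iff.2 hf20
  have hmul := D.mul_ev (D.e p) (mulm T p) (D.ω (F.B (vec (zt T) p) (vec (zt T) m0))) f2
    fun m hm => by
      rw [D.mul_core hS.adm hS.dead hp (ha2 m hm),
        B_core ((hk2 m hm).trans (hk2 m0 hm0).symm) hp]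
  obtain ⟨χ3, hk3⟩ := hk2.mulm p
  refine ⟨χ3, f2.mapDomain (mulm T p), hk3, fun m' hm' => ?_, fun h => hf2 ?_, ?_⟩
  · obtain ⟨m, hm, rfl⟩ := support_mapDomain hm'
    exact hp.mulm hS.adm (hc2 m hm)
  · rw [← hker, LinearMap.mem_ker] at h ⊢
    rw [h, smul_zero] at hmul
    exact hS.core_cancel p hp _ hmul
  · rw [hmul] at hpI
    have := I.smul_mem (D.ω (-F.B (vec (zt T) p) (vec (zt T) m0))) hpI
    rwa [smul_smul, D.ω_neg_mul, one_smul] at this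

lemma prime_of_good (hK : Good F T K) (hker : LinearMap.ker D.ev = K) : D.IsPr ⊥ := by
  have hS := D.sat_of_good hK hker
  refine ⟨⟨by simp, by simp⟩, fun h => ?_, fun I J hI hJ hIJ => ?_⟩
  · refine hK.core 0 Core.zero ?_
    rw [← hker, LinearMap.mem_ker, ev_single, D.e_zero, one_smul]
    simpa using h
  · by_contra hcon
    push Not at hcon
    obtain ⟨χ, f, hf, hfc, hfK, hfI⟩ := D.core_elem hK hker hI (fun h => hcon.1 h.le)
    obtain ⟨χ', g, hg, hgc, hgK, hgI⟩ := D.core_elem hK hker hJ (fun h => hcon.2 h.le)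
    have h := hIJ _ hfI _ hgI
    obtain ⟨m1, hm1⟩ := Finsupp.support_nonempty_iff.2 fun h : f = 0 => hfK (h ▸ K.zero_mem)
    obtain ⟨m2, hm2⟩ := Finsupp.support_nonempty_iff.2 fun h : g = 0 => hgK (h ▸ K.zero_mem)
    obtain rfl := hf m1 hm1
    obtain rfl := hg m2 hm2
    rw [D.ev_cv hS.adm hS.dead hf hfc (hfc m1 hm1) hg hgc, Submodule.mem_bot, smul_eq_zero] at h
    have h2 := h.resolve_left (D.ω_ne _)
    rw [← LinearMap.mem_ker, hker] at h2
    exact (hK.prm _ _ f g hf hfc hg hgc h2).elim hfK hgK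

/-- The coordinate condition for primitive ideals: core monomials of the same key are
proportional. -/
def _root_.PW.KeyRigid (F : Form n E) (T : Ltr n → Prop) (K : Submodule ℂ (Mon n →₀ ℂ)) : Prop :=
  ∀ m m', Core T m → Core T m' → key F T m = key F T m' →
    ∃ c : ℂ, Finsupp.single m 1 - c • Finsupp.single m' 1 ∈ K

lemma core_mem (hK : Good F T K) (hker : LinearMap.ker D.ev = K) (h7 : KeyRigid F T K)
    {I : Submodule ℂ W} (hI : D.IsId I) (h0 : I ≠ ⊥) : ∃ m, Core T m ∧ D.e m ∈ I := by
  obtain ⟨χ, f, hf, hfc, hfK, hfI⟩ := D.core_elem hK hker hI h0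
  obtain ⟨m0, hm0⟩ := Finsupp.support_nonempty_iff.2 fun h : f = 0 => hfK (h ▸ K.zero_mem)
  refine ⟨m0, hfc m0 hm0, ?_⟩
  have : ∀ m, ∃ c : ℂ, m ∈ f.support → D.e m = c • D.e m0 := by
    intro m
    by_cases hm : m ∈ f.support
    · obtain ⟨c, hc⟩ := h7 m m0 (hfc m hm) (hfc m0 hm0) ((hf m hm).trans (hf m0 hm0).symm)
      rw [← hker, LinearMap.mem_ker, map_sub, map_smul, ev_single, ev_single, one_smul, one_smul,
        sub_eq_zero] at hc
      exact ⟨c, fun _ => hc⟩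
    · exact ⟨0, fun h => absurd h hm⟩
  choose c hc using this
  have h1 : D.ev f = (f.sum fun m a => a * c m) • D.e m0 := by
    rw [D.ev_eq, Finsupp.sum, Finsupp.sum, Finset.sum_smul]
    exact Finset.sum_congr rfl fun m hm => by rw [hc m hm, smul_smul]
  have h2 : (f.sum fun m a => a * c m) ≠ 0 := fun h => hfK <| by
    rw [← hker, LinearMap.mem_ker, h1, h, zero_smul]
  rw [h1] at hfI
  have := I.smul_mem (f.sum fun m a => a * c m)⁻¹ hfI
  rwa [smul_smul, inv_mul_cancel₀ h2, one_smul] at this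

/-- Good subspaces are the coordinates of ideals. -/
lemma isId_of_good (hK : Good F T K) : D.IsId (K.map D.ev) := by
  have hId := D.isId_dead hK.adm
  let q := hId.quo
  have hd : ∀ g, T g → q.D'.gW g = 0 := fun g hg => by
    rw [← q.gW, q.ker, ← e_mon]
    exact Submodule.subset_span ⟨_, not_alive_mon hK.adm hg, rfl⟩
  have h := q.isId_comap (q.D'.isId_good hd hK)
  convert h using 1
  ext w
  constructor
  · rintro ⟨f, hf, rfl⟩
    exact ⟨f, hf, (q.ev f).symm⟩
  · rintro ⟨f, hf, hfw⟩
    have h1 : w - D.ev f ∈ Submodule.span ℂ (D.e '' {m | ¬ Alive T m}) := by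
      rw [← q.ker, map_sub, q.ev, hfw]
      exact sub_self _
    have h2 : Submodule.span ℂ (D.e '' {m | ¬ Alive T m}) ≤ K.map D.ev := by
      rw [Submodule.span_le]
      rintro _ ⟨m, hm, rfl⟩
      exact ⟨_, hK.dead m hm, by simp⟩
    have := Submodule.add_mem _ (h2 h1) (Submodule.mem_map_of_mem (f := D.ev) hf)
    simpa using this

/-- Prime ideals are the ideals with good coordinates. -/
lemma isPr_iff_good (hinj : Function.Injective D.ev) :
    D.IsPr (K.map D.ev) ↔ ∃ T, Good F T K := by
  have hk : ∀ f, D.ev f ∈ K.map D.ev ↔ f ∈ K := fun f =>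
    ⟨fun ⟨g, hg, h⟩ => hinj h ▸ hg, fun h => ⟨f, h, rfl⟩⟩
  constructor
  · intro h
    let q := h.id.quo
    have h1 := q.D'.good_of_prime ((q.isPr_iff h.id).1 h)
    have : LinearMap.ker q.D'.ev = K := by
      ext f
      rw [LinearMap.mem_ker, q.ev_eq_zero, hk]
    rw [this] at h1
    exact ⟨_, h1⟩
  · rintro ⟨T, hK⟩
    have hid := D.isId_of_good hK
    let q := hid.quo
    rw [q.isPr_iff hid]
    refine q.D'.prime_of_good hK ?_
    ext f
    rw [LinearMap.mem_ker, q.ev_eq_zero, hk]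

end QW
end
end PW

namespace PW
open scoped Classical
noncomputable section
variable {n : ℕ} {E : Type} [AddCommGroup E] {F : Form n E} {W : Type} [Ring W] [Algebra ℂ W]

/-! ### Linear independence of the standard monomials -/

/-- A grading of the weight lattice, increasing on the weights of `z_0, z_1, …`. -/
def dg : Gam n →+ ℤ where
  toFun v := ∑ j : Fin n, ((j : ℤ) + 1) * v.2 j
  map_zero' := by simp
  map_add' u v := by simp [mul_add, Finset.sum_add_distrib]

lemma dg_zd (j : Fin (n + 1)) : dg (zd j : Gam n) = (j : ℕ) := by
  induction j using Fin.cases with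
  | zero => simp [dg, zd, (Fin.succ_ne_zero _)]
  | succ j => simp [dg, zd]

lemma dg_yd (i : Fin n) : dg (yd i : Gam n) = 0 := by simp [dg, yd]

section torus
variable {U : Type} [Ring U] [Algebra ℂ U] (u : Gam n → U)

/-- The span of the torus monomials of weights in `A`. -/
def spn (A : Set (Gam n)) : Submodule ℂ U := Submodule.span ℂ (Set.image u A)

/-- `w` has leading term a nonzero multiple of `u t`. -/
def Lead (t : Gam n) (w : U) : Prop := ∃ c : ℂ, c ≠ 0 ∧ w - c • u t ∈ spn u {v | dg v < dg t}

variable {u}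

lemma spn_mul {ω : Gam n → Gam n → ℂ} (hu : ∀ v w, u v * u w = ω v w • u (v + w))
    {A B C : Set (Gam n)} (h : ∀ a ∈ A, ∀ b ∈ B, a + b ∈ C) {a b : U} (ha : a ∈ spn u A)
    (hb : b ∈ spn u B) : a * b ∈ spn u C := by
  induction ha using Submodule.span_induction with
  | mem x hx =>
    obtain ⟨v, hv, rfl⟩ := hx
    induction hb using Submodule.span_induction with
    | mem y hy =>
      obtain ⟨w, hw, rfl⟩ := hy
      rw [hu]
      exact Submodule.smul_mem _ _ (Submodule.subset_span ⟨_, h v hv w hw, rfl⟩)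
    | zero => rw [mul_zero]; exact Submodule.zero_mem _
    | add x y _ _ hx hy => rw [mul_add]; exact Submodule.add_mem _ hx hy
    | smul c x _ hx => rw [mul_smul_comm]; exact Submodule.smul_mem _ _ hx
  | zero => rw [zero_mul]; exact Submodule.zero_mem _
  | add x y _ _ hx hy => rw [add_mul]; exact Submodule.add_mem _ hx hy
  | smul c x _ hx => rw [smul_mul_assoc]; exact Submodule.smul_mem _ _ hx

lemma Lead.mul {ω : Gam n → Gam n → ℂ} (hu : ∀ v w, u v * u w = ω v w • u (v + w))
    (hω : ∀ v w, ω v w ≠ 0) {t t' : Gam n} {w w' : U} (h : Lead u t w) (h' : Lead u t' w') :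
    Lead u (t + t') (w * w') := by
  obtain ⟨c, hc, h⟩ := h
  obtain ⟨c', hc', h'⟩ := h'
  refine ⟨c * c' * ω t t', mul_ne_zero (mul_ne_zero hc hc') (hω _ _), ?_⟩
  have hs : ∀ t, u t ∈ spn u {t} := fun t => Submodule.subset_span ⟨t, rfl, rfl⟩
  have key : w * w' - (c * c' * ω t t') • u (t + t')
      = (w - c • u t) * (w' - c' • u t') + c' • ((w - c • u t) * u t')
        + c • (u t * (w' - c' • u t')) := by
    rw [mul_smul, ← hu]
    simp only [sub_mul, mul_sub, smul_sub, smul_mul_assoc, mul_smul_comm, smul_smul]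
    rw [mul_comm c' c]
    abel
  rw [key]
  refine Submodule.add_mem _ (Submodule.add_mem _ ?_ (Submodule.smul_mem _ _ ?_))
    (Submodule.smul_mem _ _ ?_)
  · exact spn_mul hu (fun a ha b hb => by
      simp only [Set.mem_ofPred_eq, map_add] at *; omega) h h'
  · exact spn_mul hu (fun a ha b hb => by
      simp only [Set.mem_ofPred_eq, Set.mem_singleton_iff, map_add] at *; rw [hb]; omega) h (hs t')
  · exact spn_mul hu (fun a ha b hb => by
      simp only [Set.mem_ofPred_eq, Set.mem_singleton_iff, map_add] at *; rw [ha]; omega) (hs t) h'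

lemma Lead.smul {t : Gam n} {w : U} (h : Lead u t w) {a : ℂ} (ha : a ≠ 0) :
    Lead u t (a • w) := by
  obtain ⟨c, hc, h⟩ := h
  refine ⟨a * c, mul_ne_zero ha hc, ?_⟩
  rw [mul_smul, ← smul_sub]
  exact Submodule.smul_mem _ _ h

lemma lead_self (t : Gam n) : Lead u t (u t) := ⟨1, one_ne_zero, by simp⟩

lemma Lead.pow {ω : Gam n → Gam n → ℂ} (hu : ∀ v w, u v * u w = ω v w • u (v + w))
    (hω : ∀ v w, ω v w ≠ 0) (h1 : u 0 = 1) {t : Gam n} {w : U} (h : Lead u t w) (k : ℕ) :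
    Lead u (k • t) (w ^ k) := by
  induction k with
  | zero => rw [zero_smul, pow_zero, ← h1]; exact lead_self 0
  | succ k ih => rw [pow_succ, succ_nsmul]; exact ih.mul hu hω h

/-- A map to a quantum torus under which the generators have distinct leading terms shows the
standard monomials to be independent. -/
lemma QW.ev_inj (D : QW F W) (co : Gam n → U →ₗ[ℂ] ℂ)
    (hco : ∀ v w, co v (u w) = if w = v then 1 else 0) (h1 : u 0 = 1)
    (hu : ∀ v w, u v * u w = D.ω (F.B v w) • u (v + w)) (π : W →ₐ[ℂ] U)
    (hy : ∀ i, π (D.y i) = u (yd i)) (hz : ∀ j, π (D.z j) = u (zd j))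
    (hx : ∀ i, π (D.x i) = u (zd i.castSucc - yd i) + u (zd i.succ - yd i)) :
    Function.Injective D.ev := by
  have hω : ∀ v w, D.ω (F.B v w) ≠ 0 := fun v w => D.ω_ne _
  have lx : ∀ i, Lead u (zd i.succ - yd i) (π (D.x i)) := fun i => by
    refine ⟨1, one_ne_zero, ?_⟩
    rw [hx, one_smul, add_sub_cancel_right]
    refine Submodule.subset_span ⟨_, ?_, rfl⟩
    simp [dg_zd, dg_yd]
  have lf : ∀ m t, Lead u (vm Fin.succ m t) (π (D.fac m t)) := by
    rintro m (j | i)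
    · simp only [QW.fac, vm, map_pow, hz]
      exact (lead_self _).pow hu hω h1 _
    · simp only [QW.fac, vm, map_mul, map_pow, hy]
      have := ((lead_self (u := u) (yd i)).pow hu hω h1 (m.1 i).toNat).mul hu hω
        ((lx i).pow hu hω h1 (-(m.1 i)).toNat)
      convert this using 1
      rw [smul_sub, ← natCast_zsmul, ← natCast_zsmul, ← natCast_zsmul]
      have : m.1 i = ((m.1 i).toNat : ℤ) - ((-(m.1 i)).toNat : ℤ) := by omega
      conv_lhs => rw [this, sub_smul, ← this]
      abel
  have lh : ∀ m (L : List (Fin n ⊕ Fin n)), Lead u ((L.map (vm Fin.succ m)).sum)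
      (π (D.hat (D.fac m) (vm Fin.castSucc m) L)) := by
    intro m L
    induction L with
    | nil => simp only [QW.hat, map_one, List.map_nil, List.sum_nil, ← h1]; exact lead_self 0
    | cons t L ih =>
      rw [QW.hat, map_smul, map_mul, List.map_cons, List.sum_cons]
      exact ((lf m t).mul hu hω ih).smul (D.ω_ne _)
  have le : ∀ m, Lead u (vec Fin.succ m) (π (D.e m)) := fun m => by
    have := lh m Finset.univ.toList
    rwa [sum_toList] at this
  have hlow : ∀ v N, dg v ≥ N → ∀ w ∈ spn u {v | dg v < N}, co v w = 0 := by
    intro v N hv w hw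
    induction hw using Submodule.span_induction with
    | mem x hx =>
      obtain ⟨w, hw, rfl⟩ := hx
      rw [hco, if_neg]
      rintro rfl
      have : dg w < N := hw
      omega
    | zero => rw [map_zero]
    | add x y _ _ hx hy => rw [map_add, hx, hy, add_zero]
    | smul c x _ hx => rw [map_smul, hx, smul_zero]
  rw [← LinearMap.ker_eq_bot, LinearMap.ker_eq_bot']
  intro f hf
  by_contra h0
  obtain ⟨m, hm, hmax⟩ := f.support.exists_max_image (fun m => dg (vec Fin.succ m))
    (Finsupp.support_nonempty_iff.2 h0)
  have h2 : co (vec Fin.succ m) (π (D.ev f)) = 0 := by rw [hf, map_zero, map_zero]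
  rw [D.ev_eq, Finsupp.sum, map_sum, map_sum, Finset.sum_eq_single m] at h2
  · obtain ⟨c, hc, h⟩ := le m
    have h3 := hlow _ _ le_rfl _ h
    rw [map_sub, map_smul, hco, if_pos rfl, sub_eq_zero, smul_eq_mul, mul_one] at h3
    rw [map_smul, map_smul, h3, smul_eq_mul] at h2
    exact mul_ne_zero (Finsupp.mem_support_iff.1 hm) hc h2
  · intro m' hm' hne
    obtain ⟨c, hc, h⟩ := le m'
    have h3 := hlow (vec Fin.succ m) _ (hmax m' hm') _ h
    rw [map_sub, map_smul, hco, if_neg (fun h => hne (vec_inj _ h)), smul_zero, sub_zero] at h3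
    rw [map_smul, map_smul, h3, smul_zero]
  · exact fun h => absurd hm h

end torus
end
end PW

namespace PW
noncomputable section
variable {n : ℕ} {E : Type} [AddCommGroup E]

/-! ### The form attached to the parameters -/

/-- The alternating form with `B(y_i, y_j) = l i j` and `B(z_j, y_i) = s i` for `i < j`. -/
def formB (s : Fin n → E) (l : Fin n → Fin n → E) (u v : Gam n) : E :=
  ∑ i, ∑ j, (u.1 i * v.1 j) • l i j +
    ∑ i, ∑ j, if i ≤ j then (u.2 j * v.1 i - v.2 j * u.1 i) • s i else 0

lemma formB_add_right (s : Fin n → E) (l : Fin n → Fin n → E) (u v w : Gam n) :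
    formB s l u (v + w) = formB s l u v + formB s l u w := by
  unfold formB
  rw [add_add_add_comm]
  congr 1 <;> rw [← Finset.sum_add_distrib] <;> refine Finset.sum_congr rfl fun i _ => ?_
  · rw [← Finset.sum_add_distrib]
    refine Finset.sum_congr rfl fun j _ => ?_
    rw [← add_smul, Prod.fst_add, Pi.add_apply, mul_add]
  · rw [← Finset.sum_add_distrib]
    refine Finset.sum_congr rfl fun j _ => ?_
    split_ifs
    · rw [← add_smul, Prod.fst_add, Pi.add_apply, Prod.snd_add, Pi.add_apply]
      congr 1; ring
    · rw [add_zero]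

lemma formB_add_left (s : Fin n → E) (l : Fin n → Fin n → E) (u v w : Gam n) :
    formB s l (u + v) w = formB s l u w + formB s l v w := by
  unfold formB
  rw [add_add_add_comm]
  congr 1 <;> rw [← Finset.sum_add_distrib] <;> refine Finset.sum_congr rfl fun i _ => ?_
  · rw [← Finset.sum_add_distrib]
    refine Finset.sum_congr rfl fun j _ => ?_
    rw [← add_smul, Prod.fst_add, Pi.add_apply, add_mul]
  · rw [← Finset.sum_add_distrib]
    refine Finset.sum_congr rfl fun j _ => ?_
    split_ifs
    · rw [← add_smul, Prod.fst_add, Pi.add_apply, Prod.snd_add, Pi.add_apply]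
      congr 1; ring
    · rw [add_zero]

lemma formB_alt (s : Fin n → E) (l : Fin n → Fin n → E) (hl : ∀ i j, l i j = - l j i)
    (hl0 : ∀ i, l i i = 0) (u : Gam n) : formB s l u u = 0 := by
  unfold formB
  have h2 : (∑ i, ∑ j, if i ≤ j then (u.2 j * u.1 i - u.2 j * u.1 i) • s i else 0) = 0 := by
    refine Finset.sum_eq_zero fun i _ => Finset.sum_eq_zero fun j _ => ?_
    simp
  rw [h2, add_zero, ← Finset.sum_product', Finset.univ_product_univ]
  refine Finset.sum_involution (fun a _ => (a.2, a.1)) ?_ ?_ ?_ ?_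
  · rintro ⟨i, j⟩ -
    change (u.1 i * u.1 j) • l i j + (u.1 j * u.1 i) • l j i = 0
    rw [hl i j, mul_comm, smul_neg, neg_add_cancel]
  · rintro ⟨i, j⟩ - h h'
    obtain rfl : j = i := (Prod.mk.inj h').1
    exact h (by simp [hl0])
  · simp
  · simp

/-- The form defining the commutation relations. -/
def mkForm (s : Fin n → E) (hs : ∀ i (k : ℤ), k • s i = 0 → k = 0) (l : Fin n → Fin n → E)
    (hl : ∀ i j, l i j = - l j i) (hl0 : ∀ i, l i i = 0) : Form n E where
  B := AddMonoidHom.mk' (fun u => AddMonoidHom.mk' (formB s l u) (formB_add_right s l u))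
    (fun u v => by ext1 w; exact formB_add_left s l u v w)
  s := s
  s_ne := hs
  alt := formB_alt s l hl hl0
  Bzz j k := by
    change formB s l _ _ = 0
    simp [formB, zd]
  Bzy j i := by
    change formB s l _ _ = _
    simp only [formB, zd, yd, Pi.zero_apply, zero_mul, zero_smul, Finset.sum_const_zero, zero_add,
      Pi.single_apply, sub_zero]
    rw [Finset.sum_eq_single i]
    · induction j using Fin.cases with
      | zero => simp [(Fin.succ_ne_zero _)]
      | succ j =>
        rw [Finset.sum_eq_single j]
        · simp [Fin.castSucc_lt_succ_iff]
        · intro k _ hk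
          simp [hk]
        · simp
    · intro k _ hk
      simp [hk]
    · simp

section
variable (s : Fin n → E) (hs : ∀ i (k : ℤ), k • s i = 0 → k = 0) (l : Fin n → Fin n → E)
    (hl : ∀ i j, l i j = - l j i) (hl0 : ∀ i, l i i = 0)

lemma mkForm_yy (i j : Fin n) : (mkForm s hs l hl hl0).B (yd i) (yd j) = l i j := by
  change formB s l _ _ = _
  simp only [formB, yd, Pi.zero_apply, zero_mul, sub_zero, zero_smul, ite_self,
    Finset.sum_const_zero, add_zero]
  rw [Finset.sum_eq_single i, Finset.sum_eq_single j]
  · simp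
  · intro k _ hk; simp [hk]
  · simp
  · intro k _ hk; simp [hk]
  · simp

lemma mkForm_s : (mkForm s hs l hl hl0).s = s := rfl

end

/-! ### Partial sums -/

/-- `1 + ∑_{k < m} g k`. -/
def psum {V : Type} [Ring V] (g : Fin n → V) (m : ℕ) : V :=
  1 + ∑ k : Fin n, if (k : ℕ) < m then g k else 0

lemma psum_zero {V : Type} [Ring V] (g : Fin n → V) : psum g 0 = 1 := by simp [psum]

lemma psum_succ {V : Type} [Ring V] (g : Fin n → V) (i : Fin n) :
    psum g ((i : ℕ) + 1) = psum g i + g i := by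
  have : g i = ∑ k, if k = i then g k else 0 := by simp
  rw [psum, psum, this, add_assoc, ← Finset.sum_add_distrib]
  congr 1
  refine Finset.sum_congr rfl fun k _ => ?_
  by_cases h : k = i
  · subst h; simp
  · have h' : (k : ℕ) ≠ i := fun h' => h (Fin.ext h')
    by_cases h2 : (k : ℕ) < i
    · simp [h, h2, Nat.lt_succ_of_lt h2]
    · have h3 : ¬ (k : ℕ) < (i : ℕ) + 1 := by omega
      simp [h, h2, h3]

lemma zP_eq (m : ℕ) : zP n m = psum (fun k => yP n k * xP n k) m := by
  rw [zP, psum, Finset.sum_filter]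

/-! ### The Poisson Weyl algebra -/

section poisson
variable {F : Form n E} (κ : E →+ ℂ) (hκ : Function.Injective κ)
    (B : PoissonBr (MvPolynomial (Fin n ⊕ Fin n) ℂ))
    (hBsmul : ∀ (c : ℂ) (a b : MvPolynomial (Fin n ⊕ Fin n) ℂ), B.br (c • a) b = c • B.br a b)

/-- The Poisson bracket as a bilinear map. -/
def brA : MvPolynomial (Fin n ⊕ Fin n) ℂ →ₗ[ℂ] MvPolynomial (Fin n ⊕ Fin n) ℂ →ₗ[ℂ]
    MvPolynomial (Fin n ⊕ Fin n) ℂ :=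
  LinearMap.mk₂ ℂ B.br B.add_left hBsmul
    (fun a b c => by rw [B.skew, B.add_left, B.skew b, B.skew c]; abel)
    (fun c a b => by rw [B.skew, hBsmul, B.skew b, smul_neg, neg_neg])

/-- The Poisson Weyl algebra satisfies the common axioms, after rescaling by signs. -/
def poissonQW
    (hyy : ∀ i j : Fin n, i < j →
      B.br (yP n j) (yP n i) = κ (F.B (yd j) (yd i)) • (yP n i * yP n j))
    (hyx : ∀ i j : Fin n, i < j →
      B.br (yP n j) (xP n i) = κ (F.B (yd j) (zd i.castSucc - yd i)) • (xP n i * yP n j))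
    (hxy : ∀ i j : Fin n, i < j →
      B.br (xP n j) (yP n i) = κ (F.B (zd j.castSucc - yd j) (yd i)) • (yP n i * xP n j))
    (hxx : ∀ i j : Fin n, i < j → B.br (xP n j) (xP n i) =
      κ (F.B (zd j.castSucc - yd j) (zd i.castSucc - yd i)) • (xP n i * xP n j))
    (hxyi : ∀ i : Fin n, B.br (xP n i) (yP n i) = κ (F.s i) • zP n ((i : ℕ) + 1)) :
    QW F (MvPolynomial (Fin n ⊕ Fin n) ℂ) where
  ω _ := 1
  κ := κ
  τ := 0
  br := brA B hBsmul
  y i := (-1 : ℂ) ^ ((i : ℕ) + 1) • yP n i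
  x i := xP n i
  z j := (-1 : ℂ) ^ (j : ℕ) • zP n j
  ω_zero := rfl
  ω_add _ _ := by simp
  ω_κ _ := by simp
  κ_inj := hκ
  κ_add a b := by simp
  comm a b := by rw [mul_comm, sub_self, zero_smul]
  skew a b := B.skew a b
  leib a b c := by
    change B.br a (b * c) = B.br a b * c + b * B.br a c
    rw [B.skew, B.leibniz, B.skew b, B.skew c]; ring
  z0 := by simp [zP]
  yx i := by
    simp only [Fin.val_succ, Fin.val_castSucc, zP_eq, psum_succ, one_smul, pow_succ, smul_mul_assoc]
    module
  brxy i := by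
    change B.br (xP n i) (_ • yP n i) = _
    rw [B.skew, hBsmul, ← smul_neg, ← B.skew, hxyi, mul_one, smul_smul, smul_smul, map_neg,
      neg_neg, mul_comm, Fin.val_succ]
  bryy i j h := by
    change B.br (_ • yP n j) (_ • yP n i) = _
    rw [hBsmul, B.skew, hBsmul, ← smul_neg, ← B.skew, hyy i j h, smul_mul_smul_comm,
      mul_comm (yP n i), smul_smul, smul_smul, smul_smul]
    congr 1; ring
  bryx i j h := by
    change B.br (_ • yP n j) (xP n i) = _
    rw [hBsmul, hyx i j h, mul_comm (xP n i), smul_mul_assoc, smul_comm]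
  brxy' i j h := by
    change B.br (xP n j) (_ • yP n i) = _
    rw [B.skew, hBsmul, ← smul_neg, ← B.skew, hxy i j h, mul_comm (yP n i), mul_smul_comm,
      smul_comm]
  brxx i j h := by
    change B.br (xP n j) (xP n i) = _
    rw [hxx i j h, mul_comm (xP n i)]
  gen S hy hx := by
    rw [eq_top_iff, ← MvPolynomial.adjoin_range_X, Algebra.adjoin_le_iff]
    rintro _ ⟨i | i, rfl⟩
    · have := S.smul_mem (hy i) ((-1 : ℂ) ^ ((i : ℕ) + 1))
      rw [smul_smul, ← mul_pow] at this
      simpa [yP] using this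
    · exact hx i

lemma poisson_inj (D : QW F (MvPolynomial (Fin n ⊕ Fin n) ℂ)) (hω : ∀ e, D.ω e = 1)
    (hy : ∀ i, D.y i = (-1 : ℂ) ^ ((i : ℕ) + 1) • yP n i) (hx : ∀ i, D.x i = xP n i) :
    Function.Injective D.ev := by
  classical
  let u : Gam n → AddMonoidAlgebra ℂ (Gam n) := fun v => AddMonoidAlgebra.single v 1
  have hu : ∀ v w, u v * u w = u (v + w) := fun v w => by
    simp [u, AddMonoidAlgebra.single_mul_single]
  let π : MvPolynomial (Fin n ⊕ Fin n) ℂ →ₐ[ℂ] AddMonoidAlgebra ℂ (Gam n) :=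
    MvPolynomial.aeval (Sum.elim (fun i => (-1 : ℂ) ^ ((i : ℕ) + 1) • u (yd i))
      (fun i => u (zd i.castSucc - yd i) + u (zd i.succ - yd i)))
  have hπy : ∀ i, π (D.y i) = u (yd i) := fun i => by
    simp only [hy, map_smul, yP, π, MvPolynomial.aeval_X, Sum.elim_inl]
    rw [smul_smul, ← mul_pow]; simp
  have hπx : ∀ i, π (D.x i) = u (zd i.castSucc - yd i) + u (zd i.succ - yd i) := fun i => by
    simp only [hx, xP, π, MvPolynomial.aeval_X, Sum.elim_inr]
  have h1 : u 0 = 1 := rfl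
  have hπz : ∀ j, π (D.z j) = u (zd j) := by
    intro j
    induction j using Fin.induction with
    | zero => rw [D.z0, map_one, zd_zero, h1]
    | succ i ih =>
      have := congrArg π (D.yx i)
      rw [map_mul, hπy, hπx, hω, one_smul, map_add, ih, mul_add, hu, hu, add_sub_cancel,
        add_sub_cancel, add_comm] at this
      exact (add_right_cancel this).symm
  refine QW.ev_inj D (u := u) 
    (fun v => Finsupp.lapply v ∘ₗ (AddMonoidAlgebra.coeffLinearEquiv ℂ).toLinearMap) ?_ h1 (fun v w => ?_) π hπy hπz hπx
  · intro v w
    simp [u, Finsupp.single_apply]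
  · rw [hu, hω, one_smul]

end poisson
end
end PW

namespace PW
noncomputable section
variable {n : ℕ} {E : Type} [AddCommGroup E]

/-! ### The quantized Weyl algebra -/

namespace Form

variable (F : Form n E) {i j : Fin n} (h : i < j)
include h

lemma B_yx : F.B (yd j) (zd i.castSucc - yd i) = F.B (yd i) (yd j) := by
  rw [map_sub, F.Byz, if_neg (by simpa using h.le), zero_sub, ← F.swap]

lemma B_xy : F.B (zd j.castSucc - yd j) (yd i) = F.s i + F.B (yd i) (yd j) := by
  rw [map_sub, AddMonoidHom.sub_apply, F.Bzy, if_pos (by simpa using h), F.swap (yd j),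
    sub_neg_eq_add]

lemma B_xx : F.B (zd j.castSucc - yd j) (zd i.castSucc - yd i) =
    -(F.s i + F.B (yd i) (yd j)) := by
  rw [map_sub, B_xy F h, map_sub, AddMonoidHom.sub_apply, F.Bzz, F.Byz,
    if_neg (by simpa using h.le), sub_zero, zero_sub]

end Form

section quantum
variable (F : Form n E) (ω : E → ℂ) (h0 : ω 0 = 1) (hadd : ∀ a b, ω (a + b) = ω a * ω b)
  (hinj : ∀ a, ω (a + a) = 1 → a = 0)

/-- `∑_{k < m} s k`. -/
def ssum (m : ℕ) : E := ∑ k : Fin n, if (k : ℕ) < m then F.s k else 0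

lemma ssum_zero : ssum F 0 = 0 := by simp [ssum]

lemma ssum_succ (i : Fin n) : ssum F ((i : ℕ) + 1) = ssum F i + F.s i := by
  have : F.s i = ∑ k, if k = i then F.s k else 0 := by simp
  rw [ssum, ssum, this, ← Finset.sum_add_distrib]
  refine Finset.sum_congr rfl fun k _ => ?_
  by_cases h : k = i
  · subst h; simp
  · have h' : (k : ℕ) ≠ i := fun h' => h (Fin.ext h')
    by_cases h2 : (k : ℕ) < i
    · simp [h, h2, Nat.lt_succ_of_lt h2]
    · have h3 : ¬ (k : ℕ) < (i : ℕ) + 1 := by omega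
      simp [h, h2, h3]

/-- The commutator as a bilinear map. -/
def brR (W : Type) [Ring W] [Algebra ℂ W] : W →ₗ[ℂ] W →ₗ[ℂ] W :=
  LinearMap.mul ℂ W - (LinearMap.mul ℂ W).flip

lemma brR_apply {W : Type} [Ring W] [Algebra ℂ W] (a b : W) : brR W a b = a * b - b * a := rfl

include h0 hadd in
lemma brR_of_comm {W : Type} [Ring W] [Algebra ℂ W] {a b : W} {e : E}
    (h : a * b = ω (e + e) • (b * a)) : brR W a b = (1 - ω (-(e + e))) • (a * b) := by
  rw [brR_apply, sub_smul, one_smul, h, smul_smul, ← hadd, neg_add_cancel, h0, one_smul]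

/-- The scalar by which the generator `y_i` is rescaled. -/
def ysc (i : Fin n) : ℂ :=
  (-1) ^ ((i : ℕ) + 1) * ω (ssum F i) * (ω (F.s i + F.s i) - 1)

/-- The scalar by which `z_j` is rescaled. -/
def zsc (j : ℕ) : ℂ := (-1) ^ j * ω (ssum F j)

section
include h0 hadd

lemma omega_ne (a : E) : ω a ≠ 0 := fun h => by
  have := hadd a (-a)
  rw [add_neg_cancel, h0, h, zero_mul] at this
  exact one_ne_zero this

lemma zsc_ne (j : ℕ) : zsc F ω j ≠ 0 :=
  mul_ne_zero (pow_ne_zero _ (by norm_num)) (omega_ne ω h0 hadd _)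

omit hadd in
lemma zsc_zero : zsc F ω 0 = 1 := by simp [zsc, ssum_zero, h0]

omit h0 in
lemma zsc_succ (i : Fin n) : zsc F ω ((i : ℕ) + 1) = - (zsc F ω i * ω (F.s i)) := by
  rw [zsc, ssum_succ, hadd, zsc]; ring

omit h0 hadd in
lemma ysc_eq (i : Fin n) : ysc F ω i = -(zsc F ω i * (ω (F.s i + F.s i) - 1)) := by
  rw [ysc, zsc]; ring

include hinj in
lemma ysc_ne (i : Fin n) : ysc F ω i ≠ 0 := by
  rw [ysc_eq]
  refine neg_ne_zero.2 (mul_ne_zero (zsc_ne F ω h0 hadd _) (sub_ne_zero.2 fun h => ?_))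
  exact one_ne_zero (F.s_ne i 1 (by rw [one_smul]; exact hinj _ h))

lemma omega_neg_mul (a : E) : ω (-a) * ω a = 1 := by
  rw [← hadd, neg_add_cancel, h0]

end

/-- An algebra generated by elements satisfying the relations of the quantized Weyl algebra
satisfies the common axioms, after rescaling. -/
def quantumQW {W : Type} [Ring W] [Algebra ℂ W] (Y X : Fin n → W)
    (hyy : ∀ i j, i < j → Y j * Y i = ω (F.B (yd j) (yd i) + F.B (yd j) (yd i)) • (Y i * Y j))
    (hyx : ∀ i j, i < j → Y j * X i = ω (F.B (yd i) (yd j) + F.B (yd i) (yd j)) • (X i * Y j))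
    (hxy : ∀ i j, i < j → X j * Y i =
      ω ((F.s i + F.B (yd i) (yd j)) + (F.s i + F.B (yd i) (yd j))) • (Y i * X j))
    (hxx : ∀ i j, i < j → X j * X i =
      ω (-(F.s i + F.B (yd i) (yd j)) + -(F.s i + F.B (yd i) (yd j))) • (X i * X j))
    (hw : ∀ i, X i * Y i - ω (F.s i + F.s i) • (Y i * X i) =
      psum (fun k => (ω (F.s k + F.s k) - 1) • (Y k * X k)) i)
    (hgen : ∀ S : Subalgebra ℂ W, (∀ i, Y i ∈ S) → (∀ i, X i ∈ S) → S = ⊤) : QW F W where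
  ω := ω
  κ e := 1 - ω (-(e + e))
  τ := 1
  br := brR W
  y i := ysc F ω i • Y i
  x := X
  z j := zsc F ω j • psum (fun k => (ω (F.s k + F.s k) - 1) • (Y k * X k)) j
  ω_zero := h0
  ω_add := hadd
  ω_κ _ := by ring
  κ_inj a b h := by
    have h1 : ω (-(a + a)) = ω (-(b + b)) := by simpa using h
    have h2 := omega_neg_mul ω h0 hadd (b + b)
    rw [← h1, ← hadd] at h2
    have h3 := hinj (-a + b) (by rw [← h2]; congr 1; abel)
    rwa [neg_add_eq_zero] at h3
  κ_add a b := by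
    rw [show -(a + b + (a + b)) = -(a + a) + -(b + b) by abel, hadd]; ring
  comm a b := by rw [one_smul]; rfl
  skew a b := by rw [brR_apply, brR_apply, neg_sub]
  leib a b c := by simp only [brR_apply]; noncomm_ring
  z0 := by rw [Fin.val_zero, psum_zero, zsc_zero F ω h0, one_smul]
  yx i := by
    rw [Fin.val_succ, psum_succ, Fin.val_castSucc, zsc_succ F ω hadd, ysc_eq, smul_smul,
      smul_mul_assoc]
    rw [show ω (-F.s i) * -(zsc F ω i * ω (F.s i)) = -zsc F ω i by
      linear_combination (-zsc F ω i) * omega_neg_mul ω h0 hadd (F.s i)]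
    module
  brxy i := by
    rw [Fin.val_succ, psum_succ, zsc_succ F ω hadd, ysc_eq, smul_smul, map_smul, brR_apply, ← hw,
      show -(-F.s i + -F.s i) = F.s i + F.s i by abel]
    rw [show -((1 - ω (F.s i + F.s i)) * ω (-F.s i)) * -(zsc F ω i * ω (F.s i)) =
      -(zsc F ω i * (ω (F.s i + F.s i) - 1)) by
        linear_combination (1 - ω (F.s i + F.s i)) * zsc F ω i * omega_neg_mul ω h0 hadd (F.s i)]
    congr 1
    module
  bryy i j h := by
    rw [map_smul, map_smul, LinearMap.smul_apply, brR_of_comm ω h0 hadd (hyy i j h),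
      smul_mul_smul_comm]
    module
  bryx i j h := by
    rw [F.B_yx h, map_smul, LinearMap.smul_apply, brR_of_comm ω h0 hadd (hyx i j h),
      smul_mul_assoc, smul_comm]
  brxy' i j h := by
    rw [F.B_xy h, map_smul, brR_of_comm ω h0 hadd (hxy i j h), mul_smul_comm, smul_comm]
  brxx i j h := by
    rw [F.B_xx h, brR_of_comm ω h0 hadd (hxx i j h)]
  gen S hy hx := hgen S (fun i => by
    have := S.smul_mem (hy i) (ysc F ω i)⁻¹
    rwa [smul_smul, inv_mul_cancel₀ (ysc_ne F ω h0 hadd hinj i), one_smul] at this) hx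

/-- The operators `u_v` generating the quantum torus, acting on its regular module. -/
def uop (v : Gam n) : Module.End ℂ (Gam n →₀ ℂ) :=
  Finsupp.lsum ℂ fun w => ω (F.B v w) • Finsupp.lsingle (v + w)

lemma uop_single (v w : Gam n) (c : ℂ) :
    uop F ω v (Finsupp.single w c) = ω (F.B v w) • Finsupp.single (v + w) c := by
  simp [uop]

include h0 in
lemma uop_zero : uop F ω 0 = 1 := by
  refine Finsupp.lhom_ext fun w c => ?_
  rw [uop_single]; simp [h0]

include hadd in
lemma uop_mul (v w : Gam n) : uop F ω v * uop F ω w = ω (F.B v w) • uop F ω (v + w) := by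
  refine Finsupp.lhom_ext fun t c => ?_
  rw [Module.End.mul_apply, uop_single, map_smul, uop_single, LinearMap.smul_apply, uop_single,
    smul_smul, smul_smul, map_add, map_add, AddMonoidHom.add_apply, hadd, hadd, add_assoc]
  congr 1; ring

include hadd in
lemma uop_comm (v w : Gam n) :
    uop F ω v * uop F ω w = ω (F.B v w + F.B v w) • (uop F ω w * uop F ω v) := by
  rw [uop_mul F ω hadd, uop_mul F ω hadd, smul_smul, ← hadd, F.swap w v, add_neg_cancel_right,
    add_comm w v]

variable (q : Fin n → ℂ) (lam : Fin n → Fin n → ℂ)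
  (hq : ∀ i, q i = ω (F.s i + F.s i))
  (hlam : ∀ i j, lam i j = ω (F.B (yd i) (yd j) + F.B (yd i) (yd j)))

/-- The image of a generator in the quantum torus. -/
def rgen : Fin n ⊕ Fin n → Module.End ℂ (Gam n →₀ ℂ) :=
  Sum.elim (fun i => (ysc F ω i)⁻¹ • uop F ω (yd i))
    (fun i => uop F ω (zd i.castSucc - yd i) + uop F ω (zd i.succ - yd i))

section
include hadd h0

lemma rgen_yx (i : Fin n) : rgen F ω (Sum.inl i) * rgen F ω (Sum.inr i) =
    (ysc F ω i)⁻¹ • (uop F ω (zd i.castSucc) + ω (-F.s i) • uop F ω (zd i.succ)) := by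
  simp only [rgen, Sum.elim_inl, Sum.elim_inr, smul_mul_assoc, mul_add, uop_mul F ω hadd, map_sub,
    F.alt, F.Byz, add_sub_cancel, sub_zero]
  simp [h0]

lemma rgen_xy (i : Fin n) : rgen F ω (Sum.inr i) * rgen F ω (Sum.inl i) =
    (ysc F ω i)⁻¹ • (uop F ω (zd i.castSucc) + ω (F.s i) • uop F ω (zd i.succ)) := by
  simp only [rgen, Sum.elim_inl, Sum.elim_inr, mul_smul_comm, add_mul, uop_mul F ω hadd, map_sub,
    AddMonoidHom.sub_apply, F.alt, F.Bzy, sub_add_cancel, sub_zero]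
  simp [h0]

include hinj

lemma ysc_inv (i : Fin n) : (ω (F.s i + F.s i) - 1) * (ysc F ω i)⁻¹ = - (zsc F ω i)⁻¹ := by
  have h1 := ysc_ne F ω h0 hadd hinj i
  have h2 := zsc_ne F ω h0 hadd i
  have h3 := ysc_eq F ω i
  field_simp
  rw [h3]; ring

lemma rgen_psum (j : Fin (n + 1)) :
    psum (fun k => (ω (F.s k + F.s k) - 1) • (rgen F ω (Sum.inl k) * rgen F ω (Sum.inr k))) j =
      (zsc F ω j)⁻¹ • uop F ω (zd j) := by
  induction j using Fin.induction with
  | zero => rw [Fin.val_zero, psum_zero, zsc_zero F ω h0, zd_zero, uop_zero F ω h0]; simp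
  | succ i ih =>
    rw [Fin.val_castSucc] at ih
    have h2 := zsc_ne F ω h0 hadd i
    have h3 := omega_ne ω h0 hadd (F.s i)
    have h4 : ω (-F.s i) = (ω (F.s i))⁻¹ :=
      eq_inv_of_mul_eq_one_left (omega_neg_mul ω h0 hadd (F.s i))
    rw [Fin.val_succ, psum_succ, ih, rgen_yx F ω h0 hadd, smul_smul, ysc_inv F ω h0 hadd hinj,
      zsc_succ F ω hadd, h4, inv_neg, mul_inv]
    module

lemma rgen_weyl (i : Fin n) : rgen F ω (Sum.inr i) * rgen F ω (Sum.inl i) -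
    ω (F.s i + F.s i) • (rgen F ω (Sum.inl i) * rgen F ω (Sum.inr i)) =
      psum (fun k => (ω (F.s k + F.s k) - 1) •
        (rgen F ω (Sum.inl k) * rgen F ω (Sum.inr k))) i := by
  have := rgen_psum F ω h0 hadd hinj i.castSucc
  rw [Fin.val_castSucc] at this
  have h3 := omega_ne ω h0 hadd (F.s i)
  have h4 : ω (F.s i + F.s i) * ω (-F.s i) = ω (F.s i) := by
    rw [← hadd]; congr 1; abel
  have h5 := ysc_inv F ω h0 hadd hinj i
  rw [this, rgen_yx F ω h0 hadd, rgen_xy F ω h0 hadd]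
  rw [← neg_eq_iff_eq_neg] at h5
  rw [← h5, ← h4]
  module

end

/-- Two generators of index `i < j` of the torus commute up to the same scalar as the images of
the generators of the quantized Weyl algebra. -/
lemma rgen_rel (hadd : ∀ a b, ω (a + b) = ω a * ω b) (i j : Fin n) (h : i < j) :
    rgen F ω (Sum.inl j) * rgen F ω (Sum.inl i) =
      ω (F.B (yd j) (yd i) + F.B (yd j) (yd i)) •
        (rgen F ω (Sum.inl i) * rgen F ω (Sum.inl j)) ∧
    rgen F ω (Sum.inl j) * rgen F ω (Sum.inr i) =
      ω (F.B (yd i) (yd j) + F.B (yd i) (yd j)) •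
        (rgen F ω (Sum.inr i) * rgen F ω (Sum.inl j)) ∧
    rgen F ω (Sum.inr j) * rgen F ω (Sum.inl i) =
      ω ((F.s i + F.B (yd i) (yd j)) + (F.s i + F.B (yd i) (yd j))) •
        (rgen F ω (Sum.inl i) * rgen F ω (Sum.inr j)) ∧
    rgen F ω (Sum.inr j) * rgen F ω (Sum.inr i) =
      ω (-(F.s i + F.B (yd i) (yd j)) + -(F.s i + F.B (yd i) (yd j))) •
        (rgen F ω (Sum.inr i) * rgen F ω (Sum.inr j)) := by
  -- `z_i` and `z_{i+1}` (resp. `z_j` and `z_{j+1}`) have the same commutation exponents here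
  have e1 : F.B (yd j) (zd i.succ - yd i) = F.B (yd i) (yd j) := by
    rw [map_sub, F.Byz, if_neg (by simpa [Fin.castSucc_lt_succ_iff] using h), zero_sub, ← F.swap]
  have e2 : F.B (zd j.succ - yd j) (yd i) = F.s i + F.B (yd i) (yd j) := by
    rw [map_sub, AddMonoidHom.sub_apply, F.Bzy,
      if_pos (by simpa [Fin.castSucc_lt_succ_iff] using h.le), F.swap (yd j), sub_neg_eq_add]
  have e3 : ∀ a b, F.B (zd a - yd j) (zd b - yd i) =
      F.B (zd a - yd j) (-yd i) + F.B (-yd j) (zd b) := by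
    intro a b
    rw [sub_eq_add_neg (zd b), map_add, sub_eq_add_neg (zd a), map_add, AddMonoidHom.add_apply,
      AddMonoidHom.add_apply, F.Bzz]
    abel
  have e4 : F.B (-yd j) (zd i.castSucc) = 0 := by
    rw [map_neg, AddMonoidHom.neg_apply, F.Byz, if_neg (by simpa using h.le), neg_zero]
  have e5 : F.B (-yd j) (zd i.succ) = 0 := by
    rw [map_neg, AddMonoidHom.neg_apply, F.Byz,
      if_neg (by simpa [Fin.castSucc_lt_succ_iff] using h), neg_zero]
  refine ⟨?_, ?_, ?_, ?_⟩ <;> simp only [rgen, Sum.elim_inl, Sum.elim_inr]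
  · rw [smul_mul_smul_comm, uop_comm F ω hadd, smul_mul_smul_comm, smul_smul, smul_smul]
    congr 1; ring
  · rw [smul_mul_assoc, mul_smul_comm, mul_add, add_mul, uop_comm F ω hadd (yd j),
      uop_comm F ω hadd (yd j), F.B_yx h, e1]
    module
  · rw [smul_mul_assoc, mul_smul_comm, mul_add, add_mul, uop_comm F ω hadd _ (yd i),
      uop_comm F ω hadd _ (yd i), F.B_xy h, e2]
    module
  · have e6 : ∀ a b, (a = j.castSucc ∨ a = j.succ) → (b = i.castSucc ∨ b = i.succ) →
        F.B (zd a - yd j) (zd b - yd i) = -(F.s i + F.B (yd i) (yd j)) := by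
      rintro a b (rfl | rfl) (rfl | rfl) <;> rw [e3] <;>
        (first | rw [e4] | rw [e5]) <;> rw [add_zero, map_neg] <;>
        (first | rw [e2] | rw [F.B_xy h])
    simp only [mul_add, add_mul]
    rw [uop_comm F ω hadd (zd j.castSucc - yd j), uop_comm F ω hadd (zd j.castSucc - yd j),
      uop_comm F ω hadd (zd j.succ - yd j), uop_comm F ω hadd (zd j.succ - yd j)]
    simp only [e6 _ _ (Or.inl rfl) (Or.inl rfl), e6 _ _ (Or.inl rfl) (Or.inr rfl),
      e6 _ _ (Or.inr rfl) (Or.inl rfl), e6 _ _ (Or.inr rfl) (Or.inr rfl)]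
    module

/-- The image of a generator in the quantized Weyl algebra. -/
def gR (a : Fin n ⊕ Fin n) : RingQuot (RRel n q lam) :=
  RingQuot.mkAlgHom ℂ (RRel n q lam) (FreeAlgebra.ι ℂ a)

lemma psum_iio {V : Type} [Ring V] (g : Fin n → V) (i : Fin n) :
    1 + ∑ k ∈ Finset.Iio i, g k = psum g i := by
  rw [psum, ← Finset.sum_filter]
  congr 2
  ext k; simp

/-- The quantized Weyl algebra satisfies the common axioms. -/
def weylQW : QW F (RingQuot (RRel n q lam)) :=
  quantumQW F ω h0 hadd hinj (fun i => gR q lam (Sum.inl i)) (fun i => gR q lam (Sum.inr i))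
    (fun i j h => by
      have := RingQuot.mkAlgHom_rel ℂ (RRel.yy (q := q) (lam := lam) i j h)
      rwa [map_mul, map_smul, map_mul, hlam] at this)
    (fun i j h => by
      have := RingQuot.mkAlgHom_rel ℂ (RRel.yx (q := q) (lam := lam) i j h)
      rwa [map_mul, map_smul, map_mul, hlam] at this)
    (fun i j h => by
      have := RingQuot.mkAlgHom_rel ℂ (RRel.xy (q := q) (lam := lam) i j h)
      rw [map_mul, map_smul, map_mul, hlam, hq, ← hadd] at this
      rw [add_add_add_comm]
      exact this)
    (fun i j h => by
      have := RingQuot.mkAlgHom_rel ℂ (RRel.xx (q := q) (lam := lam) i j h)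
      rw [map_mul, map_smul, map_mul, hlam, hq, ← mul_inv, ← hadd] at this
      rw [← neg_add, add_add_add_comm,
        eq_inv_of_mul_eq_one_left (omega_neg_mul ω h0 hadd _)]
      exact this)
    (fun i => by
      have := RingQuot.mkAlgHom_rel ℂ (RRel.weyl (q := q) (lam := lam) i)
      simp only [map_sub, map_mul, map_smul, map_add, map_one, map_sum, hq] at this
      rw [psum_iio] at this
      exact this)
    (fun S hy hx => by
      have h1 : S.comap (RingQuot.mkAlgHom ℂ (RRel n q lam)) = ⊤ := by
        rw [eq_top_iff, ← FreeAlgebra.adjoin_range_ι, Algebra.adjoin_le_iff]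
        rintro _ ⟨i | i, rfl⟩
        · exact hy i
        · exact hx i
      rw [eq_top_iff]
      rintro a -
      obtain ⟨b, rfl⟩ := RingQuot.mkAlgHom_surjective ℂ (RRel n q lam) a
      have : b ∈ S.comap (RingQuot.mkAlgHom ℂ (RRel n q lam)) := by rw [h1]; trivial
      exact this)

lemma weyl_inj : Function.Injective (weylQW F ω h0 hadd hinj q lam hq hlam).ev := by
  classical
  set D := weylQW F ω h0 hadd hinj q lam hq hlam with hD
  have hrel : ∀ ⦃a b⦄, RRel n q lam a b →
      FreeAlgebra.lift ℂ (rgen F ω) a = FreeAlgebra.lift ℂ (rgen F ω) b := by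
    intro a b hab
    cases hab with
    | yy i j h => simpa [hlam] using (rgen_rel F ω hadd i j h).1
    | yx i j h => simpa [hlam] using (rgen_rel F ω hadd i j h).2.1
    | xy i j h =>
      have := (rgen_rel F ω hadd i j h).2.2.1
      rw [add_add_add_comm, hadd, ← hlam, ← hq] at this
      simpa using this
    | xx i j h =>
      have := (rgen_rel F ω hadd i j h).2.2.2
      rw [← neg_add, eq_inv_of_mul_eq_one_left (omega_neg_mul ω h0 hadd _), add_add_add_comm,
        hadd, ← hlam, ← hq, mul_inv] at this
      simpa using this
    | weyl i =>
      have := rgen_weyl F ω h0 hadd hinj i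
      simp only [← hq] at this
      rw [← psum_iio] at this
      simpa using this
  let π : RingQuot (RRel n q lam) →ₐ[ℂ] Module.End ℂ (Gam n →₀ ℂ) :=
    RingQuot.liftAlgHom ℂ ⟨FreeAlgebra.lift ℂ (rgen F ω), hrel⟩
  have hπ : ∀ a, π (gR q lam a) = rgen F ω a := fun a => by
    simp [π, gR]
  have hπy : ∀ i, π (D.y i) = uop F ω (yd i) := fun i => by
    change π (ysc F ω i • gR q lam (Sum.inl i)) = _
    rw [map_smul, hπ, rgen, Sum.elim_inl, smul_smul,
      mul_inv_cancel₀ (ysc_ne F ω h0 hadd hinj i), one_smul]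
  have hπx : ∀ i, π (D.x i) = uop F ω (zd i.castSucc - yd i) + uop F ω (zd i.succ - yd i) :=
    fun i => hπ _
  have hπz : ∀ j, π (D.z j) = uop F ω (zd j) := fun j => by
    change π (zsc F ω j • psum _ _) = _
    have := rgen_psum F ω h0 hadd hinj j
    rw [map_smul, psum, map_add, map_one, map_sum]
    simp only [apply_ite π, map_smul, map_mul, hπ, map_zero]
    refine (congrArg (zsc F ω j • ·) this).trans ?_
    rw [smul_smul, mul_inv_cancel₀ (zsc_ne F ω h0 hadd _), one_smul]
  refine QW.ev_inj D (u := uop F ω)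
    (fun v => Finsupp.lapply v ∘ₗ LinearMap.applyₗ (Finsupp.single 0 1)) ?_ (uop_zero F ω h0)
    (uop_mul F ω hadd) π hπy hπz hπx
  intro v w
  simp [uop_single, h0, Finsupp.single_apply]

end quantum
end
end PW

namespace PW
open scoped Classical
noncomputable section
open Polynomial

/-! ### Operators on spaces of countable dimension -/

/-- A version of Amitsur's argument: on a complex vector space of countable dimension an operator
cannot have resolvents at all nonzero scalars without satisfying a polynomial equation. -/
lemma amitsur {ι V : Type} [Countable ι] [AddCommGroup V] [Module ℂ V] (S : (ι →₀ ℂ) →ₗ[ℂ] V)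
    (hS : Function.Surjective S) (φ : Module.End ℂ V) (v : V)
    (h1 : ∀ c : ℂ, c ≠ 0 → ∃ u, φ u - c • u = v)
    (h2 : ∀ (c : ℂ) (f : ℂ[X]), aeval φ ((X - C c) * f) v = 0 → aeval φ f v = 0) : v = 0 := by
  choose! u hu using h1
  have hdep : ¬ LinearIndependent ℂ (fun c : {c : ℂ // c ≠ 0} => u c) := by
    intro h
    have h3 := h.cardinal_le_rank
    have h4 := LinearMap.rank_le_of_surjective S hS
    rw [rank_finsupp_self'] at h4
    have h5 : Countable {c : ℂ // c ≠ 0} :=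
      Cardinal.mk_le_aleph0_iff.1 ((h3.trans h4).trans Cardinal.mk_le_aleph0)
    have h6 : ({0}ᶜ : Set ℂ).Countable := h5
    have h7 : (Set.univ : Set ℂ).Countable := by
      rw [← Set.union_compl_self ({0} : Set ℂ)]
      exact (Set.countable_singleton _).union h6
    exact not_countable_complex h7
  rw [linearIndependent_iff'] at hdep
  push Not at hdep
  obtain ⟨s, a, hsum, c0, hc0, ha⟩ := hdep
  -- multiplying the relation by all the `φ - c` gives a polynomial equation
  let p : ℂ[X] := ∑ c ∈ s, C (a c) * ∏ d ∈ s.erase c, (X - C (d : ℂ))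
  have hres : ∀ c : {c : ℂ // c ≠ 0}, aeval φ (X - C (c : ℂ)) (u c) = v := fun c => by
    simpa [Algebra.algebraMap_eq_smul_one] using hu c c.2
  have hp : aeval φ p v = 0 := by
    have : aeval φ p v = aeval φ (∏ d ∈ s, (X - C (d : ℂ))) (∑ c ∈ s, a c • u c) := by
      rw [map_sum, map_sum, LinearMap.sum_apply]
      refine Finset.sum_congr rfl fun c hc => ?_
      rw [← Finset.mul_prod_erase s _ hc, mul_comm (X - C (c : ℂ)), map_mul, map_mul,
        Module.End.mul_apply, Module.End.mul_apply, map_smul, map_smul, hres, aeval_C,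
        Algebra.algebraMap_eq_smul_one, LinearMap.smul_apply, Module.End.one_apply]
    rw [this, hsum, map_zero]
  have hp0 : p ≠ 0 := by
    intro h
    have h3 : p.eval (c0 : ℂ) = 0 := by rw [h, eval_zero]
    rw [eval_finsetSum, Finset.sum_eq_single c0] at h3
    · rw [eval_mul, eval_C, eval_prod] at h3
      refine mul_ne_zero ha (Finset.prod_ne_zero_iff.2 fun d hd => ?_) h3
      rw [eval_sub, eval_X, eval_C, sub_ne_zero]
      exact fun h => (Finset.ne_of_mem_erase hd) (Subtype.ext h.symm)
    · intro c hc hne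
      rw [eval_mul, eval_prod]
      refine mul_eq_zero_of_right _ (Finset.prod_eq_zero (Finset.mem_erase.2 ⟨hne.symm, hc0⟩) ?_)
      simp
    · exact fun h => absurd hc0 h
  -- all linear factors can be cancelled
  clear_value p
  have key : ∀ k : ℕ, ∀ f : ℂ[X], f ≠ 0 → f.natDegree = k → aeval φ f v = 0 → v = 0 := by
    intro k
    induction k with
    | zero =>
      intro f hf hd h
      rw [eq_C_of_natDegree_eq_zero hd] at h hf
      have h3 : f.coeff 0 ≠ 0 := fun h => hf (by rw [h, C_0])
      rw [aeval_C, Algebra.algebraMap_eq_smul_one, LinearMap.smul_apply, Module.End.one_apply] at h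
      exact (smul_eq_zero.1 h).resolve_left h3
    | succ k ih =>
      intro f hf hd h
      obtain ⟨c, hc⟩ := IsAlgClosed.exists_root f (by
        rw [degree_eq_natDegree hf, hd]; exact_mod_cast Nat.succ_ne_zero k)
      obtain ⟨g, rfl⟩ := dvd_iff_isRoot.2 hc
      have hg : g ≠ 0 := right_ne_zero_of_mul hf
      refine ih g hg ?_ (h2 c g h)
      rw [natDegree_mul (X_sub_C_ne_zero c) hg, natDegree_X_sub_C] at hd
      omega
  exact key _ p hp0 rfl hp

end
end PW

namespace PW
open scoped Classical
noncomputable section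
open Polynomial
variable {n : ℕ} {E : Type} [AddCommGroup E] {F : Form n E} {W : Type} [Ring W] [Algebra ℂ W]

/-! ### Primitive ideals of the quantized Weyl algebra -/

namespace QW
variable (D : QW F W) {T : Ltr n → Prop} {K : Submodule ℂ (Mon n →₀ ℂ)}

lemma countable_mon : Countable (Mon n) := by
  unfold Mon; infer_instance

lemma one_ne_of_good (hK : Good F T K) (hker : LinearMap.ker D.ev = K) : (1 : W) ≠ 0 := by
  intro h
  refine hK.core 0 Core.zero ?_
  rw [← hker, LinearMap.mem_ker, ev_single, one_smul, D.e_zero, h]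

/-- All core monomials of a given key have the same commutation weight with a given letter. -/
lemma qc_core_sub (hS : D.Sat T) {m m' : Mon n} (hm : Core T m) (hm' : Core T m')
    (h : key F T m = key F T m') (c : ℂ) (g : Ltr n) :
    ∃ e, D.qc (D.gW g) (D.e m - c • D.e m') e := by
  by_cases hg : T g
  · refine ⟨0, ?_⟩
    rw [qc, hS.dead g hg]; simp
  · refine ⟨wt F T g m, ?_⟩
    have h1 := D.qc_e_core hS.adm hS.dead g hm
    have h2 := D.qc_e_core hS.adm hS.dead g hm'
    rw [← key_wt h hg] at h2
    unfold qc at *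
    rw [map_sub, map_smul, h1, h2, mul_sub, mul_smul_comm, smul_sub, smul_comm c]

/-- The product of all normal letters. -/
def nprod (T : Ltr n → Prop) : W :=
  ((Set.toFinite {g | Nrm T g}).toFinset.toList.map D.gW).prod

lemma nprod_cancel (hS : D.Sat T) (w : W) (h : D.nprod T * w = 0) : w = 0 := by
  have key : ∀ L : List (Ltr n), (∀ g ∈ L, Nrm T g) → ∀ w, (L.map D.gW).prod * w = 0 → w = 0 := by
    intro L
    induction L with
    | nil => intro _ w h; simpa using h
    | cons g L ih =>
      intro hL w h
      rw [List.map_cons, List.prod_cons, mul_assoc] at h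
      exact ih (fun g' hg' => hL g' (List.mem_cons_of_mem _ hg')) w
        (hS.cancel g (hL g List.mem_cons_self) _ h)
  exact key _ (fun g hg => by simpa using hg) w h

lemma nprod_mem {C : Submodule ℂ W} (hl : ∀ w, ∀ f ∈ C, w * f ∈ C) (hr : ∀ w, ∀ f ∈ C, f * w ∈ C)
    {g : Ltr n} (hg : Nrm T g) (h : D.gW g ∈ C) : D.nprod T ∈ C := by
  have : g ∈ (Set.toFinite {g | Nrm T g}).toFinset.toList := by simpa using hg
  obtain ⟨L1, L2, hL⟩ := List.append_of_mem this
  rw [nprod, hL, List.map_append, List.prod_append, List.map_cons, List.prod_cons]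
  exact hl _ _ (hr _ _ h)

/-- A subspace containing a core monomial and prime with respect to normal letters contains a
normal letter. -/
lemma letter_of_core (hT : Adm T) (hd : ∀ g, T g → D.gW g = 0) {C : Submodule ℂ W}
    (h1 : (1 : W) ∉ C)
    (hmul : ∀ g, Nrm T g → ∀ w, D.gW g * w ∈ C → D.gW g ∈ C ∨ w ∈ C) :
    ∀ m, Core T m → D.e m ∈ C → ∃ g, Nrm T g ∧ D.gW g ∈ C := by
  refine core_induct (fun h => absurd (D.e_zero ▸ h) h1) fun g m hg hm ih h => ?_
  have := C.smul_mem (D.ω (wt F T g m)) h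
  rw [← D.mul_gen hT hd hg hm.alive] at this
  rcases hmul g hg _ this with h | h
  · exact ⟨g, hg, h⟩
  · exact ih h

lemma qc_normal {t : W} (h : ∀ g, ∃ e, D.qc (D.gW g) t e) (w : W) : ∃ w', t * w = w' * t := by
  let S : Subalgebra ℂ W :=
    { carrier := {w | ∃ w', t * w = w' * t}
      mul_mem' := fun {a b} ⟨a', ha⟩ ⟨b', hb⟩ => ⟨a' * b', by
        rw [← mul_assoc, ha, mul_assoc, hb, mul_assoc]⟩
      add_mem' := fun {a b} ⟨a', ha⟩ ⟨b', hb⟩ => ⟨a' + b', by rw [mul_add, ha, hb, add_mul]⟩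
      algebraMap_mem' := fun c => ⟨algebraMap ℂ W c, (Algebra.commutes c t).symm⟩ }
  have hg : ∀ g, D.gW g ∈ S := fun g => by
    obtain ⟨e, he⟩ := h g
    exact ⟨D.ω (-(e + e)) • D.gW g, by rw [he.swap, smul_mul_assoc]⟩
  have : w ∈ S := by
    rw [D.gen S (fun i => hg (.y i)) (fun i => hg (.x i))]; trivial
  exact this

lemma nrm_normal (hS : D.Sat T) {g : Ltr n} (hg : Nrm T g) (w : W) :
    ∃ w', D.gW g * w = w' * D.gW g := by
  refine D.qc_normal (fun g' => ⟨wt F T g' (mon g), ?_⟩) w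
  rw [← D.e_mon g]
  exact D.qc_e_core hS.adm hS.dead g' hg.core

lemma aeval_mulRight (s w : W) (f : ℂ[X]) :
    aeval (LinearMap.mulRight ℂ s) f w = w * aeval s f := by
  induction f using Polynomial.induction_on generalizing w with
  | C a => simp [Algebra.algebraMap_eq_smul_one]
  | add p q hp hq => rw [map_add, map_add, LinearMap.add_apply, hp, hq, mul_add]
  | monomial k a h =>
    rw [pow_succ, ← mul_assoc, map_mul (aeval (LinearMap.mulRight ℂ s)), Module.End.mul_apply,
      aeval_X, h, LinearMap.mulRight_apply, mul_assoc]
    congr 1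
    rw [mul_comm (C a * X ^ k) X, map_mul (aeval s) X, aeval_X]

/-- Some maximal left ideal does not contain the product of the normal letters. -/
lemma exists_max (hK : Good F T K) (hker : LinearMap.ker D.ev = K) :
    ∃ L : Ideal W, L.IsMaximal ∧ D.nprod T ∉ L := by
  by_contra! hcon
  have hS := D.sat_of_good hK hker
  have h1 := D.one_ne_of_good hK hker
  set s := D.nprod T with hs
  have hu : ∀ c : ℂ, c ≠ 0 → ∃ u, u * (s - algebraMap ℂ W c) = 1 := by
    intro c hc
    by_contra hno
    have hne : (Ideal.span {s - algebraMap ℂ W c} : Ideal W) ≠ ⊤ := fun h => hno <| by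
      rw [Ideal.eq_top_iff_one, Ideal.mem_span_singleton'] at h
      exact h
    obtain ⟨L, hL, hle⟩ := Ideal.exists_le_maximal _ hne
    have h2 : s - algebraMap ℂ W c ∈ L := hle (Ideal.subset_span rfl)
    have h3 : algebraMap ℂ W c ∈ L := by
      simpa using L.sub_mem (hcon L hL) h2
    refine hL.ne_top ((Ideal.eq_top_iff_one L).2 ?_)
    have := L.mul_mem_left (algebraMap ℂ W c⁻¹) h3
    rwa [← map_mul, inv_mul_cancel₀ hc, map_one] at this
  have := countable_mon (n := n)
  refine h1 (amitsur D.ev D.ev_surj (LinearMap.mulRight ℂ s) 1 (fun c hc => ?_) fun c f h => ?_)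
  · obtain ⟨u, hu⟩ := hu c hc
    refine ⟨u, ?_⟩
    rw [LinearMap.mulRight_apply, ← hu, mul_sub, ← Algebra.commutes, ← Algebra.smul_def]
  · rw [aeval_mulRight, one_mul] at h ⊢
    rw [map_mul, map_sub, aeval_X, aeval_C] at h
    rcases eq_or_ne c 0 with rfl | hc
    · rw [map_zero, sub_zero] at h
      exact D.nprod_cancel hS _ h
    · obtain ⟨u, hu⟩ := hu c hc
      have := congrArg (u * ·) h
      simpa only [← mul_assoc, hu, one_mul, mul_zero] using this

lemma exists_faithful (hbr : ∀ a b, D.br a b = a * b - b * a) (hK : Good F T K)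
    (hker : LinearMap.ker D.ev = K) (h7 : KeyRigid F T K) :
    ∃ L : Ideal W, L.IsMaximal ∧ ∀ x, (∀ w, x * w ∈ L) → x = 0 := by
  have hS := D.sat_of_good hK hker
  obtain ⟨L, hL, hs⟩ := D.exists_max hK hker
  refine ⟨L, hL, ?_⟩
  let J : Submodule ℂ W :=
    { carrier := {x | ∀ w, x * w ∈ L}
      add_mem' := fun {a b} ha hb w => by rw [add_mul]; exact L.add_mem (ha w) (hb w)
      zero_mem' := fun w => by rw [zero_mul]; exact L.zero_mem
      smul_mem' := fun c x hx w => by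
        rw [Algebra.smul_def, mul_assoc]; exact L.mul_mem_left _ (hx w) }
  have hl : ∀ w, ∀ f ∈ J, w * f ∈ J := fun w f hf v => by
    rw [mul_assoc]; exact L.mul_mem_left _ (hf v)
  have hr : ∀ w, ∀ f ∈ J, f * w ∈ J := fun w f hf v => by
    rw [mul_assoc]; exact hf _
  have hJ : D.IsId J := ⟨hl, fun w f hf => by
    rw [hbr]; exact J.sub_mem (hl w f hf) (hr w f hf)⟩
  have hJL : ∀ x ∈ J, x ∈ L := fun x hx => by simpa using hx 1
  have hmul : ∀ g, Nrm T g → ∀ w, D.gW g * w ∈ J → D.gW g ∈ J ∨ w ∈ J := by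
    intro g hg w hw
    -- `{x | g x ∈ L}` is a left ideal containing `L`
    let L' : Ideal W :=
      { carrier := {x | D.gW g * x ∈ L}
        add_mem' := fun {a b} ha hb => by
          change _ * (_ + _) ∈ L
          rw [mul_add]; exact L.add_mem ha hb
        zero_mem' := by
          change _ * 0 ∈ L
          rw [mul_zero]; exact L.zero_mem
        smul_mem' := fun w x hx => by
          change _ * (w * x) ∈ L
          obtain ⟨w', hw'⟩ := D.nrm_normal hS hg w
          rw [← mul_assoc, hw', mul_assoc]
          exact L.mul_mem_left _ hx }
    have hle : L ≤ L' := fun x hx => L.mul_mem_left _ hx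
    by_cases htop : L' = ⊤
    · left
      intro x
      have : x ∈ L' := by rw [htop]; trivial
      exact this
    · right
      have heq := hL.eq_of_le htop hle
      intro v
      rw [heq]
      change D.gW g * (w * v) ∈ L
      rw [← mul_assoc]
      exact hw v
  have hbot : J = ⊥ := by
    by_contra hne
    obtain ⟨m, hm, hmJ⟩ := D.core_mem hK hker h7 hJ hne
    obtain ⟨g, hg, hgJ⟩ := D.letter_of_core hS.adm hS.dead
      (fun h => hL.ne_top ((Ideal.eq_top_iff_one L).2 (hJL _ h))) hmul m hm hmJ
    exact hs (hJL _ (D.nprod_mem hl hr hg hgJ))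
  intro x hx
  have : x ∈ J := hx
  rwa [hbot, Submodule.mem_bot] at this

end QW
end
end PW

namespace PW
open scoped Classical
noncomputable section
open Polynomial
variable {n : ℕ} {E : Type} [AddCommGroup E] {F : Form n E} {W : Type} [Ring W] [Algebra ℂ W]

namespace QW
variable (D : QW F W) {T : Ltr n → Prop} {K : Submodule ℂ (Mon n →₀ ℂ)}

lemma qc_normal' {t : W} (h : ∀ g, ∃ e, D.qc (D.gW g) t e) (w : W) : ∃ w', w * t = t * w' := by
  let S : Subalgebra ℂ W :=
    { carrier := {w | ∃ w', w * t = t * w'}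
      mul_mem' := fun {a b} ⟨a', ha⟩ ⟨b', hb⟩ => ⟨a' * b', by
        rw [mul_assoc, hb, ← mul_assoc, ha, mul_assoc]⟩
      add_mem' := fun {a b} ⟨a', ha⟩ ⟨b', hb⟩ => ⟨a' + b', by rw [add_mul, ha, hb, mul_add]⟩
      algebraMap_mem' := fun c => ⟨algebraMap ℂ W c, Algebra.commutes c t⟩ }
  have hg : ∀ g, D.gW g ∈ S := fun g => by
    obtain ⟨e, he⟩ := h g
    exact ⟨D.ω (e + e) • D.gW g, by rw [he.swap', mul_smul_comm]⟩
  have : w ∈ S := by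
    rw [D.gen S (fun i => hg (.y i)) (fun i => hg (.x i))]; trivial
  exact this

/-- A nonzero normal element acts bijectively on a faithful simple module. -/
lemma normal_bij {M : Type} [AddCommGroup M] [Module W M] [IsSimpleModule W M]
    (hM : ∀ x : W, (∀ v : M, x • v = 0) → x = 0) {t : W} (h : ∀ g, ∃ e, D.qc (D.gW g) t e)
    (ht : t ≠ 0) : Function.Bijective (fun v : M => t • v) := by
  let A : Submodule W M :=
    { carrier := {v | t • v = 0}
      add_mem' := fun {a b} ha hb => by
        change t • (a + b) = 0
        rw [smul_add, ha, hb, add_zero]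
      zero_mem' := smul_zero _
      smul_mem' := fun w v hv => by
        obtain ⟨w', hw'⟩ := D.qc_normal h w
        have hv : t • v = 0 := hv
        change t • (w • v) = 0
        rw [smul_smul, hw', mul_smul, hv, smul_zero] }
  let R : Submodule W M :=
    { carrier := {u | ∃ v : M, t • v = u}
      add_mem' := by
        rintro _ _ ⟨a, rfl⟩ ⟨b, rfl⟩
        exact ⟨a + b, smul_add _ _ _⟩
      zero_mem' := ⟨0, smul_zero _⟩
      smul_mem' := by
        rintro w _ ⟨v, rfl⟩
        obtain ⟨w', hw'⟩ := D.qc_normal' h w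
        exact ⟨w' • v, by rw [smul_smul, smul_smul, hw']⟩ }
  have hAtop : A ≠ ⊤ := fun h => ht <| hM t fun v => by
    have : v ∈ A := by rw [h]; trivial
    exact this
  have hA : A = ⊥ := (eq_bot_or_eq_top A).resolve_right hAtop
  have hRbot : R ≠ ⊥ := fun h => ht <| hM t fun v => by
    have : t • v ∈ R := ⟨v, rfl⟩
    rwa [h, Submodule.mem_bot] at this
  have hR : R = ⊤ := (eq_bot_or_eq_top R).resolve_left hRbot
  constructor
  · intro a b hab
    have : a - b ∈ A := by
      change t • (a - b) = 0
      rw [smul_sub, sub_eq_zero]; exact hab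
    rw [hA, Submodule.mem_bot, sub_eq_zero] at this
    exact this
  · intro u
    have : u ∈ R := by rw [hR]; trivial
    exact this

/-- If two core monomials of the same key were not proportional, their quotient would act on the
simple module as an operator without spectrum. -/
lemma keyRigid_of_faithful (hK : Good F T K) (hker : LinearMap.ker D.ev = K)
    {M : Type} [AddCommGroup M] [Module W M] [IsSimpleModule W M]
    (hM : ∀ x : W, (∀ v : M, x • v = 0) → x = 0) : KeyRigid F T K := by
  intro m m' hm hm' hkey
  by_contra! hcon
  have hS := D.sat_of_good hK hker
  have hne : ∀ c : ℂ, D.e m - c • D.e m' ≠ 0 := fun c h => hcon c <| by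
    rw [← hker, LinearMap.mem_ker, map_sub, map_smul, ev_single, ev_single, one_smul, one_smul, h]
  have hbij := fun c => D.normal_bij hM (D.qc_core_sub hS hm hm' hkey c) (hne c)
  have hbij' : Function.Bijective (fun v : M => D.e m' • v) := by
    refine D.normal_bij hM (fun g => ⟨_, D.qc_e_core hS.adm hS.dead g hm'⟩) fun h => ?_
    refine hK.core m' hm' ?_
    rw [← hker, LinearMap.mem_ker, ev_single, one_smul, h]
  let _ : Module ℂ M := Module.compHom M (algebraMap ℂ W)
  have hsm : ∀ (c : ℂ) (v : M), c • v = algebraMap ℂ W c • v := fun _ _ => rfl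
  have : IsScalarTower ℂ W M := ⟨fun c w v => by
    rw [hsm, Algebra.smul_def, mul_smul]⟩
  let ε : M ≃ₗ[ℂ] M := LinearEquiv.ofBijective (Algebra.lsmul ℂ ℂ M (D.e m')) hbij'
  have hε : ∀ u, ε u = D.e m' • u := fun _ => rfl
  let φ : Module.End ℂ M := ε.symm.toLinearMap ∘ₗ Algebra.lsmul ℂ ℂ M (D.e m)
  have hφ : ∀ (c : ℂ) u, φ u - c • u = ε.symm ((D.e m - c • D.e m') • u) := by
    intro c u
    rw [sub_smul, map_sub, smul_assoc, ← hε, ε.symm.map_smul, LinearEquiv.symm_apply_apply]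
    rfl
  have := IsSimpleModule.nontrivial W M
  obtain ⟨v, hv⟩ := exists_ne (0 : M)
  let S : (Mon n →₀ ℂ) →ₗ[ℂ] M := (LinearMap.toSpanSingleton W M v).restrictScalars ℂ ∘ₗ D.ev
  have := countable_mon (n := n)
  refine hv (amitsur S ?_ φ v (fun c _ => ?_) fun c f h => ?_)
  · exact (IsSimpleModule.toSpanSingleton_surjective W hv).comp D.ev_surj
  · obtain ⟨u, hu⟩ := (hbij c).2 (ε v)
    exact ⟨u, by rw [hφ]; simp only at hu; rw [hu, LinearEquiv.symm_apply_apply]⟩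
  · rw [map_mul, Module.End.mul_apply, map_sub, aeval_X, aeval_C, LinearMap.sub_apply,
      Algebra.algebraMap_eq_smul_one, LinearMap.smul_apply, Module.End.one_apply, hφ,
      LinearEquiv.map_eq_zero_iff] at h
    exact (hbij c).1 (by simpa using h)

/-- The algebra-side characterization: with the commutator as bracket, the ideal with coordinates
`K` is primitive exactly when core monomials of the same key are proportional modulo it. -/
lemma primitive_iff (hbr : ∀ a b, D.br a b = a * b - b * a) (hK : Good F T K)
    {I : Submodule ℂ W} (hI : D.IsId I) (hIK : ∀ f, D.ev f ∈ I ↔ f ∈ K) :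
    IsPrimitiveTS hI.ts ↔ KeyRigid F T K := by
  let q := hI.quo
  have hker : LinearMap.ker q.D'.ev = K := by
    ext f; rw [LinearMap.mem_ker, q.ev_eq_zero, hIK]
  constructor
  · rintro ⟨M, _, _, hsimp, hM⟩
    let σ := Function.surjInv q.surj
    have hσ : ∀ v, q.π (σ v) = v := Function.surjInv_eq q.surj
    have hact : ∀ a b : W, q.π a = q.π b → ∀ v : M, a • v = b • v := by
      intro a b h v
      have : a - b ∈ I := by rw [← q.ker, map_sub, h, sub_self]
      have := (hM _).1 (hI.mem_ts.2 this) v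
      rwa [sub_smul, sub_eq_zero] at this
    let _ : SMul q.V M := ⟨fun a v => σ a • v⟩
    have hsm : ∀ (a : W) (v : M), q.π a • v = a • v := fun a v => hact _ _ (hσ _) v
    let _ : Module q.V M := Module.ofMinimalAxioms
      (fun a u v => smul_add (σ a) u v)
      (fun a b v => by
        obtain ⟨a, rfl⟩ := q.surj a
        obtain ⟨b, rfl⟩ := q.surj b
        rw [← map_add, hsm, hsm, hsm, add_smul])
      (fun a b v => by
        obtain ⟨a, rfl⟩ := q.surj a
        obtain ⟨b, rfl⟩ := q.surj b
        rw [← map_mul, hsm, hsm, hsm, mul_smul])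
      (fun v => by rw [← map_one q.π, hsm, one_smul])
    have : IsSimpleModule q.V M := by
      rw [isSimpleModule_iff_toSpanSingleton_surjective] at hsimp ⊢
      refine ⟨hsimp.1, fun v hv u => ?_⟩
      obtain ⟨a, ha⟩ := hsimp.2 v hv u
      exact ⟨q.π a, by rw [LinearMap.toSpanSingleton_apply, hsm]; exact ha⟩
    refine q.D'.keyRigid_of_faithful hK hker (M := M) fun x hx => ?_
    obtain ⟨a, rfl⟩ := q.surj x
    rw [q.ker, ← hI.mem_ts, hM]
    exact fun v => by rw [← hsm, hx]
  · intro h7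
    have hbr' : ∀ a b, q.D'.br a b = a * b - b * a := by
      intro a b
      obtain ⟨a, rfl⟩ := q.surj a
      obtain ⟨b, rfl⟩ := q.surj b
      rw [← q.br, hbr, map_sub, map_mul, map_mul]
    obtain ⟨L, hL, hL0⟩ := q.D'.exists_faithful hbr' hK hker h7
    have hs : IsSimpleModule q.V (q.V ⧸ L) := isSimpleModule_iff_isCoatom.2 hL.out
    refine ⟨q.V ⧸ L, inferInstance, Module.compHom _ (q.π : W →+* q.V), ?_, fun x => ?_⟩
    · let _ : Module W (q.V ⧸ L) := Module.compHom _ (q.π : W →+* q.V)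
      rw [isSimpleModule_iff_toSpanSingleton_surjective] at hs ⊢
      refine ⟨hs.1, fun v hv u => ?_⟩
      obtain ⟨a, ha⟩ := hs.2 v hv u
      obtain ⟨a, rfl⟩ := q.surj a
      exact ⟨a, ha⟩
    · rw [hI.mem_ts, ← q.ker]
      constructor
      · intro hx v
        change q.π x • v = 0
        rw [hx, zero_smul]
      · intro hx
        refine hL0 _ fun w => ?_
        have := hx (Submodule.Quotient.mk w)
        change q.π x • (Submodule.Quotient.mk w : q.V ⧸ L) = _ at this
        rwa [← Submodule.Quotient.mk_smul, Submodule.Quotient.mk_eq_zero] at this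

end QW
end
end PW

namespace PW
open scoped Classical
noncomputable section
variable {n : ℕ} {E : Type} [AddCommGroup E] {F : Form n E} {A : Type} [CommRing A] [Algebra ℂ A]

/-! ### Poisson primitive ideals -/

namespace QW
variable (D : QW F A) {T : Ltr n → Prop} {K : Submodule ℂ (Mon n →₀ ℂ)}

/-- The ideal of a commutative ring underlying an ideal stable under the bracket. -/
def IsId.toIdeal {D : QW F A} {I : Submodule ℂ A} (hI : D.IsId I) : Ideal A :=
  { I with smul_mem' := fun w f hf => hI.left w f hf }

lemma IsId.mem_toIdeal {D : QW F A} {I : Submodule ℂ A} (hI : D.IsId I) {a : A} :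
    a ∈ hI.toIdeal ↔ a ∈ I := Iff.rfl

lemma isPoisson_iff (J : Ideal A) :
    IsPoissonIdeal (fun a b => D.br a b) J ↔ D.IsId (J.restrictScalars ℂ) := by
  constructor
  · intro h
    refine ⟨fun w f hf => J.mul_mem_left w hf, fun w f hf => ?_⟩
    rw [D.skew]
    exact J.neg_mem (h f hf w)
  · intro h a ha b
    change D.br a b ∈ J
    rw [D.skew]
    exact J.neg_mem (h.br b a ha)

/-- The Poisson-side characterization. If the core of a maximal ideal `M` has coordinates `K`, an
element of `M` that is normal modulo the core lies in the core, which applies to suitable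
differences of core monomials. Conversely any maximal ideal over the ideal and avoiding the normal
letters has the right core. -/
lemma poissonPrimitive_iff [IsJacobsonRing A]
    (hpt : ∀ M : Ideal A, M.IsMaximal → ∀ a b : A, b ∉ M → ∃ c : ℂ, a - c • b ∈ M)
    (hK : Good F T K) {I : Submodule ℂ A} (hI : D.IsId I) (hIK : ∀ f, D.ev f ∈ I ↔ f ∈ K) :
    PoissonPrimitive (fun a b => D.br a b) hI.toIdeal ↔ KeyRigid F T K := by
  let q := hI.quo
  have hker : LinearMap.ker q.D'.ev = K := by
    ext f; rw [LinearMap.mem_ker, q.ev_eq_zero, hIK]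
  have hS := q.D'.sat_of_good hK hker
  constructor
  · rintro ⟨M, hM, -, hIM, hmax⟩
    have hnorm : ∀ a ∈ M, (∀ g, ∃ e, q.D'.qc (q.D'.gW g) (q.π a) e) → a ∈ I := by
      intro a ha hqc
      let R : Submodule ℂ q.V := LinearMap.range (LinearMap.mulRight ℂ (q.π a))
      have hR : ∀ g, ∀ v ∈ R, q.D'.gW g * v ∈ R ∧ q.D'.br (q.D'.gW g) v ∈ R := by
        rintro g _ ⟨v, rfl⟩
        obtain ⟨e, he⟩ := hqc g
        refine ⟨⟨q.D'.gW g * v, by simp [mul_assoc]⟩, ?_⟩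
        rw [LinearMap.mulRight_apply, q.D'.leib, he]
        refine R.add_mem ⟨q.D'.br (q.D'.gW g) v, by simp⟩ ?_
        rw [mul_smul_comm, ← mul_assoc]
        exact R.smul_mem _ ⟨v * q.D'.gW g, by simp⟩
      have hRid : q.D'.IsId R :=
        isId_of_gen R (fun i v hv => hR (.y i) v hv) (fun i v hv => hR (.x i) v hv)
      have hJ := q.isId_comap hRid
      refine hmax hJ.toIdeal ((D.isPoisson_iff _).2 hJ) ?_ ?_
      · rintro b ⟨v, hv⟩
        obtain ⟨v, rfl⟩ := q.surj v
        rw [LinearMap.mulRight_apply, ← map_mul] at hv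
        have hsub : v * a - b ∈ I := by
          rw [← q.ker, map_sub, hv]; exact sub_self _
        have := M.sub_mem (M.mul_mem_left v ha) (hIM (hI.mem_toIdeal.2 hsub))
        simpa using this
      · exact ⟨1, by simp⟩
    have he : ∀ m, Core T m → D.e m ∉ M := by
      intro m hm h
      refine hK.core m hm ?_
      rw [← hIK, ev_single, one_smul]
      refine hnorm _ h fun g => ⟨wt F T g m, ?_⟩
      rw [q.e]
      exact q.D'.qc_e_core hS.adm hS.dead g hm
    intro m m' hm hm' hkey
    obtain ⟨c, hc⟩ := hpt M hM (D.e m) (D.e m') (he m' hm')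
    refine ⟨c, ?_⟩
    rw [← hIK, map_sub, map_smul, ev_single, ev_single, one_smul, one_smul]
    refine hnorm _ hc fun g => ?_
    rw [map_sub, map_smul, q.e, q.e]
    exact q.D'.qc_core_sub hS hm hm' hkey c g
  · intro h7
    obtain ⟨s, hs⟩ := q.surj (q.D'.nprod T)
    have hpow : ∀ k, ∀ w, q.D'.nprod T ^ k * w = 0 → w = 0 := by
      intro k
      induction k with
      | zero => intro w h; simpa using h
      | succ k ih =>
        intro w h
        rw [pow_succ, mul_assoc] at h
        exact q.D'.nprod_cancel hS _ (ih _ h)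
    have hrad : s ∉ hI.toIdeal.radical := by
      rintro ⟨k, hk⟩
      rw [hI.mem_toIdeal, ← q.ker, map_pow, hs] at hk
      exact q.D'.one_ne_of_good hK hker (hpow k 1 (by rw [hk, zero_mul]))
    rw [Ideal.radical_eq_jacobson, Ideal.jacobson, Ideal.mem_sInf] at hrad
    push Not at hrad
    obtain ⟨M, ⟨hIM, hM⟩, hsM⟩ := hrad
    let C : Submodule ℂ q.V := (M.restrictScalars ℂ).map q.π.toLinearMap
    have hC : ∀ a, q.π a ∈ C ↔ a ∈ M := by
      refine fun a => ⟨?_, fun h => ⟨a, h, rfl⟩⟩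
      rintro ⟨b, hb, hab⟩
      have hsub : b - a ∈ I := by
        rw [← q.ker, map_sub]; exact sub_eq_zero.2 hab
      have := M.sub_mem hb (hIM (hI.mem_toIdeal.2 hsub))
      simpa using this
    have hl : ∀ w, ∀ f ∈ C, w * f ∈ C := by
      rintro w _ ⟨f, hf, rfl⟩
      obtain ⟨w, rfl⟩ := q.surj w
      exact ⟨w * f, M.mul_mem_left w hf, by simp⟩
    have hr : ∀ w, ∀ f ∈ C, f * w ∈ C := by
      rintro w _ ⟨f, hf, rfl⟩
      obtain ⟨w, rfl⟩ := q.surj w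
      exact ⟨f * w, M.mul_mem_right w hf, by simp⟩
    refine ⟨M, hM, (D.isPoisson_iff _).2 hI, hIM, fun J hJ hJM a ha => ?_⟩
    by_contra haI
    have hJid := q.isId_map ((D.isPoisson_iff _).1 hJ)
    obtain ⟨m, hm, b, hb, hbm⟩ := q.D'.core_mem hK hker h7 hJid fun h => haI <| by
      have : q.π a ∈ (J.restrictScalars ℂ).map q.π.toLinearMap := ⟨a, ha, rfl⟩
      rwa [h, Submodule.mem_bot, q.ker] at this
    obtain ⟨g, hg, hgC⟩ := q.D'.letter_of_core hS.adm hS.dead (C := C)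
      (fun h => hM.ne_top ((Ideal.eq_top_iff_one M).2 ((hC 1).1 (by rwa [map_one]))))
      (fun g _ w hw => by
        obtain ⟨w, rfl⟩ := q.surj w
        rw [← q.gW, ← map_mul, hC] at hw
        rw [← q.gW, hC, hC]
        exact hM.isPrime.mem_or_mem hw) m hm ⟨b, hJM hb, hbm⟩
    have := q.D'.nprod_mem hl hr hg hgC
    rw [← hs, hC] at this
    exact hsM this

end QW
end
end PW

namespace PW
open scoped Classical
noncomputable section
variable {n : ℕ} {E : Type} [AddCommGroup E] {F : Form n E}

/-! ### The homeomorphism through coordinates -/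

/-- The common model of both spectra: the subspaces of coordinates of prime ideals. -/
abbrev Coord (F : Form n E) := {K : Submodule ℂ (Mon n →₀ ℂ) // ∃ T, Good F T K}

/-- The topology on coordinate subspaces generated by the sets of those not containing a given
vector. -/
instance coordTop : TopologicalSpace (Coord F) :=
  TopologicalSpace.generateFrom {U | ∃ f, U = {K : Coord F | f ∉ K.1}}

section quantum
variable {W : Type} [Ring W] [Algebra ℂ W]

/-- A two-sided ideal as a complex subspace. -/
def tsSub (P : TwoSidedIdeal W) : Submodule ℂ W where
  carrier := {a | a ∈ P}
  add_mem' := fun ha hb => P.add_mem ha hb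
  zero_mem' := P.zero_mem
  smul_mem' := fun c a ha => by
    change c • a ∈ P
    rw [Algebra.smul_def]; exact P.mul_mem_left _ _ ha

lemma mem_tsSub {P : TwoSidedIdeal W} {a : W} : a ∈ tsSub P ↔ a ∈ P := Iff.rfl

variable (D : QW F W) (hbr : ∀ a b, D.br a b = a * b - b * a)
include hbr

lemma isId_tsSub (P : TwoSidedIdeal W) : D.IsId (tsSub P) :=
  ⟨fun w f hf => P.mul_mem_left w f hf, fun w f hf => by
    rw [hbr]; exact P.sub_mem (P.mul_mem_left w f hf) (P.mul_mem_right f w hf)⟩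

lemma ts_tsSub (P : TwoSidedIdeal W) : (isId_tsSub D hbr P).ts = P :=
  TwoSidedIdeal.ext fun _ => QW.IsId.mem_ts _

lemma isPrimeTS_iff (P : TwoSidedIdeal W) : IsPrimeTS P ↔ D.IsPr (tsSub P) := by
  constructor
  · rintro ⟨h1, h2⟩
    refine ⟨isId_tsSub D hbr P, fun h => h1 ?_, fun I J hI hJ hIJ => ?_⟩
    · exact (TwoSidedIdeal.one_mem_iff P).1 h
    · refine (h2 hI.ts hJ.ts fun a ha b hb => hIJ a (hI.mem_ts.1 ha) b (hJ.mem_ts.1 hb)).imp ?_ ?_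
      · exact fun h a ha => h (hI.mem_ts.2 ha)
      · exact fun h a ha => h (hJ.mem_ts.2 ha)
  · intro h
    refine ⟨fun h1 => h.one ?_, fun I J hIJ => ?_⟩
    · rw [mem_tsSub, h1]; trivial
    · exact h.prime _ _ (isId_tsSub D hbr I) (isId_tsSub D hbr J) hIJ

/-- The coordinates of a prime ideal. -/
def coordQ (hinj : Function.Injective D.ev) : SpecTS W ≃ Coord F := by
  refine Equiv.ofBijective (fun P => ⟨(tsSub P.1).comap D.ev, ?_⟩) ⟨fun P Q h => ?_, fun K => ?_⟩
  · rw [← D.isPr_iff_good hinj, Submodule.map_comap_eq_of_surjective D.ev_surj,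
      ← isPrimeTS_iff D hbr]
    exact P.2
  · have h1 := congrArg Subtype.val h
    refine Subtype.ext (TwoSidedIdeal.ext fun a => ?_)
    obtain ⟨f, rfl⟩ := D.ev_surj a
    exact SetLike.ext_iff.1 h1 f
  · have h := (D.isPr_iff_good hinj).2 K.2
    have hsub : tsSub h.id.ts = K.1.map D.ev := SetLike.ext fun a => h.id.mem_ts
    refine ⟨⟨h.id.ts, (isPrimeTS_iff D hbr _).2 (by rw [hsub]; exact h)⟩, Subtype.ext ?_⟩
    change (tsSub h.id.ts).comap D.ev = K.1
    rw [hsub, Submodule.comap_map_eq_of_injective hinj]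

lemma mem_coordQ (hinj : Function.Injective D.ev) (P : SpecTS W) (f : Mon n →₀ ℂ) :
    f ∈ (coordQ D hbr hinj P).1 ↔ D.ev f ∈ P.1 := Iff.rfl

lemma coordQ_top (hinj : Function.Injective D.ev) :
    specTop W = coordTop.induced (coordQ D hbr hinj) := by
  rw [coordTop, induced_generateFrom_eq]
  refine le_antisymm (le_generateFrom ?_) (le_generateFrom ?_)
  · rintro _ ⟨_, ⟨f, rfl⟩, rfl⟩
    refine TopologicalSpace.isOpen_generateFrom_of_mem ⟨TwoSidedIdeal.span {D.ev f}, ?_⟩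
    ext P
    simp [mem_coordQ, TwoSidedIdeal.span_le]
  · rintro _ ⟨I, rfl⟩
    have : {P : SpecTS W | ¬ I ≤ P.1}
        = ⋃ f : {f // D.ev f ∈ I}, coordQ D hbr hinj ⁻¹' {K | f.1 ∉ K.1} := by
      ext P
      simp only [Set.mem_ofPred_eq, Set.mem_iUnion, Set.mem_preimage, mem_coordQ]
      constructor
      · intro h
        by_contra! hno
        refine h fun a ha => ?_
        obtain ⟨f, rfl⟩ := D.ev_surj a
        exact hno ⟨f, ha⟩
      · rintro ⟨f, hf⟩ h
        exact hf (h f.2)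
    rw [this]
    exact @isOpen_iUnion _ _ (TopologicalSpace.generateFrom _) _ fun f =>
      TopologicalSpace.isOpen_generateFrom_of_mem ⟨_, ⟨f.1, rfl⟩, rfl⟩

lemma primitive_coordQ (hinj : Function.Injective D.ev) (P : SpecTS W) {T : Ltr n → Prop}
    (hK : Good F T (coordQ D hbr hinj P).1) :
    IsPrimitiveTS P.1 ↔ KeyRigid F T (coordQ D hbr hinj P).1 := by
  have h := D.primitive_iff hbr hK (isId_tsSub D hbr P.1) fun _ => Iff.rfl
  rwa [ts_tsSub D hbr] at h

end quantum

section poisson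
variable {A : Type} [CommRing A] [Algebra ℂ A] (D : QW F A)

lemma isPoissonPrime_iff (P : Ideal A) :
    IsPoissonPrime (fun a b => D.br a b) P ↔ D.IsPr (P.restrictScalars ℂ) := by
  constructor
  · rintro ⟨h0, h1, h2⟩
    refine ⟨(D.isPoisson_iff P).1 h0, fun h => h1 ((Ideal.eq_top_iff_one P).2 h),
      fun I J hI hJ hIJ => ?_⟩
    exact h2 hI.toIdeal hJ.toIdeal ((D.isPoisson_iff _).2 hI) ((D.isPoisson_iff _).2 hJ) hIJ
  · intro h
    refine ⟨(D.isPoisson_iff P).2 h.id, fun h1 => h.one ?_, fun I J hI hJ hIJ => ?_⟩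
    · rw [h1]; trivial
    · exact h.prime _ _ ((D.isPoisson_iff I).1 hI) ((D.isPoisson_iff J).1 hJ) hIJ

/-- The coordinates of a Poisson prime ideal. -/
def coordP (hinj : Function.Injective D.ev) : PSpecP A (fun a b => D.br a b) ≃ Coord F := by
  refine Equiv.ofBijective (fun P => ⟨(P.1.restrictScalars ℂ).comap D.ev, ?_⟩)
    ⟨fun P Q h => ?_, fun K => ?_⟩
  · rw [← D.isPr_iff_good hinj, Submodule.map_comap_eq_of_surjective D.ev_surj,
      ← isPoissonPrime_iff D]
    exact P.2
  · have h1 := congrArg Subtype.val h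
    refine Subtype.ext (SetLike.ext fun a => ?_)
    obtain ⟨f, rfl⟩ := D.ev_surj a
    exact SetLike.ext_iff.1 h1 f
  · have h := (D.isPr_iff_good hinj).2 K.2
    have hsub : h.id.toIdeal.restrictScalars ℂ = K.1.map D.ev := SetLike.ext fun a => Iff.rfl
    refine ⟨⟨h.id.toIdeal, (isPoissonPrime_iff D _).2 (by rw [hsub]; exact h)⟩, Subtype.ext ?_⟩
    change (h.id.toIdeal.restrictScalars ℂ).comap D.ev = K.1
    rw [hsub, Submodule.comap_map_eq_of_injective hinj]

lemma mem_coordP (hinj : Function.Injective D.ev) (P : PSpecP A (fun a b => D.br a b))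
    (f : Mon n →₀ ℂ) : f ∈ (coordP D hinj P).1 ↔ D.ev f ∈ P.1 := Iff.rfl

lemma coordP_top (hinj : Function.Injective D.ev) :
    pspecTop A (fun a b => D.br a b) = coordTop.induced (coordP D hinj) := by
  rw [coordTop, induced_generateFrom_eq]
  refine le_antisymm (le_generateFrom ?_) (le_generateFrom ?_)
  · rintro _ ⟨_, ⟨f, rfl⟩, rfl⟩
    refine TopologicalSpace.isOpen_generateFrom_of_mem ⟨Ideal.span {D.ev f}, ?_⟩
    ext P
    simp [mem_coordP, Ideal.span_le]
  · rintro _ ⟨I, rfl⟩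
    have : {P : PSpecP A (fun a b => D.br a b) | ¬ I ≤ P.1}
        = ⋃ f : {f // D.ev f ∈ I}, coordP D hinj ⁻¹' {K | f.1 ∉ K.1} := by
      ext P
      simp only [Set.mem_ofPred_eq, Set.mem_iUnion, Set.mem_preimage, mem_coordP]
      constructor
      · intro h
        by_contra! hno
        refine h fun a ha => ?_
        obtain ⟨f, rfl⟩ := D.ev_surj a
        exact hno ⟨f, ha⟩
      · rintro ⟨f, hf⟩ h
        exact hf (h f.2)
    rw [this]
    exact @isOpen_iUnion _ _ (TopologicalSpace.generateFrom _) _ fun f =>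
      TopologicalSpace.isOpen_generateFrom_of_mem ⟨_, ⟨f.1, rfl⟩, rfl⟩

lemma primitive_coordP [IsJacobsonRing A]
    (hpt : ∀ M : Ideal A, M.IsMaximal → ∀ a b : A, b ∉ M → ∃ c : ℂ, a - c • b ∈ M)
    (hinj : Function.Injective D.ev) (P : PSpecP A (fun a b => D.br a b)) {T : Ltr n → Prop}
    (hK : Good F T (coordP D hinj P).1) :
    PoissonPrimitive (fun a b => D.br a b) P.1 ↔ KeyRigid F T (coordP D hinj P).1 :=
  D.poissonPrimitive_iff hpt hK ((D.isPoisson_iff P.1).1 P.2.1) fun _ => Iff.rfl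

end poisson

lemma exists_homeo {W A : Type} [Ring W] [Algebra ℂ W] [CommRing A] [Algebra ℂ A]
    [IsJacobsonRing A]
    (hpt : ∀ M : Ideal A, M.IsMaximal → ∀ a b : A, b ∉ M → ∃ c : ℂ, a - c • b ∈ M)
    (D : QW F W) (hbr : ∀ a b, D.br a b = a * b - b * a) (hinj : Function.Injective D.ev)
    (D' : QW F A) (hinj' : Function.Injective D'.ev) :
    ∃ φ : SpecTS W → PSpecP A (fun a b => D'.br a b),
      @IsHomeomorph _ _ (specTop W) (pspecTop A (fun a b => D'.br a b)) φ ∧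
      ∀ P : SpecTS W,
        IsPrimitiveTS P.1 ↔ PoissonPrimitive (fun a b => D'.br a b) (φ P).1 := by
  let _ := specTop W
  let _ := pspecTop A (fun a b => D'.br a b)
  let hQ : SpecTS W ≃ₜ Coord F :=
    (coordQ D hbr hinj).toHomeomorphOfIsInducing ⟨coordQ_top D hbr hinj⟩
  let hP : PSpecP A (fun a b => D'.br a b) ≃ₜ Coord F :=
    (coordP D' hinj').toHomeomorphOfIsInducing ⟨coordP_top D' hinj'⟩
  refine ⟨hQ.trans hP.symm, (hQ.trans hP.symm).isHomeomorph, fun P => ?_⟩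
  have heq : coordP D' hinj' ((hQ.trans hP.symm) P) = coordQ D hbr hinj P :=
    hP.apply_symm_apply _
  obtain ⟨T, hT⟩ := (coordQ D hbr hinj P).2
  rw [primitive_coordQ D hbr hinj P hT,
    primitive_coordP D' hpt hinj' _ (T := T) (by rw [heq]; exact hT), heq]

lemma maximal_ratio {σ : Type} [Finite σ] (M : Ideal (MvPolynomial σ ℂ)) (hM : M.IsMaximal)
    (a b : MvPolynomial σ ℂ) (hb : b ∉ M) : ∃ c : ℂ, a - c • b ∈ M := by
  obtain ⟨p, rfl⟩ := MvPolynomial.isMaximal_iff_eq_vanishingIdeal_singleton.1 hM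
  rw [MvPolynomial.mem_vanishingIdeal_singleton_iff] at hb
  refine ⟨MvPolynomial.aeval p a / MvPolynomial.aeval p b, ?_⟩
  rw [MvPolynomial.mem_vanishingIdeal_singleton_iff, map_sub, map_smul, smul_eq_mul,
    div_mul_cancel₀ _ hb, sub_self]

end
end PW

/-- there is a homeomorphism from `spec R_n^{Q,Λ}` onto `Pspec A₁`
whose restriction to `prim R_n^{Q,Λ}` is a homeomorphism onto `Pprim A₁`. -/
theorem stmt_18 (n r : ℕ)
    -- Q and Λ with G(Q,Λ) torsion free, a basis η of G(Q,Λ), and ℚ-linearly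
    -- independent complex numbers μ; `c̃'(1) = ∑ s_k μ_k` for `c = ∏ η_k ^ s_k`
    (q : Fin n → ℂ) (hq0 : ∀ i, q i ≠ 0) (hq1 : ∀ i, q i ≠ 1)
    (lam : Fin n → Fin n → ℂ) (hlam : ∀ i j, lam i j * lam j i = 1)
    (hlamii : ∀ i, lam i i = 1)
    (η : Fin r → ℂ) (hη0 : ∀ k, η k ≠ 0)
    (hfree : ∀ a : Fin r → ℤ, ∏ k, η k ^ a k = 1 → a = 0)
    (μ : Fin r → ℂ) (hμ : LinearIndependent ℚ μ)
    (sq : Fin n → Fin r → ℤ) (hsq : ∀ i, q i = ∏ k, η k ^ sq i k)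
    (slam : Fin n → Fin n → Fin r → ℤ) (hslam : ∀ i j, lam i j = ∏ k, η k ^ slam i j k)
    (dq : Fin n → ℂ) (hdq : ∀ i, dq i = ∑ k, (sq i k : ℂ) * μ k)
    (dlam : Fin n → Fin n → ℂ) (hdlam : ∀ i j, dlam i j = ∑ k, (slam i j k : ℂ) * μ k)
    -- the Poisson bracket of the multi-parameter Poisson Weyl algebra `A₁`
    (B : PoissonBr (MvPolynomial (Fin n ⊕ Fin n) ℂ))
    (hBsmul : ∀ (c : ℂ) (a b : MvPolynomial (Fin n ⊕ Fin n) ℂ), B.br (c • a) b = c • B.br a b)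
    (hByy : ∀ i j : Fin n, i < j → B.br (yP n j) (yP n i) = dlam j i • (yP n i * yP n j))
    (hByx : ∀ i j : Fin n, i < j → B.br (yP n j) (xP n i) = dlam i j • (xP n i * yP n j))
    (hBxy : ∀ i j : Fin n, i < j →
      B.br (xP n j) (yP n i) = (dq i + dlam i j) • (yP n i * xP n j))
    (hBxx : ∀ i j : Fin n, i < j →
      B.br (xP n j) (xP n i) = (-(dq i + dlam i j)) • (xP n i * xP n j))
    (hBxyi : ∀ i : Fin n, B.br (xP n i) (yP n i) = dq i • zP n ((i : ℕ) + 1))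
    :
    ∃ φ : SpecTS (RingQuot (RRel n q lam)) → PSpecP (MvPolynomial (Fin n ⊕ Fin n) ℂ) B.br,
      @IsHomeomorph _ _ (specTop (RingQuot (RRel n q lam)))
        (pspecTop (MvPolynomial (Fin n ⊕ Fin n) ℂ) B.br) φ ∧
      ∀ P : SpecTS (RingQuot (RRel n q lam)),
        IsPrimitiveTS P.1 ↔ PoissonPrimitive B.br (φ P).1 := by
  -- square roots of the `η k` give `ω` with `ω (a + a) = ∏ η ^ a`
  choose ξ hξ using fun k => IsAlgClosed.exists_pow_nat_eq (η k) (n := 2) (by norm_num)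
  have hξ0 : ∀ k, ξ k ≠ 0 := fun k h => hη0 k (by rw [← hξ, h]; simp)
  let ω : (Fin r → ℤ) → ℂ := fun e => ∏ k, ξ k ^ e k
  have h0 : ω 0 = 1 := by simp [ω]
  have hadd : ∀ a b, ω (a + b) = ω a * ω b := fun a b => by
    simp only [ω, Pi.add_apply]
    rw [← Finset.prod_mul_distrib]
    exact Finset.prod_congr rfl fun k _ => zpow_add₀ (hξ0 k) _ _
  have hω2 : ∀ a, ω (a + a) = ∏ k, η k ^ a k := fun a => by
    simp only [ω, Pi.add_apply]
    refine Finset.prod_congr rfl fun k _ => ?_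
    rw [← hξ, zpow_add₀ (hξ0 k), pow_two, mul_zpow]
  have hinj : ∀ a, ω (a + a) = 1 → a = 0 := fun a h => hfree a (by rw [← hω2, h])
  -- the exponents inherit the relations of the scalars
  have hs : ∀ i (k : ℤ), k • sq i = 0 → k = 0 := by
    intro i k h
    by_contra hk
    rcases smul_eq_zero.1 h with h | h
    · exact hk h
    · exact hq1 i (by rw [hsq, h]; simp)
  have hl0 : ∀ i, slam i i = 0 := fun i => hfree _ (by rw [← hslam, hlamii])
  have hl : ∀ i j, slam i j = - slam j i := fun i j => by
    refine eq_neg_of_add_eq_zero_left (hfree _ ?_)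
    simp only [Pi.add_apply, zpow_add₀ (hη0 _), Finset.prod_mul_distrib]
    rw [← hslam, ← hslam, hlam]
  let F : PW.Form n (Fin r → ℤ) := PW.mkForm sq hs slam hl hl0
  have hFB : ∀ i j, F.B (PW.yd i) (PW.yd j) = slam i j := fun i j =>
    PW.mkForm_yy sq hs slam hl hl0 i j
  have hFs : ∀ i, F.s i = sq i := fun _ => rfl
  let κ : (Fin r → ℤ) →+ ℂ :=
    AddMonoidHom.mk' (fun e => ∑ k, (e k : ℂ) * μ k) fun a b => by
      simp [add_mul, Finset.sum_add_distrib]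
  have hκ : Function.Injective κ := by
    refine (injective_iff_map_eq_zero κ).2 fun e he => ?_
    funext k
    have h := Fintype.linearIndependent_iff.1 hμ (fun k => (e k : ℚ)) (by
      rw [← he]
      refine Finset.sum_congr rfl fun k _ => ?_
      rw [Rat.smul_def]; simp) k
    exact_mod_cast h
  have hκq : ∀ i, κ (F.s i) = dq i := fun i => (hdq i).symm
  have hκl : ∀ i j, κ (F.B (PW.yd i) (PW.yd j)) = dlam i j := fun i j => by
    rw [hFB]; exact (hdlam i j).symm
  have hq : ∀ i, q i = ω (F.s i + F.s i) := fun i => by rw [hω2]; exact hsq i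
  have hlam' : ∀ i j, lam i j
      = ω (F.B (PW.yd i) (PW.yd j) + F.B (PW.yd i) (PW.yd j)) := fun i j => by
    rw [hω2, hFB]; exact hslam i j
  let D' : PW.QW F (MvPolynomial (Fin n ⊕ Fin n) ℂ) := PW.poissonQW κ hκ B hBsmul
    (fun i j h => by rw [hByy i j h, hκl])
    (fun i j h => by rw [hByx i j h, PW.Form.B_yx F h, hκl])
    (fun i j h => by rw [hBxy i j h, PW.Form.B_xy F h, map_add, hκl, hκq])
    (fun i j h => by rw [hBxx i j h, PW.Form.B_xx F h, map_neg, map_add, hκl, hκq])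
    (fun i => by rw [hBxyi i, hκq])
  exact PW.exists_homeo PW.maximal_ratio
    (PW.weylQW F ω h0 hadd hinj q lam hq hlam') (fun _ _ => rfl)
    (PW.weyl_inj F ω h0 hadd hinj q lam hq hlam')
    D' (PW.poisson_inj D' (fun _ => rfl) (fun _ => rfl) (fun _ => rfl))
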